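/- arXiv:1201.2715 — 2 statements merged into one kernel-verified Lean document; each statement's English description precedes it below -/
import Mathlib

section
/- Let σ ∈ (0,1) be a constant. For all sufficiently large n the following holds. Fix a sequence of matchings on a graph with n vertices, a non-negative integer load vector x^{(t₁)} with ‖x^{(t₁)}‖₁ ≤ n·e^{−(log n)^{σ}}, and a round t₂ > t₁ such that the time-interval [t₁,t₂] is (n, n^{−3})-smoothing. Run the discrete process with independent uniformly random orientations from round t₁+1 to t₂, and let Z := Σ_{v∈V} y_v x_v^{(t₂)}, where y is any non-negative vector with ‖y‖₁ = 1. Then for any δ > 0, P( Z ≥ e^{−(1/5)(log n)^{σ}} + 8‖y‖_∞·(log n)^{δ} ) ≤ e^{−(log n)^{δ+σ}/6}, where log denotes the natural logarithm. -/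
namespace LB


/-- A matching on the vertex set `Fin n`, encoded as an involution;
`f u = u` means that `u` is unmatched, and `f u = v ≠ u` means `{u,v}`
is an edge of the matching. -/
structure Matching (n : ℕ) where
  f : Fin n → Fin n
  invol : ∀ u, f (f u) = u

/-- The matching matrix of a matching: entries `1/2` at `(u,u)`, `(u,v)`, `(v,u)`, `(v,v)`
for matched pairs `{u,v}`, entry `1` at `(w,w)` for unmatched `w`, and `0` otherwise. -/
noncomputable def Matching.matrix {n : ℕ} (m : Matching n) : Matrix (Fin n) (Fin n) ℝ :=
  Matrix.of fun u v =>
    if m.f u = u then (if v = u then 1 else 0)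
    else if v = u ∨ v = m.f u then (1 : ℝ) / 2 else 0

/-- `M^{[t₁,t₂]} = M^{(t₁)} * ⋯ * M^{(t₂)}` (the identity matrix if `t₁ > t₂`). -/
noncomputable def prodMatrix {n : ℕ} (M : ℕ → Matching n) (t₁ t₂ : ℕ) : Matrix (Fin n) (Fin n) ℝ :=
  ((List.range' t₁ (t₂ + 1 - t₁)).map fun s => (M s).matrix).prod

/-- Sum of `g u v` over the matched pairs `[u:v]` (i.e. `{u,v}` in the matching with `u < v`). -/
noncomputable def pairSum {n : ℕ} (m : Matching n) (g : Fin n → Fin n → ℝ) : ℝ :=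
  ∑ u : Fin n, if u < m.f u then g u (m.f u) else 0

/-- The discrepancy `max_{u,v} |x_u - x_v|` of a load vector. -/
noncomputable def disc {n : ℕ} (x : Fin n → ℝ) : ℝ :=
  ⨆ u : Fin n, ⨆ v : Fin n, |x u - x v|

/-- Discrepancy of an integer load vector. -/
noncomputable def discZ {n : ℕ} (x : Fin n → ℤ) : ℝ := disc fun u => (x u : ℝ)

/-- The time interval `[t₁,t₂]` (with its matchings) is `(K,ε)`-smoothing. -/
def IsSmoothing {n : ℕ} (M : ℕ → Matching n) (t₁ t₂ : ℕ) (K ε : ℝ) : Prop :=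
  ∀ ξ : Fin n → ℝ, disc ξ ≤ K → disc (Matrix.vecMul ξ (prodMatrix M (t₁ + 1) t₂)) ≤ ε

/-- `τ_cont(K,ε)`: the minimum `t` such that `[0,t]` is `(K,ε)`-smoothing. -/
noncomputable def tauCont {n : ℕ} (M : ℕ → Matching n) (K ε : ℝ) : ℕ :=
  sInf {t : ℕ | IsSmoothing M 0 t K ε}

/-- One round of the discrete process: two matched nodes split their total load,
the node indicated by the orientation bit (stored at the pair `(min,max)`) receiving
the excess token; `φ u v = true` for `u < v` means the excess token goes to `u`. -/
def step {n : ℕ} (m : Matching n) (φ : Fin n → Fin n → Bool) (x : Fin n → ℤ) :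
    Fin n → ℤ := fun u =>
  if m.f u = u then x u
  else if u < m.f u then
    (if φ u (m.f u) then Int.ediv (x u + x (m.f u) + 1) 2
     else Int.ediv (x u + x (m.f u)) 2)
  else
    (if φ (m.f u) u then Int.ediv (x u + x (m.f u)) 2
     else Int.ediv (x u + x (m.f u) + 1) 2)

/-- The discrete process started at round `t₁` from load vector `x`:
`loadsFrom M t₁ Φ x r` is the load vector `r` rounds later; the `(r+1)`-st
step uses the matching `M (t₁+r+1)` and the orientations `Φ (r+1)`. -/
def loadsFrom {n : ℕ} (M : ℕ → Matching n) (t₁ : ℕ) (Φ : ℕ → Fin n → Fin n → Bool)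
    (x : Fin n → ℤ) : ℕ → Fin n → ℤ
  | 0 => x
  | r + 1 => step (M (t₁ + r + 1)) (Φ (r + 1)) (loadsFrom M t₁ Φ x r)

/-- The discrete process started at round `0`; round `t ≥ 1` uses matching `M t`. -/
def loads {n : ℕ} (M : ℕ → Matching n) (Φ : ℕ → Fin n → Fin n → Bool)
    (x : Fin n → ℤ) : ℕ → Fin n → ℤ := loadsFrom M 0 Φ x

/-- Extend a finite family of random choices (one for each of the rounds `1,…,T`)
to all rounds: round `s` reads index `s-1`. -/
def lift {A : Type*} (a₀ : A) {T : ℕ} (ω : Fin T → A) : ℕ → A := fun s =>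
  if h : s - 1 < T then ω ⟨s - 1, h⟩ else a₀

/-- Default (irrelevant) orientation. -/
def orientDefault (n : ℕ) : Fin n → Fin n → Bool := fun _ _ => true

/-- Probability of an event under the uniform distribution on a finite sample space;
this makes all the per-round random choices independent and uniform. -/
noncomputable def pr {Ω : Type*} [Fintype Ω] (A : Ω → Prop) : ℝ :=
  haveI := Classical.decPred A
  ((Finset.univ.filter A).card : ℝ) / (Fintype.card Ω : ℝ)

/-- Expectation under the uniform distribution on a finite sample space. -/
noncomputable def ex {Ω : Type*} [Fintype Ω] (Z : Ω → ℝ) : ℝ :=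
  (∑ ω : Ω, Z ω) / (Fintype.card Ω : ℝ)

/-- `λ(M) = max{|λ₂(M)|, |λ_n(M)|}` for a symmetric doubly stochastic matrix `M`,
characterized as the operator norm of `M` on the subspace orthogonal to `𝟙`. -/
noncomputable def lamMax {n : ℕ} (M : Matrix (Fin n) (Fin n) ℝ) : ℝ :=
  ⨆ x : {x : Fin n → ℝ // (∑ u, x u) = 0 ∧ (∑ u, (x u) ^ 2) = 1},
    Real.sqrt (∑ u, (M.mulVec x.1 u) ^ 2)

/-- The round matrix `M = M^{(1)} ⋯ M^{(d)}` of the balancing circuit. -/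
noncomputable def roundMatrix {n d : ℕ} (Ms : Fin d → Matching n) : Matrix (Fin n) (Fin n) ℝ :=
  (List.ofFn fun i => (Ms i).matrix).prod

/-- The periodic sequence of matchings of the balancing circuit:
round `t` uses `M^{(((t-1) mod d)+1)}`. -/
def circuit {n d : ℕ} (hd : 0 < d) (Ms : Fin d → Matching n) : ℕ → Matching n :=
  fun t => Ms ⟨(t - 1) % d, Nat.mod_lt _ hd⟩


/-!
For a weight vector `f > 0` put `f ^ x = ∏ v, f v ^ x v`. One round satisfies
`E (f ^ x') ≤ (M f) ^ x`: a matched pair carrying weights `p, q` and `k` tokens contributes the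
average of `p ^ ⌈k/2⌉ * q ^ ⌊k/2⌋` and `p ^ ⌊k/2⌋ * q ^ ⌈k/2⌉`, which by AM-GM is at most
`((p + q) / 2) ^ k`. Iterating, `E (f ^ x^(t₂)) ≤ (P f) ^ x^(t₁)` with `P = M^{[t₁+1,t₂]}`, which is
what independent random walks of the tokens would satisfy with equality.

With `f v = exp (s * y v)` the left-hand side is the moment generating function of `Z`. Smoothing
makes every entry of `P` at most `C / n`, so convexity of `exp` gives
`P f ≤ 1 + (C / n) * (exp (s * Y) - 1) / Y` for `Y = ‖y‖_∞`, and Chernoff's bound with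
`s = (4 / 5) * (log n) ^ σ / Y` yields the tail estimate.
-/

open Finset Matrix

section UniformProbability

variable {Ω : Type*} [Fintype Ω]

theorem ex_mono {X Y : Ω → ℝ} (h : ∀ ω, X ω ≤ Y ω) : ex X ≤ ex Y :=
  div_le_div_of_nonneg_right (sum_le_sum fun ω _ => h ω) (Nat.cast_nonneg _)

theorem ex_const [Nonempty Ω] (c : ℝ) : ex (fun _ : Ω => c) = c := by
  simp [ex]

theorem ex_const_mul (c : ℝ) (X : Ω → ℝ) : ex (fun ω => c * X ω) = c * ex X := by
  rw [ex, ex, ← mul_sum, mul_div_assoc]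

theorem ex_bool (g : Bool → ℝ) : ex g = (g true + g false) / 2 := by
  simp [ex]

theorem ex_prod {ι : Type*} [Fintype ι] [DecidableEq ι] {α : ι → Type*} [∀ i, Fintype (α i)]
    (g : ∀ i, α i → ℝ) : ex (fun ω : ∀ i, α i => ∏ i, g i (ω i)) = ∏ i, ex (g i) := by
  simp only [ex, prod_div_distrib, prod_univ_sum, Fintype.piFinset_univ, Fintype.card_pi,
    Nat.cast_prod]

theorem ex_comp_eval {ι α : Type*} [Fintype ι] [DecidableEq ι] [Fintype α] [Nonempty α]
    (i : ι) (g : α → ℝ) : ex (fun ω : ι → α => g (ω i)) = ex g := by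
  have h := ex_prod fun (j : ι) (a : α) => if j = i then g a else 1
  have hex (j : ι) : ex (fun a : α => if j = i then g a else 1) = if j = i then ex g else 1 := by
    split_ifs
    · rfl
    · exact ex_const 1
  simpa only [hex, prod_ite_eq', mem_univ, if_true] using h

theorem ex_snoc {α : Type*} [Fintype α] {T : ℕ} (X : (Fin (T + 1) → α) → ℝ) :
    ex X = ex fun ω : Fin T → α => ex fun a => X (Fin.snoc (α := fun _ => α) ω a) := by
  have hsum : ∑ ω, X ω = ∑ ω : Fin T → α, ∑ a, X (Fin.snoc (α := fun _ => α) ω a) := by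
    rw [← Equiv.sum_comp (Fin.snocEquiv fun _ => α), Fintype.sum_prod_type_right]
    rfl
  simp only [ex, hsum, ← sum_div, div_div, Fintype.card_fun, Fintype.card_fin, pow_succ',
    Nat.cast_mul]

theorem pr_eq_ex_ite (A : Ω → Prop) [DecidablePred A] :
    pr A = ex fun ω => if A ω then 1 else 0 := by
  simp only [pr, ex, sum_boole]
  congr!

theorem pr_le_exp_mul_ex_exp (Z : Ω → ℝ) {s : ℝ} (hs : 0 ≤ s) (c : ℝ) :
    pr (fun ω => c ≤ Z ω) ≤ Real.exp (-(s * c)) * ex fun ω => Real.exp (s * Z ω) := by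
  classical
  rw [pr_eq_ex_ite, ← ex_const_mul]
  refine ex_mono fun ω => ?_
  split_ifs with hω
  · rw [← Real.exp_add]
    exact Real.one_le_exp (by linarith [mul_le_mul_of_nonneg_left hω hs])
  · positivity

end UniformProbability

theorem zpow_ceil_mul_zpow_floor_add_le {p q : ℝ} (hp : 0 < p) (hq : 0 < q) {k : ℤ} (hk : 0 ≤ k) :
    p ^ ((k + 1) / 2) * q ^ (k / 2) + p ^ (k / 2) * q ^ ((k + 1) / 2) ≤
      2 * ((p + q) / 2) ^ k := by
  have amgm {j : ℤ} (hj : 0 ≤ j) : (p * q) ^ j ≤ ((p + q) / 2) ^ (2 * j) := by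
    rw [_root_.zpow_mul]
    refine zpow_le_zpow_left₀ hj (by positivity) ?_
    rw [zpow_ofNat]
    linarith [sq_nonneg (p - q)]
  rcases Int.even_or_odd' k with ⟨j, rfl | rfl⟩
  · rw [show (2 * j + 1) / 2 = j by omega, show 2 * j / 2 = j by omega, ← mul_zpow]
    linarith [amgm (j := j) (by omega)]
  · rw [show (2 * j + 1 + 1) / 2 = j + 1 by omega, show (2 * j + 1) / 2 = j by omega]
    calc p ^ (j + 1) * q ^ j + p ^ j * q ^ (j + 1) = (p * q) ^ j * (p + q) := by
          rw [zpow_add_one₀ hp.ne', zpow_add_one₀ hq.ne', mul_zpow]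
          ring
      _ ≤ ((p + q) / 2) ^ (2 * j) * (p + q) := by
          gcongr
          exact amgm (by omega)
      _ = 2 * ((p + q) / 2) ^ (2 * j + 1) := by
          rw [zpow_add_one₀ (by positivity)]
          ring

namespace Matching

variable {n : ℕ} (m : Matching n)

theorem matrix_mulVec (f : Fin n → ℝ) (u : Fin n) :
    (m.matrix *ᵥ f) u = (f u + f (m.f u)) / 2 := by
  by_cases h : m.f u = u
  · simp [mulVec, dotProduct, matrix, h]
  · have hsplit (v : Fin n) : (if v = u ∨ v = m.f u then (1 : ℝ) / 2 else 0) * f v =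
        (if v = u then f v / 2 else 0) + (if v = m.f u then f v / 2 else 0) := by
      grind
    simp only [mulVec, dotProduct, matrix, of_apply, h, if_false, hsplit, sum_add_distrib,
      sum_ite_eq', mem_univ, if_true, add_div]

theorem matrix_mulVec_pos {f : Fin n → ℝ} (hf : ∀ v, 0 < f v) (u : Fin n) :
    0 < (m.matrix *ᵥ f) u := by
  rw [matrix_mulVec]
  linarith [hf u, hf (m.f u)]

theorem matrix_mem_rowStochastic : m.matrix ∈ rowStochastic ℝ (Fin n) := by
  refine mem_rowStochastic.2 ⟨fun u v => ?_, funext fun u => ?_⟩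
  · simp only [matrix, of_apply]
    split_ifs <;> norm_num
  · simp [matrix_mulVec]

/-- The contribution to `∏ v, g v` of the matched pair whose smaller endpoint is `u`, or of the
unmatched node `u`; it is `1` when `u` is the larger endpoint of its pair. For products over the
loads after a round, each factor depends on a single orientation. -/
def pairProd {R : Type*} [CommMonoid R] (g : Fin n → R) (u : Fin n) : R :=
  if u < m.f u then g u * g (m.f u) else if m.f u = u then g u else 1

theorem prod_pairProd {R : Type*} [CommMonoid R] (g : Fin n → R) :
    ∏ u, m.pairProd g u = ∏ u, g u := by
  have hswap : ∏ u, (if u < m.f u then g (m.f u) else 1) = ∏ u, if m.f u < u then g u else 1 := by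
    refine prod_bij' (fun u _ => m.f u) (fun u _ => m.f u) ?_ ?_ ?_ ?_ ?_ <;> simp [m.invol]
  calc ∏ u, m.pairProd g u
      = ∏ u, (if u < m.f u then g u else if m.f u = u then g u else 1) *
          if u < m.f u then g (m.f u) else 1 := by
        refine prod_congr rfl fun u _ => ?_
        simp only [pairProd]
        split_ifs <;> simp
    _ = ∏ u, (if u < m.f u then g u else if m.f u = u then g u else 1) *
          if m.f u < u then g u else 1 := by
        rw [prod_mul_distrib, prod_mul_distrib, hswap]
    _ = ∏ u, g u := by
        refine prod_congr rfl fun u _ => ?_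
        rcases lt_trichotomy u (m.f u) with h | h | h
        · simp [h, h.not_gt]
        · simp [← h]
        · simp [h, h.ne, h.not_gt]

end Matching

section Step

variable {n : ℕ} (m : Matching n) (φ : Fin n → Fin n → Bool) (x : Fin n → ℤ)

theorem step_of_apply_eq {u : Fin n} (h : m.f u = u) : step m φ x u = x u :=
  if_pos h

theorem step_of_lt {u : Fin n} (h : u < m.f u) :
    step m φ x u =
      if φ u (m.f u) then (x u + x (m.f u) + 1) / 2 else (x u + x (m.f u)) / 2 := by
  simp only [step, h.ne', h, if_true, if_false]
  rfl

theorem step_partner_of_lt {u : Fin n} (h : u < m.f u) :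
    step m φ x (m.f u) =
      if φ u (m.f u) then (x u + x (m.f u)) / 2 else (x u + x (m.f u) + 1) / 2 := by
  simp only [step, m.invol, h.ne, h.not_gt, if_false, add_comm (x (m.f u))]
  rfl

variable {x} in
theorem step_nonneg (hx : ∀ u, 0 ≤ x u) (u : Fin n) : 0 ≤ step m φ x u := by
  have hu := hx u
  have hfu := hx (m.f u)
  have hediv (a : ℤ) : Int.ediv a 2 = a / 2 := rfl
  simp only [step, hediv]
  split_ifs <;> omega

theorem pairProd_zpow_step (f : Fin n → ℝ) (u : Fin n) :
    m.pairProd (fun v => f v ^ step m φ x v) u =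
      m.pairProd (fun v => f v ^ step m (fun _ _ => φ u (m.f u)) x v) u := by
  simp only [Matching.pairProd]
  split_ifs with hlt heq
  · simp only [step_of_lt _ _ _ hlt, step_partner_of_lt _ _ _ hlt]
  · simp only [step_of_apply_eq _ _ _ heq]
  · rfl

variable {x} in
theorem ex_pairProd_zpow_step_le (hx : ∀ u, 0 ≤ x u) {f : Fin n → ℝ} (hf : ∀ v, 0 < f v)
    (u : Fin n) :
    ex (fun b : Bool => m.pairProd (fun v => f v ^ step m (fun _ _ => b) x v) u) ≤
      m.pairProd (fun v => (m.matrix *ᵥ f) v ^ x v) u := by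
  simp only [ex_bool, Matching.pairProd]
  split_ifs with hlt heq
  · simp only [step_of_lt _ _ _ hlt, step_partner_of_lt _ _ _ hlt, if_true, Bool.false_eq_true,
      if_false, m.matrix_mulVec, m.invol, add_comm (f (m.f u))]
    rw [← zpow_add₀ (by linarith [hf u, hf (m.f u)])]
    linarith [zpow_ceil_mul_zpow_floor_add_le (hf u) (hf (m.f u)) (add_nonneg (hx u) (hx (m.f u)))]
  · simp only [step_of_apply_eq _ _ _ heq, m.matrix_mulVec, heq, add_self_div_two, le_refl]
  · norm_num

variable {x} in
theorem ex_prod_zpow_step_le (hx : ∀ u, 0 ≤ x u) {f : Fin n → ℝ} (hf : ∀ v, 0 < f v) :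
    ex (fun φ => ∏ v, f v ^ step m φ x v) ≤ ∏ v, (m.matrix *ᵥ f) v ^ x v := by
  let g (u : Fin n) (b : Bool) : ℝ := m.pairProd (fun v => f v ^ step m (fun _ _ => b) x v) u
  have hg (u : Fin n) (b : Bool) : 0 ≤ g u b := by
    have hpow (v : Fin n) (k : ℤ) : 0 ≤ f v ^ k := (zpow_pos (hf v) k).le
    simp only [g, Matching.pairProd]
    split_ifs
    exacts [mul_nonneg (hpow _ _) (hpow _ _), hpow _ _, zero_le_one]
  calc ex (fun φ => ∏ v, f v ^ step m φ x v)
      = ex fun φ : Fin n → Fin n → Bool => ∏ u, g u (φ u (m.f u)) := by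
        simp only [g, ← pairProd_zpow_step, m.prod_pairProd]
    _ = ∏ u, ex (g u) := by
        rw [ex_prod fun u (r : Fin n → Bool) => g u (r (m.f u))]
        simp only [ex_comp_eval]
    _ ≤ ∏ u, m.pairProd (fun v => (m.matrix *ᵥ f) v ^ x v) u :=
        prod_le_prod (fun u _ => div_nonneg (sum_nonneg fun b _ => hg u b) (Nat.cast_nonneg _))
          fun u _ => ex_pairProd_zpow_step_le m hx hf u
    _ = ∏ v, (m.matrix *ᵥ f) v ^ x v := m.prod_pairProd _

end Step

section Rounds

variable {n : ℕ} (M : ℕ → Matching n) (t₁ : ℕ)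

theorem prodMatrix_succ_self : prodMatrix M (t₁ + 1) t₁ = 1 := by
  simp [prodMatrix]

theorem prodMatrix_succ (T : ℕ) :
    prodMatrix M (t₁ + 1) (t₁ + T + 1) =
      prodMatrix M (t₁ + 1) (t₁ + T) * (M (t₁ + T + 1)).matrix := by
  simp only [prodMatrix, show t₁ + T + 1 + 1 - (t₁ + 1) = T + 1 by omega,
    show t₁ + T + 1 - (t₁ + 1) = T by omega, List.range'_1_concat, List.map_append,
    List.prod_append, List.map_cons, List.map_nil, List.prod_singleton, add_right_comm]

theorem prodMatrix_mem_rowStochastic (t₂ : ℕ) :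
    prodMatrix M t₁ t₂ ∈ rowStochastic ℝ (Fin n) :=
  Submonoid.list_prod_mem _ <| by
    simpa only [List.forall_mem_map] using fun s _ => (M s).matrix_mem_rowStochastic

theorem loadsFrom_congr {Φ Ψ : ℕ → Fin n → Fin n → Bool} (x : Fin n → ℤ) {r : ℕ}
    (h : ∀ s < r, Φ (s + 1) = Ψ (s + 1)) : loadsFrom M t₁ Φ x r = loadsFrom M t₁ Ψ x r := by
  induction r with
  | zero => rfl
  | succ r ih => simp only [loadsFrom, ih fun s hs => h s (hs.trans r.lt_succ_self),
      h r r.lt_succ_self]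

theorem loadsFrom_nonneg (Φ : ℕ → Fin n → Fin n → Bool) {x : Fin n → ℤ} (hx : ∀ u, 0 ≤ x u)
    (r : ℕ) : ∀ u, 0 ≤ loadsFrom M t₁ Φ x r u := by
  induction r with
  | zero => exact hx
  | succ r ih => exact step_nonneg _ _ ih

theorem loadsFrom_lift_snoc (x : Fin n → ℤ) {T : ℕ} (φ₀ φ : Fin n → Fin n → Bool)
    (ω : Fin T → Fin n → Fin n → Bool) :
    loadsFrom M t₁ (lift φ₀ (Fin.snoc (α := fun _ => Fin n → Fin n → Bool) ω φ)) x (T + 1) =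
      step (M (t₁ + T + 1)) φ (loadsFrom M t₁ (lift φ₀ ω) x T) := by
  simp only [loadsFrom]
  congr 1
  · simp [lift, Fin.snoc]
  · refine loadsFrom_congr M t₁ x fun s hs => ?_
    simp [lift, Fin.snoc, hs, hs.trans T.lt_succ_self]

theorem ex_prod_zpow_loadsFrom_le {x : Fin n → ℤ} (hx : ∀ u, 0 ≤ x u)
    (φ₀ : Fin n → Fin n → Bool) (T : ℕ) {f : Fin n → ℝ} (hf : ∀ v, 0 < f v) :
    ex (fun ω : Fin T → Fin n → Fin n → Bool =>
        ∏ v, f v ^ loadsFrom M t₁ (lift φ₀ ω) x T v) ≤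
      ∏ v, (prodMatrix M (t₁ + 1) (t₁ + T) *ᵥ f) v ^ x v := by
  induction T generalizing f with
  | zero => simp only [loadsFrom, ex_const, add_zero, prodMatrix_succ_self, one_mulVec, le_refl]
  | succ T ih =>
    calc ex (fun ω : Fin (T + 1) → Fin n → Fin n → Bool =>
            ∏ v, f v ^ loadsFrom M t₁ (lift φ₀ ω) x (T + 1) v)
        = ex fun ω : Fin T → Fin n → Fin n → Bool => ex fun φ =>
            ∏ v, f v ^ step (M (t₁ + T + 1)) φ (loadsFrom M t₁ (lift φ₀ ω) x T) v := by
          simp only [ex_snoc, loadsFrom_lift_snoc]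
      _ ≤ ex fun ω : Fin T → Fin n → Fin n → Bool =>
            ∏ v, ((M (t₁ + T + 1)).matrix *ᵥ f) v ^ loadsFrom M t₁ (lift φ₀ ω) x T v :=
          ex_mono fun ω => ex_prod_zpow_step_le _ (loadsFrom_nonneg M t₁ _ hx T) hf
      _ ≤ ∏ v, (prodMatrix M (t₁ + 1) (t₁ + T) *ᵥ ((M (t₁ + T + 1)).matrix *ᵥ f)) v ^ x v :=
          ih (Matching.matrix_mulVec_pos _ hf)
      _ = ∏ v, (prodMatrix M (t₁ + 1) (t₁ + (T + 1)) *ᵥ f) v ^ x v := by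
          rw [← add_assoc, prodMatrix_succ, mulVec_mulVec]

end Rounds

section Smoothing

variable {n : ℕ}

theorem abs_sub_le_disc (x : Fin n → ℝ) (u v : Fin n) : |x u - x v| ≤ disc x :=
  (le_ciSup (f := fun v => |x u - x v|) (Set.finite_range _).bddAbove v).trans
    (le_ciSup (f := fun u => ⨆ v, |x u - x v|) (Set.finite_range _).bddAbove u)

theorem disc_single_le (v : Fin n) {K : ℝ} (hK : 0 ≤ K) : disc (Pi.single v K) ≤ K := by
  have : Nonempty (Fin n) := ⟨v⟩
  refine ciSup_le fun a => ciSup_le fun b => ?_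
  by_cases ha : a = v <;> by_cases hb : b = v <;> simp [ha, hb, abs_of_nonneg hK, hK]

theorem apply_le_average_add_disc (x : Fin n → ℝ) (u : Fin n) :
    x u ≤ (∑ v, x v) / n + disc x := by
  have hn : (0 : ℝ) < n := Nat.cast_pos.2 u.pos
  have hsum : ∑ _v : Fin n, x u ≤ ∑ v, (x v + disc x) :=
    sum_le_sum fun v _ => by linarith [le_abs_self (x u - x v), abs_sub_le_disc x u v]
  rw [sum_add_distrib, sum_const, sum_const, card_univ, Fintype.card_fin, nsmul_eq_mul,
    nsmul_eq_mul] at hsum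
  rw [div_add' _ _ _ hn.ne', le_div_iff₀ hn]
  linarith

namespace IsSmoothing

variable {M : ℕ → Matching n} {t₁ t₂ : ℕ} {K ε : ℝ}

theorem mono (h : IsSmoothing M t₁ t₂ K ε) {ε' : ℝ} (hε : ε ≤ ε') : IsSmoothing M t₁ t₂ K ε' :=
  fun ξ hξ => (h ξ hξ).trans hε

theorem prodMatrix_apply_le (h : IsSmoothing M t₁ t₂ K ε) (hK : 0 < K) (v w : Fin n) :
    prodMatrix M (t₁ + 1) t₂ v w ≤ 1 / n + ε / K := by
  set P := prodMatrix M (t₁ + 1) t₂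
  have hrow : Pi.single v K ᵥ* P = fun w => K * P v w := by
    rw [single_vecMul]
    rfl
  have hdisc := h _ (disc_single_le v hK.le)
  have havg := apply_le_average_add_disc (fun w => K * P v w) w
  rw [← mul_sum, sum_row_of_mem_rowStochastic (prodMatrix_mem_rowStochastic M _ _)] at havg
  rw [hrow] at hdisc
  rw [← mul_le_mul_iff_right₀ hK]
  calc K * P v w ≤ K * 1 / n + ε := by linarith
    _ = K * (1 / n + ε / K) := by field_simp

end IsSmoothing

end Smoothing

theorem exp_mul_sub_one_le {y Y : ℝ} (hy : 0 ≤ y) (hY : 0 < Y) (hyY : y ≤ Y) (s : ℝ) :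
    Real.exp (s * y) - 1 ≤ y * ((Real.exp (s * Y) - 1) / Y) := by
  have hconv := convexOn_exp.2 (Set.mem_univ (s * Y)) (Set.mem_univ 0) (div_nonneg hy hY.le)
    (sub_nonneg.2 ((div_le_one hY).2 hyY)) (add_sub_cancel _ _)
  have hpoint : y / Y * (s * Y) = s * y := by field_simp
  simp only [smul_eq_mul, mul_zero, add_zero, Real.exp_zero, mul_one, hpoint] at hconv
  calc Real.exp (s * y) - 1 ≤ y / Y * (Real.exp (s * Y) - 1) := by linarith
    _ = y * ((Real.exp (s * Y) - 1) / Y) := by ring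

theorem mulVec_exp_le {ι : Type*} [Fintype ι] [DecidableEq ι] {P : Matrix ι ι ℝ}
    (hP : P ∈ rowStochastic ℝ ι) {κ : ℝ} {v : ι} (hκ : ∀ w, P v w ≤ κ) {y : ι → ℝ}
    (hy : ∀ w, 0 ≤ y w) (hy1 : ∑ w, y w = 1) {Y : ℝ} (hY : 0 < Y) (hyY : ∀ w, y w ≤ Y)
    {s : ℝ} (hs : 0 ≤ s) :
    (P *ᵥ fun w => Real.exp (s * y w)) v ≤ Real.exp (κ * ((Real.exp (s * Y) - 1) / Y)) := by
  have hrow := sum_row_of_mem_rowStochastic hP v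
  have hκ0 : 0 ≤ κ := (nonneg_of_mem_rowStochastic hP).trans (hκ v)
  calc (P *ᵥ fun w => Real.exp (s * y w)) v
      = ∑ w, P v w * (Real.exp (s * y w) - 1) + 1 := by
        simp only [mulVec, dotProduct, mul_sub, mul_one, sum_sub_distrib, hrow, sub_add_cancel]
    _ ≤ ∑ w, κ * (y w * ((Real.exp (s * Y) - 1) / Y)) + 1 := by
        gcongr with w
        · exact sub_nonneg.2 (Real.one_le_exp (mul_nonneg hs (hy w)))
        · exact hκ w
        · exact exp_mul_sub_one_le (hy w) hY (hyY w) s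
    _ = κ * ((Real.exp (s * Y) - 1) / Y) + 1 := by
        rw [← mul_sum, ← sum_mul, hy1, one_mul]
    _ ≤ Real.exp (κ * ((Real.exp (s * Y) - 1) / Y)) := Real.add_one_le_exp _

theorem iSup_pos_of_sum_pos {ι : Type*} [Fintype ι] {y : ι → ℝ} (hy : 0 < ∑ v, y v) :
    0 < ⨆ v, y v := by
  obtain ⟨v, -, hv⟩ := exists_lt_of_sum_lt (by simpa using hy : ∑ _v : ι, (0 : ℝ) < ∑ v, y v)
  exact hv.trans_le (le_ciSup (Set.finite_range y).bddAbove v)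

-- The exponent of Chernoff's bound at `s = 4 * a / (5 * Y)`, where `S` is the total load;
-- `5 * C ≤ 4 * a` lets `s * exp (-a / 5)` absorb the bound on the logarithmic moment.
theorem chernoff_exponent_le {N S C a Y : ℝ} (hN : 0 < N) (hC : 0 ≤ C) (hCa : 5 * C ≤ 4 * a)
    (hS : S ≤ N * Real.exp (-a)) (hY : 0 < Y) (c : ℝ) :
    S * (C / N * ((Real.exp (4 / 5 * a / Y * Y) - 1) / Y)) -
        4 / 5 * a / Y * (Real.exp (-(1 / 5) * a) + Y * c) ≤ -(4 / 5 * a * c) := by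
  have ha : 0 ≤ a := by linarith
  have hexp : Real.exp (-a) * (Real.exp (4 / 5 * a) - 1) ≤ Real.exp (-(1 / 5) * a) := by
    rw [mul_sub, ← Real.exp_add, show -a + 4 / 5 * a = -(1 / 5) * a by ring]
    linarith [Real.exp_pos (-a)]
  have hmean : S * (C / N * ((Real.exp (4 / 5 * a) - 1) / Y)) ≤
      4 / 5 * a * Real.exp (-(1 / 5) * a) / Y := by
    calc S * (C / N * ((Real.exp (4 / 5 * a) - 1) / Y))
        ≤ N * Real.exp (-a) * (C / N * ((Real.exp (4 / 5 * a) - 1) / Y)) := by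
          have : 0 ≤ Real.exp (4 / 5 * a) - 1 := sub_nonneg.2 (Real.one_le_exp (by positivity))
          gcongr
      _ = C * (Real.exp (-a) * (Real.exp (4 / 5 * a) - 1)) / Y := by field_simp
      _ ≤ C * Real.exp (-(1 / 5) * a) / Y := by gcongr
      _ ≤ 4 / 5 * a * Real.exp (-(1 / 5) * a) / Y := by
          gcongr
          linarith
  calc _ ≤ 4 / 5 * a * Real.exp (-(1 / 5) * a) / Y -
        4 / 5 * a / Y * (Real.exp (-(1 / 5) * a) + Y * c) := by
        rw [div_mul_cancel₀ _ hY.ne']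
        gcongr
    _ = -(4 / 5 * a * c) := by
        field_simp
        ring

section Tail

variable {n : ℕ} (M : ℕ → Matching n) (t₁ T : ℕ) (φ₀ : Fin n → Fin n → Bool)
  {x : Fin n → ℤ} {y : Fin n → ℝ}

theorem ex_exp_weighted_loadsFrom_le (hx : ∀ u, 0 ≤ x u) {κ : ℝ}
    (hκ : ∀ v w, prodMatrix M (t₁ + 1) (t₁ + T) v w ≤ κ) (hy : ∀ v, 0 ≤ y v)
    (hy1 : ∑ v, y v = 1) {Y : ℝ} (hY : 0 < Y) (hyY : ∀ v, y v ≤ Y) {s : ℝ} (hs : 0 ≤ s) :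
    ex (fun ω : Fin T → Fin n → Fin n → Bool =>
        Real.exp (s * ∑ v, y v * (loadsFrom M t₁ (lift φ₀ ω) x T v : ℝ))) ≤
      Real.exp ((∑ u, (x u : ℝ)) * (κ * ((Real.exp (s * Y) - 1) / Y))) := by
  have exp_sum (c : Fin n → ℝ) (k : Fin n → ℤ) :
      Real.exp (∑ v, c v * k v) = ∏ v, Real.exp (c v) ^ k v := by
    simp only [Real.exp_sum, Real.exp_mul, Real.rpow_intCast]
  have hP := prodMatrix_mem_rowStochastic M (t₁ + 1) (t₁ + T)
  have hPf := nonneg_mulVec_of_mem_rowStochastic hP fun v => (Real.exp_pos (s * y v)).le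
  simp only [mul_sum, sum_mul, ← mul_assoc s]
  simp only [exp_sum, mul_comm (_ : ℝ) (κ * _)]
  exact (ex_prod_zpow_loadsFrom_le M t₁ hx φ₀ T fun v => Real.exp_pos _).trans <|
    prod_le_prod (fun v _ => zpow_nonneg (hPf v) _) fun v _ =>
      zpow_le_zpow_left₀ (hx v) (hPf v) (mulVec_exp_le hP (hκ v) hy hy1 hY hyY hs)

theorem pr_exp_add_iSup_mul_le_weighted_loadsFrom_le (hx : ∀ u, 0 ≤ x u) {C : ℝ}
    (hP : ∀ v w, prodMatrix M (t₁ + 1) (t₁ + T) v w ≤ C / n) {a : ℝ} (hCa : 5 * C ≤ 4 * a)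
    (hsum : ∑ u, (x u : ℝ) ≤ n * Real.exp (-a)) (hy : ∀ v, 0 ≤ y v) (hy1 : ∑ v, y v = 1) (c : ℝ) :
    pr (fun ω : Fin T → Fin n → Fin n → Bool => Real.exp (-(1 / 5) * a) + (⨆ v, y v) * c ≤
        ∑ v, y v * (loadsFrom M t₁ (lift φ₀ ω) x T v : ℝ)) ≤
      Real.exp (-(4 / 5 * a * c)) := by
  have hY : 0 < ⨆ v, y v := iSup_pos_of_sum_pos (hy1 ▸ one_pos)
  have hyY (v : Fin n) : y v ≤ ⨆ v, y v := le_ciSup (Set.finite_range y).bddAbove v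
  obtain ⟨v, -⟩ := nonempty_of_sum_ne_zero (hy1 ▸ one_ne_zero)
  have hn : (0 : ℝ) < n := Nat.cast_pos.2 v.pos
  have hCn : 0 ≤ C / n :=
    (nonneg_of_mem_rowStochastic (prodMatrix_mem_rowStochastic M _ _)).trans (hP v v)
  have hC : 0 ≤ C := by simpa only [zero_mul] using (le_div_iff₀ hn).1 hCn
  have hs : 0 ≤ 4 / 5 * a / ⨆ v, y v := div_nonneg (by linarith) hY.le
  refine (pr_le_exp_mul_ex_exp _ hs _).trans <|
    (mul_le_mul_of_nonneg_left
      (ex_exp_weighted_loadsFrom_le M t₁ T φ₀ hx hP hy hy1 hY hyY hs) (Real.exp_pos _).le).trans ?_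
  rw [← Real.exp_add, neg_add_eq_sub]
  exact Real.exp_le_exp.2 (chernoff_exponent_le hn hC hCa hsum hY c)

end Tail

theorem stmt15_general (σ : ℝ) (hσ0 : 0 < σ) (ε : ℝ) :
    ∃ N₀ : ℕ, ∀ n : ℕ, N₀ ≤ n →
    ∀ (M : ℕ → Matching n) (t₁ t₂ : ℕ), t₁ ≤ t₂ →
    ∀ x : Fin n → ℤ, (∀ u, 0 ≤ x u) →
    (∑ u, (x u : ℝ)) ≤ n * Real.exp (-(Real.log n) ^ σ) →
    IsSmoothing M t₁ t₂ n ε →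
    ∀ y : Fin n → ℝ, (∀ v, 0 ≤ y v) → (∑ v, y v) = 1 →
    ∀ Z : (Fin (t₂ - t₁) → Fin n → Fin n → Bool) → ℝ,
      (Z = fun ω => ∑ v, y v *
          (loadsFrom M t₁ (lift (orientDefault n) ω) x (t₂ - t₁) v : ℝ)) →
    ∀ δ : ℝ,
      pr (fun ω =>
          Real.exp (-(1 / 5) * (Real.log n) ^ σ) + 8 * (⨆ v, y v) * (Real.log n) ^ δ
            ≤ Z ω)
        ≤ Real.exp (-(Real.log n) ^ (δ + σ) / 6) := by
  have hlarge : ∀ᶠ n : ℕ in Filter.atTop, 5 * (1 + ε) ≤ 4 * Real.log n ^ σ ∧ 2 ≤ n :=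
    ((((tendsto_rpow_atTop hσ0).comp (Real.tendsto_log_atTop.comp tendsto_natCast_atTop_atTop)
      ).const_mul_atTop four_pos).eventually_ge_atTop _).and (Filter.eventually_ge_atTop 2)
  obtain ⟨N₀, hN₀⟩ := Filter.eventually_atTop.1 hlarge
  refine ⟨N₀, fun n hn M t₁ t₂ ht x hx hsum hsm y hy hy1 Z hZ δ => ?_⟩
  obtain ⟨ha, hn2⟩ := hN₀ n hn
  have hlog : 0 < Real.log n := Real.log_pos (by exact_mod_cast hn2)
  have hn0 : (0 : ℝ) < n := by positivity
  have hP (v w : Fin n) : prodMatrix M (t₁ + 1) (t₁ + (t₂ - t₁)) v w ≤ (1 + ε) / n := by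
    rw [Nat.add_sub_cancel' ht, add_div]
    exact hsm.prodMatrix_apply_le hn0 v w
  have htail := pr_exp_add_iSup_mul_le_weighted_loadsFrom_le M t₁ (t₂ - t₁) (orientDefault n)
    hx hP ha hsum hy hy1 (8 * Real.log n ^ δ)
  simp only [hZ, mul_assoc (8 : ℝ), mul_left_comm (8 : ℝ) (⨆ v, y v)]
  refine htail.trans (Real.exp_le_exp.2 ?_)
  rw [Real.rpow_add hlog]
  have hab : 0 < Real.log n ^ δ * Real.log n ^ σ := by positivity
  linarith

/-- Strong tail bound for a convex combination of a sparse load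
vector:  if `‖x^{(t₁)}‖₁ ≤ n e^{-(log n)^σ}`, `[t₁,t₂]` is `(n,n⁻³)`-smoothing,
`y ≥ 0` with `‖y‖₁ = 1` and `Z = ∑_v y_v x_v^{(t₂)}`, then for all `δ > 0`,
`P( Z ≥ e^{-(1/5)(log n)^σ} + 8‖y‖_∞ (log n)^δ ) ≤ e^{-(log n)^{δ+σ}/6}`. -/
theorem stmt15 (σ : ℝ) (hσ0 : 0 < σ) (hσ1 : σ < 1) :
    ∃ N₀ : ℕ, ∀ n : ℕ, N₀ ≤ n →
    ∀ (M : ℕ → Matching n) (t₁ t₂ : ℕ), t₁ < t₂ →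
    ∀ x : Fin n → ℤ, (∀ u, 0 ≤ x u) →
    (∑ u, (x u : ℝ)) ≤ n * Real.exp (-(Real.log n) ^ σ) →
    IsSmoothing M t₁ t₂ n (((n : ℝ) ^ 3)⁻¹) →
    ∀ y : Fin n → ℝ, (∀ v, 0 ≤ y v) → (∑ v, y v) = 1 →
    ∀ Z : (Fin (t₂ - t₁) → Fin n → Fin n → Bool) → ℝ,
      (Z = fun ω => ∑ v, y v *
          (loadsFrom M t₁ (lift (orientDefault n) ω) x (t₂ - t₁) v : ℝ)) →
    ∀ δ : ℝ, 0 < δ →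
      pr (fun ω =>
          Real.exp (-(1 / 5) * (Real.log n) ^ σ) + 8 * (⨆ v, y v) * (Real.log n) ^ δ
            ≤ Z ω)
        ≤ Real.exp (-(Real.log n) ^ (δ + σ) / 6) := by
  obtain ⟨N₀, hN₀⟩ := stmt15_general σ hσ0 1
  exact ⟨N₀, fun n hn M t₁ t₂ ht x hx hsum hsm y hy hy1 Z hZ δ _ => hN₀ n hn M t₁ t₂ ht.le x hx hsum
    (hsm.mono (by exact_mod_cast Nat.cast_inv_le_one (n ^ 3))) y hy hy1 Z hZ δ⟩

end LB
end

section
/- Let d ∈ ℕ be a constant. There exist constants c, C, γ > 0 depending only on d such that for all sufficiently large n the following holds: for any regular graph G on n vertices, any d matchings M^{(1)},…,M^{(d)} applied periodically (balancing circuit model) whose round matrix M = ∏_{s=1}^{d} M^{(s)} satisfies λ(M) < 1, and any initial load vector x^{(0)} ∈ ℤ^n with discrepancy at most K (K ≥ 2), the discrete process with independent uniformly random orientations satisfies: with probability at least 1 − e^{−(log n)^{γ}}, the discrepancy of x^{(t)} is at most c after t = ⌈C·log(Kn)/(1 − λ(M))⌉ rounds. -/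
namespace LB

/-!
Call a token excess if it lies more than `5` above the average at its node. Tag an excess token,
and in every round redistribute the tag uniformly over the excess of the matched pair; it dies if
there is none. The expected total excess after a run of rounds is at most the initial excess, each
token counted with the probability that its tag survives. Over a block of about `J * 2 ^ J`
periods, where `2 ^ J` is about the relaxation time, this probability is at most `exp (3 - J)`,
unless certain exponential moments of the load averaged by the heat kernels around the node, its
obstruction, exceed `1`.

To deal with the obstructed nodes, every node carries a weight. A node pays for its obstruction
with an increase of its weight, and the weights are averaged like the loads. The excess discounted
by a small negative power of the weights then shrinks by the factor `2 * exp (3 - J)` per block,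
whether or not there are obstructions. On the other hand, the expected exponential moment of the
load in a balanced direction is dominated by the initial moment in the averaged direction, and
therefore after `N` blocks the expected weights are at most `exp (2 + 2 * N)`. Since a node with
load `6` above the average has a large weight or contributes to the discounted excess, after
`N ≈ 8 * log (K * n) / J` blocks there is most likely no such node. Applied to `x` and `-x`, this
bounds the discrepancy by `12`.

The heat kernel contracts by the spectral gap. It spreads out because the matchings connect all
nodes: every proper superlevel set is left by some matched pair, so a function that is nearly
invariant and large at one node is large at many nodes.
-/

section

open scoped BigOperators Matrix

variable {n : ℕ}

/-! ### Matchings -/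

namespace Matching

lemma f_involutive (m : Matching n) : Function.Involutive m.f := m.invol

lemma sum_comp_f (m : Matching n) (g : Fin n → ℝ) : ∑ u, g (m.f u) = ∑ u, g u :=
  m.f_involutive.bijective.sum_comp g

lemma matrix_mulVec_apply (m : Matching n) (y : Fin n → ℝ) (u : Fin n) :
    (m.matrix *ᵥ y) u = (y u + y (m.f u)) / 2 := by
  by_cases h : m.f u = u
  · simp [Matrix.mulVec, dotProduct, matrix, h]
  · have h_entry : ∀ v, m.matrix u v * y v =
        (if v = u then y v / 2 else 0) + if v = m.f u then y v / 2 else 0 := fun v => by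
      simp only [matrix, Matrix.of_apply]
      grind
    simp only [Matrix.mulVec, dotProduct, h_entry, Finset.sum_add_distrib, Finset.sum_ite_eq',
      Finset.mem_univ, if_true]
    ring

lemma matrix_mulVec_apply_f (m : Matching n) (y : Fin n → ℝ) (u : Fin n) :
    (m.matrix *ᵥ y) (m.f u) = (m.matrix *ᵥ y) u := by
  rw [matrix_mulVec_apply, matrix_mulVec_apply, m.invol, add_comm]

lemma transpose_matrix (m : Matching n) : m.matrixᵀ = m.matrix := by
  ext u v
  have := m.invol u
  have := m.invol v
  simp only [matrix, Matrix.transpose_apply, Matrix.of_apply]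
  grind

lemma vecMul_matrix (m : Matching n) (y : Fin n → ℝ) : y ᵥ* m.matrix = m.matrix *ᵥ y := by
  rw [← Matrix.vecMul_transpose, m.transpose_matrix]

lemma matrix_mem_doublyStochastic (m : Matching n) : m.matrix ∈ doublyStochastic ℝ (Fin n) := by
  have h_one : m.matrix *ᵥ 1 = 1 := by
    ext u
    simp [matrix_mulVec_apply]
  refine mem_doublyStochastic.2 ⟨fun u v => ?_, h_one, by rw [vecMul_matrix, h_one]⟩
  simp only [matrix, Matrix.of_apply]
  split_ifs <;> norm_num

end Matching

lemma pairSum_congr (m : Matching n) {g g' : Fin n → Fin n → ℝ}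
    (h : ∀ u, u < m.f u → g u (m.f u) = g' u (m.f u)) : pairSum m g = pairSum m g' :=
  Finset.sum_congr rfl fun u _ => by split_ifs with hu <;> simp [h, hu]

lemma mul_pairSum (m : Matching n) (c : ℝ) (g : Fin n → Fin n → ℝ) :
    c * pairSum m g = pairSum m fun u v => c * g u v := by
  simp only [pairSum, Finset.mul_sum, mul_ite, mul_zero]

lemma exp_pairSum (m : Matching n) (g : Fin n → Fin n → ℝ) :
    Real.exp (pairSum m g) = ∏ u, if u < m.f u then Real.exp (g u (m.f u)) else 1 := by
  simp only [pairSum, Real.exp_sum, apply_ite Real.exp, Real.exp_zero]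

lemma sum_eq_pairSum (m : Matching n) {g : Fin n → ℝ} (hg : ∀ u, m.f u = u → g u = 0) :
    ∑ u, g u = pairSum m fun u v => g u + g v := by
  have h_swap : ∑ u, (if u < m.f u then g (m.f u) else 0) = ∑ u, if m.f u < u then g u else 0 := by
    rw [← m.sum_comp_f fun u => if m.f u < u then g u else 0]
    simp only [m.invol]
  have h_split : ∀ u, (if u < m.f u then g u + g (m.f u) else 0) =
      (if u < m.f u then g u else 0) + if u < m.f u then g (m.f u) else 0 := fun u => by
    split_ifs <;> simp
  simp only [pairSum, h_split, Finset.sum_add_distrib, h_swap]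
  rw [← Finset.sum_add_distrib]
  refine Finset.sum_congr rfl fun u _ => ?_
  rcases lt_trichotomy u (m.f u) with h | h | h
  · simp [h, h.not_gt]
  · simp [← h, hg u h.symm]
  · simp [h, h.not_gt]

lemma dotProduct_self_sub_mulVec_eq_sum (m : Matching n) (y : Fin n → ℝ) :
    y ⬝ᵥ y - (m.matrix *ᵥ y) ⬝ᵥ (m.matrix *ᵥ y) = ∑ u, (y u - y (m.f u)) ^ 2 / 4 := by
  have h_comp := m.sum_comp_f fun u => y u * y u / 2
  have h_term : ∀ u, (y u - y (m.f u)) ^ 2 / 4 = y u * y u / 2 + y (m.f u) * y (m.f u) / 2 -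
      (y u + y (m.f u)) / 2 * ((y u + y (m.f u)) / 2) := fun u => by ring
  simp only [dotProduct, m.matrix_mulVec_apply, h_term, Finset.sum_sub_distrib,
    Finset.sum_add_distrib, h_comp, ← Finset.sum_div]
  ring

lemma pairSum_sq_sub (m : Matching n) (y : Fin n → ℝ) :
    pairSum m (fun u v => (y u - y v) ^ 2) =
      2 * (y ⬝ᵥ y - (m.matrix *ᵥ y) ⬝ᵥ (m.matrix *ᵥ y)) := by
  rw [dotProduct_self_sub_mulVec_eq_sum, sum_eq_pairSum m fun u h => by simp [h], mul_pairSum]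
  refine pairSum_congr m fun u _ => ?_
  rw [m.invol]
  ring

/-! ### Independent orientations -/

/-- The choices made in one round; only the entries at the matched pairs are ever read. -/
abbrev Orientation (n : ℕ) := Fin n → Fin n → Bool

lemma expect_prod_apply {ι κ : Type*} [Fintype ι] [DecidableEq ι] [Fintype κ] (g : ι → κ → ℝ) :
    𝔼 r : ι → κ, ∏ i, g i (r i) = ∏ i, 𝔼 k, g i k := by
  simp only [Fintype.expect_eq_sum_div_card, Finset.prod_div_distrib, Finset.prod_univ_sum,
    Fintype.piFinset_univ, Fintype.card_pi, Nat.cast_prod]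

lemma expect_apply {ι κ : Type*} [Fintype ι] [DecidableEq ι] [Fintype κ] [Nonempty κ]
    (g : κ → ℝ) (i : ι) : 𝔼 r : ι → κ, g (r i) = 𝔼 k, g k := by
  have h := expect_prod_apply fun j k => if j = i then g k else 1
  simp only [Finset.prod_ite_eq', Finset.mem_univ, if_true] at h
  rw [h, Finset.prod_eq_single i (fun j _ hj => by simp [hj]) (by simp)]
  simp

lemma expect_orientation_prod (m : Matching n) (g : Fin n → Bool → ℝ) :
    𝔼 φ : Orientation n, ∏ u, g u (φ u (m.f u)) = ∏ u, (g u true + g u false) / 2 := by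
  rw [expect_prod_apply fun u (r : Fin n → Bool) => g u (r (m.f u))]
  refine Finset.prod_congr rfl fun u _ => ?_
  rw [expect_apply, Fintype.expect_eq_sum_div_card, Fintype.sum_bool, Fintype.card_bool,
    Nat.cast_ofNat]

/-- An orientation bit as a number `±1`; at a pair `u < v`, the value `1` sends the excess token
to `u`. -/
def orientationSign (b : Bool) : ℝ := if b then 1 else -1

@[simp] lemma orientationSign_true : orientationSign true = 1 := rfl

@[simp] lemma orientationSign_false : orientationSign false = -1 := rfl

@[simp] lemma orientationSign_not (b : Bool) : orientationSign (!b) = -orientationSign b := by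
  cases b <;> simp

lemma exp_add_exp_neg_le (c : ℝ) :
    (Real.exp c + Real.exp (-c)) / 2 ≤ Real.exp (c ^ 2 / 2) :=
  Real.cosh_eq c ▸ Real.cosh_le_exp_half_sq c

lemma expect_prod_mul_exp_pairSum_le (m : Matching n) (c b : Fin n → Fin n → ℝ)
    {w : Fin n → Bool → ℝ} (hw : ∀ u i, 0 ≤ w u i) {R : Fin n → ℝ}
    (hlt : ∀ u, u < m.f u → (w u true * Real.exp (c u (m.f u)) +
      w u false * Real.exp (-c u (m.f u))) / 2 ≤ R u * Real.exp (b u (m.f u)))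
    (hge : ∀ u, ¬ u < m.f u → (w u true + w u false) / 2 ≤ R u) :
    𝔼 φ : Orientation n, (∏ u, w u (φ u (m.f u))) *
        Real.exp (pairSum m fun u v => c u v * orientationSign (φ u v)) ≤
      (∏ u, R u) * Real.exp (pairSum m b) := by
  simp only [exp_pairSum, ← Finset.prod_mul_distrib]
  rw [expect_orientation_prod m fun u i => w u i *
    if u < m.f u then Real.exp (c u (m.f u) * orientationSign i) else 1]
  refine Finset.prod_le_prod (fun u _ => ?_) fun u _ => ?_
  · have := hw u true
    have := hw u false
    split_ifs <;> positivity
  · split_ifs with h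
    · simpa using hlt u h
    · simpa using hge u h

lemma expect_exp_pairSum_le (m : Matching n) {c b : Fin n → Fin n → ℝ}
    (hcb : ∀ u v, c u v ^ 2 / 2 ≤ b u v) :
    𝔼 φ : Orientation n, Real.exp (pairSum m fun u v => c u v * orientationSign (φ u v)) ≤
      Real.exp (pairSum m b) := by
  simpa using expect_prod_mul_exp_pairSum_le m c b (w := 1) (R := 1) (fun _ _ => zero_le_one)
    (fun u _ => by simpa using (exp_add_exp_neg_le _).trans (Real.exp_le_exp.2 (hcb u _)))
    fun _ _ => by norm_num

lemma expect_mul_exp_pairSum_le (m : Matching n) {c b : Fin n → Fin n → ℝ}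
    (hcb : ∀ u v, c u v ^ 2 / 2 ≤ b u v) {u : Fin n} (hu : u < m.f u) {w : Bool → ℝ}
    (hw : ∀ i, 0 ≤ w i) {R : ℝ} (hR : (w true * Real.exp (c u (m.f u)) +
      w false * Real.exp (-c u (m.f u))) / 2 ≤ R * Real.exp (b u (m.f u))) :
    𝔼 φ : Orientation n, w (φ u (m.f u)) *
        Real.exp (pairSum m fun u v => c u v * orientationSign (φ u v)) ≤
      R * Real.exp (pairSum m b) := by
  have h := expect_prod_mul_exp_pairSum_le m c b (w := fun v i => if v = u then w i else 1)
    (R := fun v => if v = u then R else 1) (fun v i => by split_ifs <;> simp [hw])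
    (fun v _ => ?_) fun v hv => ?_
  · simpa only [Finset.prod_ite_eq', Finset.mem_univ, if_true] using h
  · rcases eq_or_ne v u with rfl | hvu
    · simpa only [if_true] using hR
    · simpa [hvu] using (exp_add_exp_neg_le _).trans (Real.exp_le_exp.2 (hcb v _))
  · have hvu : v ≠ u := by rintro rfl; exact hv hu
    simp [hvu]

/-! ### One round of the process -/

/-- An integer load vector. -/
abbrev Load (n : ℕ) := Fin n → ℤ

/-- A finite sequence of matchings to be applied from left to right. -/
abbrev Schedule (n : ℕ) := FreeMonoid (Matching n)

/-- The load vector relative to its average, the quantity that the process drives to `0`. -/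
noncomputable def centered (x : Load n) : Fin n → ℝ := fun u => x u - (∑ v, (x v : ℝ)) / n

/-- Half the parity of `x u + x v`: the modulus of the rounding error when `u` and `v` are
matched. -/
noncomputable def halfParity (x : Load n) (u v : Fin n) : ℝ := ((x u + x v) % 2 : ℤ) / 2

/-- The deviation of one round of the discrete process from exact averaging. -/
noncomputable def roundingError (m : Matching n) (φ : Orientation n) (x : Load n) : Fin n → ℝ :=
  fun u => step m φ x u - (x u + x (m.f u)) / 2

lemma halfParity_eq_zero_or (x : Load n) (u v : Fin n) :
    halfParity x u v = 0 ∨ halfParity x u v = 1 / 2 := by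
  rcases Int.emod_two_eq_zero_or_one (x u + x v) with h | h <;> simp [halfParity, h]

lemma halfParity_sq_le (x : Load n) (u v : Fin n) : halfParity x u v ^ 2 ≤ 1 / 4 := by
  rcases halfParity_eq_zero_or x u v with h | h <;> norm_num [h]

lemma cast_ediv_two (s : ℤ) : (Int.ediv s 2 : ℝ) = s / 2 - (s % 2 : ℤ) / 2 := by
  have h : Int.ediv s 2 * 2 = s - s % 2 := by
    change s / 2 * 2 = s - s % 2
    lia
  have : (Int.ediv s 2 : ℝ) * 2 = s - (s % 2 : ℤ) := by exact_mod_cast h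
  linarith

lemma cast_add_one_ediv_two (s : ℤ) : (Int.ediv (s + 1) 2 : ℝ) = s / 2 + (s % 2 : ℤ) / 2 := by
  have h : Int.ediv (s + 1) 2 * 2 = s + s % 2 := by
    change (s + 1) / 2 * 2 = s + s % 2
    lia
  have : (Int.ediv (s + 1) 2 : ℝ) * 2 = s + (s % 2 : ℤ) := by exact_mod_cast h
  linarith

lemma roundingError_of_fixed (m : Matching n) (φ : Orientation n) (x : Load n) {u : Fin n}
    (hu : m.f u = u) : roundingError m φ x u = 0 := by
  simp [roundingError, step, hu]

lemma roundingError_of_lt (m : Matching n) (φ : Orientation n) (x : Load n) {u : Fin n}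
    (hu : u < m.f u) :
    roundingError m φ x u = halfParity x u (m.f u) * orientationSign (φ u (m.f u)) := by
  simp only [roundingError, step, halfParity, hu.ne', hu, if_true, if_false]
  cases φ u (m.f u)
  · simp [cast_ediv_two]
  · simp [cast_add_one_ediv_two]

lemma roundingError_partner_of_lt (m : Matching n) (φ : Orientation n) (x : Load n) {u : Fin n}
    (hu : u < m.f u) : roundingError m φ x (m.f u) = -roundingError m φ x u := by
  rw [roundingError_of_lt m φ x hu]
  simp only [roundingError, step, halfParity, m.invol, hu.ne, hu.not_gt, if_false]
  rw [add_comm (x (m.f u)), add_comm (x (m.f u) : ℝ)]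
  cases φ u (m.f u)
  · simp [cast_add_one_ediv_two]
  · simp [cast_ediv_two]

lemma roundingError_partner (m : Matching n) (φ : Orientation n) (x : Load n) (u : Fin n) :
    roundingError m φ x (m.f u) = -roundingError m φ x u := by
  rcases lt_trichotomy u (m.f u) with h | h | h
  · exact roundingError_partner_of_lt m φ x h
  · rw [← h, roundingError_of_fixed m φ x h.symm, neg_zero]
  · have h' : m.f u < m.f (m.f u) := by rwa [m.invol]
    rw [← neg_eq_iff_eq_neg, ← roundingError_partner_of_lt m φ x h', m.invol]

lemma dotProduct_roundingError (m : Matching n) (φ : Orientation n) (x : Load n)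
    (y : Fin n → ℝ) : y ⬝ᵥ roundingError m φ x =
      pairSum m fun u v => halfParity x u v * (y u - y v) * orientationSign (φ u v) := by
  rw [dotProduct, sum_eq_pairSum m fun u hu => by rw [roundingError_of_fixed m φ x hu, mul_zero]]
  refine pairSum_congr m fun u hu => ?_
  rw [roundingError_partner, roundingError_of_lt m φ x hu]
  ring

lemma sum_step (m : Matching n) (φ : Orientation n) (x : Load n) :
    ∑ u, (step m φ x u : ℝ) = ∑ u, (x u : ℝ) := by
  have h := dotProduct_roundingError m φ x 1
  simp only [dotProduct, roundingError, Pi.one_apply, one_mul, Finset.sum_sub_distrib,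
    ← Finset.sum_div, Finset.sum_add_distrib, m.sum_comp_f fun u => (x u : ℝ), sub_self, mul_zero,
    zero_mul, pairSum, ite_self, Finset.sum_const_zero] at h
  linarith

lemma centered_step (m : Matching n) (φ : Orientation n) (x : Load n) :
    centered (step m φ x) = m.matrix *ᵥ centered x + roundingError m φ x := by
  ext u
  simp only [centered, sum_step, Pi.add_apply, m.matrix_mulVec_apply, roundingError]
  ring

lemma dotProduct_centered_step (m : Matching n) (φ : Orientation n) (x : Load n)
    (y : Fin n → ℝ) : y ⬝ᵥ centered (step m φ x) = (m.matrix *ᵥ y) ⬝ᵥ centered x +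
      pairSum m fun u v => halfParity x u v * (y u - y v) * orientationSign (φ u v) := by
  rw [centered_step, dotProduct_add, dotProduct_roundingError, Matrix.dotProduct_mulVec,
    m.vecMul_matrix]

lemma centered_step_add_partner (m : Matching n) (φ : Orientation n) (x : Load n) (u : Fin n) :
    centered (step m φ x) u + centered (step m φ x) (m.f u) =
      centered x u + centered x (m.f u) := by
  simp only [centered_step, Pi.add_apply, m.matrix_mulVec_apply, m.invol, roundingError_partner]
  ring

lemma step_le_max (m : Matching n) (φ : Orientation n) (x : Load n) (u : Fin n) :
    step m φ x u ≤ max (x u) (x (m.f u)) := by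
  have h_ediv : ∀ s : ℤ, Int.ediv s 2 = s / 2 := fun _ => rfl
  simp only [step, h_ediv]
  split_ifs <;> lia

lemma step_neg (m : Matching n) (φ : Orientation n) (x : Load n) :
    step m φ (-x) = -step m (fun u v => !φ u v) x := by
  ext u
  have h_ediv : ∀ s : ℤ, Int.ediv s 2 = s / 2 := fun _ => rfl
  simp only [step, h_ediv, Pi.neg_apply, Bool.not_eq_true']
  split_ifs <;> simp_all <;> lia

lemma centered_neg (x : Load n) : centered (-x) = -centered x := by
  ext u
  simp only [centered, Pi.neg_apply, Int.cast_neg, Finset.sum_neg_distrib]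
  ring

lemma centered_step_le_max (m : Matching n) (φ : Orientation n) (x : Load n) (u : Fin n) :
    centered (step m φ x) u ≤ max (centered x u) (centered x (m.f u)) := by
  have h : (step m φ x u : ℝ) ≤ max (x u : ℝ) (x (m.f u)) := by exact_mod_cast step_le_max m φ x u
  simp only [centered, sum_step, max_sub_sub_right]
  linarith

/-! ### The Markov operators of the process -/

/-- The Markov operator of one round. -/
noncomputable def roundOperator (m : Matching n) : Module.End ℝ (Load n → ℝ) where
  toFun f x := 𝔼 φ : Orientation n, f (step m φ x)
  map_add' _ _ := funext fun _ => Finset.expect_add_distrib _ _ _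
  map_smul' _ _ := funext fun _ => (Finset.mul_expect _ _ _).symm

/-- `evolve l f x` is the expectation of `f` after running the schedule `l` from `x`. -/
noncomputable def evolve : Schedule n →* Module.End ℝ (Load n → ℝ) := FreeMonoid.lift roundOperator

/-- The product of the matching matrices of a schedule. -/
noncomputable def transition : Schedule n →* Matrix (Fin n) (Fin n) ℝ :=
  FreeMonoid.lift Matching.matrix

lemma roundOperator_apply (m : Matching n) (f : Load n → ℝ) (x : Load n) :
    roundOperator m f x = 𝔼 φ : Orientation n, f (step m φ x) := rfl

lemma evolve_of_mul (m : Matching n) (l : Schedule n) (f : Load n → ℝ) :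
    evolve (.of m * l) f = roundOperator m (evolve l f) := by
  rw [map_mul, evolve, FreeMonoid.lift_eval_of, Module.End.mul_apply]

lemma transition_of_mul_mulVec (m : Matching n) (l : Schedule n) (y : Fin n → ℝ) :
    transition (.of m * l) *ᵥ y = m.matrix *ᵥ (transition l *ᵥ y) := by
  rw [map_mul, transition, FreeMonoid.lift_eval_of, Matrix.mulVec_mulVec]

lemma monotone_roundOperator (m : Matching n) : Monotone (roundOperator m) :=
  fun _ _ h _ => Finset.expect_le_expect fun _ _ => h _

lemma monotone_evolve (l : Schedule n) : Monotone (evolve l) := by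
  induction l using FreeMonoid.inductionOn' with
  | one =>
    rw [map_one]
    exact monotone_id
  | of_mul m l ih =>
    intro f g h
    simpa only [evolve_of_mul] using monotone_roundOperator m (ih h)

lemma transition_mem_doublyStochastic (l : Schedule n) :
    transition l ∈ doublyStochastic ℝ (Fin n) := by
  induction l using FreeMonoid.inductionOn' with
  | one => simpa only [map_one] using one_mem _
  | of_mul m l ih =>
    rw [map_mul, transition, FreeMonoid.lift_eval_of]
    exact mul_mem m.matrix_mem_doublyStochastic ih

lemma transition_mulVec_nonneg (l : Schedule n) {y : Fin n → ℝ} (hy : 0 ≤ y) :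
    0 ≤ transition l *ᵥ y :=
  fun _ => dotProduct_nonneg_of_nonneg
    (fun _ => nonneg_of_mem_doublyStochastic (transition_mem_doublyStochastic l)) hy

lemma matrix_mulVec_dotProduct_self_le (m : Matching n) (y : Fin n → ℝ) :
    (m.matrix *ᵥ y) ⬝ᵥ (m.matrix *ᵥ y) ≤ y ⬝ᵥ y := by
  have h := dotProduct_self_sub_mulVec_eq_sum m y
  have : 0 ≤ ∑ u, (y u - y (m.f u)) ^ 2 / 4 := Finset.sum_nonneg fun u _ => by positivity
  linarith

lemma transition_mulVec_dotProduct_self_le (l : Schedule n) (y : Fin n → ℝ) :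
    (transition l *ᵥ y) ⬝ᵥ (transition l *ᵥ y) ≤ y ⬝ᵥ y := by
  induction l using FreeMonoid.inductionOn' with
  | one => simp
  | of_mul m l ih =>
    rw [transition_of_mul_mulVec]
    exact (matrix_mulVec_dotProduct_self_le m _).trans ih

/-- The normalized exponential moment of the load in direction `y`: averaging `y` dominates
taking expectations. -/
noncomputable def loadMoment (y : Fin n → ℝ) (x : Load n) : ℝ :=
  Real.exp (y ⬝ᵥ centered x - y ⬝ᵥ y / 4)

lemma roundOperator_loadMoment_le (m : Matching n) (y : Fin n → ℝ) :
    roundOperator m (loadMoment y) ≤ loadMoment (m.matrix *ᵥ y) := by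
  intro x
  have h_eq : ∀ φ : Orientation n, loadMoment y (step m φ x) =
      Real.exp ((m.matrix *ᵥ y) ⬝ᵥ centered x - y ⬝ᵥ y / 4) *
        Real.exp (pairSum m fun u v => halfParity x u v * (y u - y v) * orientationSign (φ u v)) :=
    fun φ => by
      rw [loadMoment, dotProduct_centered_step, ← Real.exp_add]
      ring_nf
  have h_parity : ∀ u v, (halfParity x u v * (y u - y v)) ^ 2 / 2 ≤ 1 / 8 * (y u - y v) ^ 2 :=
    fun u v => by
      rw [mul_pow]
      linarith [mul_le_mul_of_nonneg_right (halfParity_sq_le x u v) (sq_nonneg (y u - y v))]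
  simp only [roundOperator_apply, h_eq, ← Finset.mul_expect]
  refine (mul_le_mul_of_nonneg_left (expect_exp_pairSum_le m h_parity)
    (Real.exp_pos _).le).trans_eq ?_
  rw [← mul_pairSum, pairSum_sq_sub, loadMoment, ← Real.exp_add]
  ring_nf

lemma evolve_loadMoment_le (l : Schedule n) (y : Fin n → ℝ) :
    evolve l (loadMoment y) ≤ loadMoment (transition l *ᵥ y) := by
  induction l using FreeMonoid.inductionOn' with
  | one => simp
  | of_mul m l ih =>
    rw [evolve_of_mul, transition_of_mul_mulVec]
    exact (monotone_roundOperator m ih).trans (roundOperator_loadMoment_le m _)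

/-! ### Tracking a tagged excess token -/

/-- The load of `u` beyond the level `5` above the average. -/
noncomputable def excess (x : Load n) (u : Fin n) : ℝ := max (centered x u - 5) 0

/-- The average of `F` over the position of a tagged token that is uniform among the excess of `u`
and its partner. It has the junk value `0` when there is no such excess. -/
noncomputable def tagAverage (m : Matching n) (F : Fin n → Load n → ℝ) (u : Fin n)
    (x : Load n) : ℝ :=
  (excess x u * F u x + excess x (m.f u) * F (m.f u) x) / (excess x u + excess x (m.f u))

lemma excess_nonneg (x : Load n) (u : Fin n) : 0 ≤ excess x u := le_max_right _ _

lemma excess_pos {x : Load n} {u : Fin n} : 0 < excess x u ↔ 5 < centered x u := by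
  simp [excess]

lemma tagAverage_partner (m : Matching n) (F : Fin n → Load n → ℝ) (u : Fin n) (x : Load n) :
    tagAverage m F (m.f u) x = tagAverage m F u x := by
  simp only [tagAverage, m.invol, add_comm]

lemma tagAverage_of_fixed_le (m : Matching n) {F : Fin n → Load n → ℝ} {u : Fin n}
    (hu : m.f u = u) {x : Load n} (hF : 0 ≤ F u x) : tagAverage m F u x ≤ F u x := by
  rw [tagAverage, hu, ← add_mul, mul_div_right_comm]
  exact mul_le_of_le_one_left hF (div_self_le_one _)

lemma tagAverage_mono (m : Matching n) {F F' : Fin n → Load n → ℝ}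
    (h : ∀ u x, 0 < excess x u → F u x ≤ F' u x) (u : Fin n) (x : Load n) :
    tagAverage m F u x ≤ tagAverage m F' u x := by
  have h_mul : ∀ w, excess x w * F w x ≤ excess x w * F' w x := fun w => by
    rcases (excess_nonneg x w).eq_or_lt with h0 | h0
    · simp [← h0]
    · exact mul_le_mul_of_nonneg_left (h w x h0) h0.le
  exact div_le_div_of_nonneg_right (add_le_add (h_mul _) (h_mul _))
    (add_nonneg (excess_nonneg x u) (excess_nonneg x _))

lemma tagAverage_mul_add (m : Matching n) (F : Fin n → Load n → ℝ) (u : Fin n) (x : Load n) :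
    tagAverage m F u x * (excess x u + excess x (m.f u)) =
      excess x u * F u x + excess x (m.f u) * F (m.f u) x := by
  have h_u := excess_nonneg x u
  have h_v := excess_nonneg x (m.f u)
  refine div_mul_cancel_of_imp fun h => ?_
  simp [show excess x u = 0 by linarith, show excess x (m.f u) = 0 by linarith]

/-- The Markov operator of one round on functions of the tagged token's position and the load: the
load makes a step, and the token is redistributed over the excess of the matched pair. -/
noncomputable def trackRound (m : Matching n) : Module.End ℝ (Fin n → Load n → ℝ) where
  toFun F u x := 𝔼 φ : Orientation n, tagAverage m F u (step m φ x)
  map_add' F F' := by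
    ext u x
    simp only [Pi.add_apply, ← Finset.expect_add_distrib, tagAverage, ← add_div]
    ring_nf
  map_smul' c F := by
    ext u x
    simp only [Pi.smul_apply, smul_eq_mul, RingHom.id_apply, Finset.mul_expect, tagAverage,
      mul_left_comm _ c, ← mul_add, mul_div_assoc]

/-- `track l F u x` is the expectation of `F` after running the schedule `l` from the load `x` with
the tagged token at `u`. -/
noncomputable def track : Schedule n →* Module.End ℝ (Fin n → Load n → ℝ) :=
  FreeMonoid.lift trackRound

lemma trackRound_apply (m : Matching n) (F : Fin n → Load n → ℝ) (u : Fin n) (x : Load n) :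
    trackRound m F u x = 𝔼 φ : Orientation n, tagAverage m F u (step m φ x) := rfl

lemma trackRound_partner (m : Matching n) (F : Fin n → Load n → ℝ) (u : Fin n) (x : Load n) :
    trackRound m F (m.f u) x = trackRound m F u x := by
  simp only [trackRound_apply, tagAverage_partner]

lemma track_of_mul (m : Matching n) (l : Schedule n) (F : Fin n → Load n → ℝ) :
    track (.of m * l) F = trackRound m (track l F) := by
  rw [map_mul, track, FreeMonoid.lift_eval_of, Module.End.mul_apply]

lemma trackRound_le_of_excess_pos (m : Matching n) {F F' : Fin n → Load n → ℝ}
    (h : ∀ u x, 0 < excess x u → F u x ≤ F' u x) : trackRound m F ≤ trackRound m F' :=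
  fun _ _ => Finset.expect_le_expect fun _ _ => tagAverage_mono m h _ _

lemma monotone_trackRound (m : Matching n) :
    Monotone (trackRound m : (Fin n → Load n → ℝ) → Fin n → Load n → ℝ) :=
  fun _ _ h => trackRound_le_of_excess_pos m fun u x _ => h u x

lemma monotone_track (l : Schedule n) :
    Monotone (track l : (Fin n → Load n → ℝ) → Fin n → Load n → ℝ) := by
  induction l using FreeMonoid.inductionOn' with
  | one =>
    rw [map_one]
    exact monotone_id
  | of_mul m l ih =>
    intro F F' h
    simpa only [track_of_mul] using monotone_trackRound m (ih h)

lemma track_le_of_excess_pos {l : Schedule n} (hl : l ≠ 1) {F F' : Fin n → Load n → ℝ}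
    (h : ∀ u x, 0 < excess x u → F u x ≤ F' u x) : track l F ≤ track l F' := by
  induction l using FreeMonoid.inductionOn' with
  | one => exact absurd rfl hl
  | of_mul m l ih =>
    rw [track_of_mul, track_of_mul]
    rcases eq_or_ne l 1 with rfl | hl'
    · simpa only [map_one, Module.End.one_apply] using trackRound_le_of_excess_pos m h
    · exact monotone_trackRound m (ih hl')

lemma track_nonneg (l : Schedule n) {F : Fin n → Load n → ℝ} (hF : 0 ≤ F) : 0 ≤ track l F := by
  simpa using monotone_track l hF

lemma track_one_le (l : Schedule n) : track l 1 ≤ 1 := by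
  induction l using FreeMonoid.inductionOn' with
  | one => simp
  | of_mul m l ih =>
    rw [track_of_mul]
    refine (monotone_trackRound m ih).trans fun u x => ?_
    rw [trackRound_apply]
    refine (Finset.expect_le_expect fun φ _ => ?_).trans_eq (Fintype.expect_const (1 : ℝ))
    simp only [tagAverage, Pi.one_apply, mul_one]
    exact div_self_le_one _

lemma max_sub_add_max_sub_le {a b c d : ℝ} (h : c + d = a + b) (hc : c ≤ max a b)
    (hd : d ≤ max a b) (s : ℝ) : max (c - s) 0 + max (d - s) 0 ≤ max (a - s) 0 + max (b - s) 0 := by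
  rcases max_cases a b with h_ab | h_ab <;> rcases max_cases (c - s) 0 with h_c | h_c <;>
    rcases max_cases (d - s) 0 with h_d | h_d <;> rcases max_cases (a - s) 0 with h_a | h_a <;>
    rcases max_cases (b - s) 0 with h_b | h_b <;> linarith

lemma excess_step_add_le (m : Matching n) (φ : Orientation n) (x : Load n) (u : Fin n) :
    excess (step m φ x) u + excess (step m φ x) (m.f u) ≤ excess x u + excess x (m.f u) := by
  refine max_sub_add_max_sub_le (centered_step_add_partner m φ x u) (centered_step_le_max m φ x u)
    ?_ 5
  rw [max_comm]
  simpa only [m.invol] using centered_step_le_max m φ x (m.f u)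

lemma roundOperator_sum_excess_le (m : Matching n) {F : Fin n → Load n → ℝ} (hF : 0 ≤ F)
    (x : Load n) : roundOperator m (fun x => ∑ u, excess x u * F u x) x ≤
      ∑ u, excess x u * trackRound m F u x := by
  simp only [roundOperator_apply, trackRound_apply, Finset.mul_expect]
  rw [← Finset.expect_sum_comm]
  refine Finset.expect_le_expect fun φ _ => ?_
  set x' := step m φ x
  have h_tag_nonneg : ∀ u, 0 ≤ tagAverage m F u x' := fun u => div_nonneg
    (add_nonneg (mul_nonneg (excess_nonneg _ _) (hF _ _)) (mul_nonneg (excess_nonneg _ _) (hF _ _)))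
    (add_nonneg (excess_nonneg _ _) (excess_nonneg _ _))
  have h_pairs : ∑ u, (excess x' u * F u x' + excess x' (m.f u) * F (m.f u) x') ≤
      ∑ u, (excess x u * tagAverage m F u x' +
        excess x (m.f u) * tagAverage m F (m.f u) x') := by
    refine Finset.sum_le_sum fun u _ => ?_
    rw [← tagAverage_mul_add, tagAverage_partner, ← add_mul, mul_comm]
    exact mul_le_mul_of_nonneg_right (excess_step_add_le m φ x u) (h_tag_nonneg u)
  have h_new := m.sum_comp_f fun u => excess x' u * F u x'
  have h_old := m.sum_comp_f fun u => excess x u * tagAverage m F u x'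
  rw [Finset.sum_add_distrib, Finset.sum_add_distrib] at h_pairs
  linarith

lemma evolve_sum_excess_le (l : Schedule n) {F : Fin n → Load n → ℝ} (hF : 0 ≤ F) (x : Load n) :
    evolve l (fun x => ∑ u, excess x u * F u x) x ≤ ∑ u, excess x u * track l F u x := by
  induction l using FreeMonoid.inductionOn' generalizing x with
  | one => simp only [map_one, Module.End.one_apply, le_refl]
  | of_mul m l ih =>
    rw [evolve_of_mul, track_of_mul]
    exact (monotone_roundOperator m ih x).trans
      (roundOperator_sum_excess_le m (track_nonneg l hF) x)

/-! ### Exponential potentials of the tagged token -/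

/-- The potential of a token at `u` under weights `y`. Removing the token's own contribution `y u`
from the exponent makes it a supermartingale when `y` is averaged. -/
noncomputable def tagPotential (y : Fin n → ℝ) (u : Fin n) (x : Load n) : ℝ :=
  y u * Real.exp (y ⬝ᵥ centered x - y u - y ⬝ᵥ y)

/-- The excess of the smaller vertex of a matched pair `u < v` after a round in which its
orientation is `i`. -/
noncomputable def splitExcess (x : Load n) (u v : Fin n) (i : Bool) : ℝ :=
  max ((centered x u + centered x v) / 2 + halfParity x u v * orientationSign i - 5) 0

/-- The probability that the tagged token of a matched pair `u < v` is at `u` after a round in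
which the orientation is `i`. -/
noncomputable def tagShare (x : Load n) (u v : Fin n) (i : Bool) : ℝ :=
  splitExcess x u v i / (splitExcess x u v i + splitExcess x u v (!i))

lemma excess_step_of_lt (m : Matching n) (φ : Orientation n) (x : Load n) {u : Fin n}
    (hu : u < m.f u) : excess (step m φ x) u = splitExcess x u (m.f u) (φ u (m.f u)) := by
  rw [excess, centered_step, Pi.add_apply, m.matrix_mulVec_apply, roundingError_of_lt m φ x hu,
    splitExcess]

lemma excess_step_partner_of_lt (m : Matching n) (φ : Orientation n) (x : Load n) {u : Fin n}
    (hu : u < m.f u) :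
    excess (step m φ x) (m.f u) = splitExcess x u (m.f u) (!φ u (m.f u)) := by
  rw [excess, centered_step, Pi.add_apply, m.matrix_mulVec_apply_f, m.matrix_mulVec_apply,
    roundingError_partner, roundingError_of_lt m φ x hu, splitExcess, orientationSign_not,
    mul_neg]

lemma tagShare_nonneg (x : Load n) (u v : Fin n) (i : Bool) : 0 ≤ tagShare x u v i :=
  div_nonneg (le_max_right _ _) (add_nonneg (le_max_right _ _) (le_max_right _ _))

lemma tagShare_add_le_one (x : Load n) (u v : Fin n) :
    tagShare x u v true + tagShare x u v false ≤ 1 := by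
  simp only [tagShare, Bool.not_true, Bool.not_false]
  rw [add_comm (splitExcess x u v false), ← add_div]
  exact div_self_le_one _

lemma tagAverage_step_of_lt (m : Matching n) (F : Fin n → Load n → ℝ) (φ : Orientation n)
    (x : Load n) {u : Fin n} (hu : u < m.f u) : tagAverage m F u (step m φ x) =
      tagShare x u (m.f u) (φ u (m.f u)) * F u (step m φ x) +
        tagShare x u (m.f u) (!φ u (m.f u)) * F (m.f u) (step m φ x) := by
  rw [tagAverage, excess_step_of_lt m φ x hu, excess_step_partner_of_lt m φ x hu, tagShare,
    tagShare, Bool.not_not, add_comm (splitExcess x u (m.f u) (!φ u (m.f u)))]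
  ring

lemma tagPotential_nonneg {y : Fin n → ℝ} (hy : 0 ≤ y) : 0 ≤ tagPotential y :=
  fun u _ => mul_nonneg (hy u) (Real.exp_pos _).le

lemma tagPotential_le_mul_exp {y : Fin n → ℝ} (hy : 0 ≤ y) (u : Fin n) (x : Load n) :
    tagPotential y u x ≤ y u * Real.exp (y ⬝ᵥ centered x) := by
  have : 0 ≤ y u := hy u
  have : 0 ≤ y ⬝ᵥ y := dotProduct_nonneg_of_nonneg hy hy
  exact mul_le_mul_of_nonneg_left (Real.exp_le_exp.2 (by linarith)) (hy u)

lemma mul_exp_add_mul_exp_neg_le {a b s : ℝ} (ha : 0 ≤ a) (hb : 0 ≤ b) (hs : 0 ≤ s) (hs1 : s ≤ 1) :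
    b * Real.exp (s * (a - b)) + a * Real.exp (-(s * (a - b))) ≤
      (a + b) * Real.exp ((a - b) ^ 2 / 2) := by
  set t := s * (a - b)
  have h_corr : 0 ≤ (a - b) * (Real.exp t - Real.exp (-t)) := by
    rcases le_total a b with h | h
    · have ht : t ≤ 0 := mul_nonpos_of_nonneg_of_nonpos hs (by linarith)
      exact mul_nonneg_of_nonpos_of_nonpos (by linarith)
        (sub_nonpos.2 (Real.exp_le_exp.2 (by linarith)))
    · have ht : 0 ≤ t := mul_nonneg hs (by linarith)
      exact mul_nonneg (by linarith) (sub_nonneg.2 (Real.exp_le_exp.2 (by linarith)))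
  have ht_sq : t ^ 2 ≤ (a - b) ^ 2 := by
    rw [mul_pow]
    exact mul_le_of_le_one_left (sq_nonneg _) (pow_le_one₀ hs hs1)
  have h_cosh : (Real.exp t + Real.exp (-t)) / 2 ≤ Real.exp ((a - b) ^ 2 / 2) :=
    (exp_add_exp_neg_le t).trans (Real.exp_le_exp.2 (by linarith))
  nlinarith [mul_le_mul_of_nonneg_left h_cosh (add_nonneg ha hb)]

lemma tilted_two_point_le {a b h κ κ' : ℝ} (ha : 0 ≤ a) (hb : 0 ≤ b) (h0 : 0 ≤ h) (h1 : h ≤ 1 / 2)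
    (hκ : 0 ≤ κ) (hκ' : 0 ≤ κ') (h_add : κ + κ' ≤ 1) :
    ((κ * (a * Real.exp (-a)) + κ' * (b * Real.exp (-b))) * Real.exp (h * (a - b)) +
      (κ' * (a * Real.exp (-a)) + κ * (b * Real.exp (-b))) * Real.exp (-(h * (a - b)))) / 2 ≤
      (a + b) / 2 * Real.exp (-((a + b) / 2)) * Real.exp ((a - b) ^ 2 / 2) := by
  set E := Real.exp (-((a + b) / 2)) with hE
  have h_exp : ∀ s t : ℝ, -((a + b) / 2) + s = t → Real.exp t = E * Real.exp s := fun s t hst => by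
    rw [hE, ← Real.exp_add, hst]
  have h_regroup : (κ * (a * Real.exp (-a)) + κ' * (b * Real.exp (-b))) * Real.exp (h * (a - b)) +
      (κ' * (a * Real.exp (-a)) + κ * (b * Real.exp (-b))) * Real.exp (-(h * (a - b))) =
      E * (κ * (b * Real.exp ((1 / 2 - h) * (a - b)) + a * Real.exp (-((1 / 2 - h) * (a - b)))) +
        κ' * (b * Real.exp ((1 / 2 + h) * (a - b)) +
          a * Real.exp (-((1 / 2 + h) * (a - b))))) := by
    have e₁ : Real.exp (-a) * Real.exp (h * (a - b)) = E * Real.exp (-((1 / 2 - h) * (a - b))) := by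
      rw [← Real.exp_add, h_exp]; ring
    have e₂ : Real.exp (-b) * Real.exp (h * (a - b)) = E * Real.exp ((1 / 2 + h) * (a - b)) := by
      rw [← Real.exp_add, h_exp]; ring
    have e₃ : Real.exp (-a) * Real.exp (-(h * (a - b))) =
        E * Real.exp (-((1 / 2 + h) * (a - b))) := by
      rw [← Real.exp_add, h_exp]; ring
    have e₄ : Real.exp (-b) * Real.exp (-(h * (a - b))) =
        E * Real.exp ((1 / 2 - h) * (a - b)) := by
      rw [← Real.exp_add, h_exp]; ring
    linear_combination (κ * a) * e₁ + (κ' * b) * e₂ + (κ' * a) * e₃ + (κ * b) * e₄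
  have h_minus := mul_exp_add_mul_exp_neg_le ha hb (s := 1 / 2 - h) (by linarith) (by linarith)
  have h_plus := mul_exp_add_mul_exp_neg_le ha hb (s := 1 / 2 + h) (by linarith) (by linarith)
  have h_bound : 0 ≤ (a + b) * Real.exp ((a - b) ^ 2 / 2) := by positivity
  rw [h_regroup]
  calc _ ≤ E * (κ * ((a + b) * Real.exp ((a - b) ^ 2 / 2)) +
          κ' * ((a + b) * Real.exp ((a - b) ^ 2 / 2))) / 2 := by gcongr
    _ ≤ E * ((a + b) * Real.exp ((a - b) ^ 2 / 2)) / 2 := by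
      rw [← add_mul]
      have := mul_le_of_le_one_left h_bound h_add
      gcongr
    _ = _ := by ring

lemma trackRound_tagPotential_le_of_lt (m : Matching n) {y : Fin n → ℝ} (hy : 0 ≤ y) {u : Fin n}
    (hu : u < m.f u) (x : Load n) :
    trackRound m (tagPotential y) u x ≤ tagPotential (m.matrix *ᵥ y) u x := by
  set v := m.f u with hv
  set ψ : Fin n → ℝ := fun w => y w * Real.exp (-y w)
  have hψ : ∀ w, 0 ≤ ψ w := fun w => mul_nonneg (hy w) (Real.exp_pos _).le
  have h_eq : ∀ φ : Orientation n, tagAverage m (tagPotential y) u (step m φ x) =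
      Real.exp ((m.matrix *ᵥ y) ⬝ᵥ centered x - y ⬝ᵥ y) *
        ((tagShare x u v (φ u v) * ψ u + tagShare x u v (!φ u v) * ψ v) * Real.exp (pairSum m
          fun u v => halfParity x u v * (y u - y v) * orientationSign (φ u v))) := fun φ => by
    rw [tagAverage_step_of_lt m _ φ x hu]
    simp only [tagPotential, dotProduct_centered_step, ← hv, ψ, sub_eq_add_neg, Real.exp_add]
    ring
  have h_half : ∀ u v, 0 ≤ halfParity x u v ∧ halfParity x u v ≤ 1 / 2 := fun u v => by
    rcases halfParity_eq_zero_or x u v with h | h <;> norm_num [h]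
  have h_parity : ∀ u v, (halfParity x u v * (y u - y v)) ^ 2 / 2 ≤ 1 / 2 * (y u - y v) ^ 2 :=
    fun u v => by
      rw [mul_pow]
      nlinarith [mul_le_mul_of_nonneg_right (halfParity_sq_le x u v) (sq_nonneg (y u - y v))]
  have h_pair := tilted_two_point_le (hy u) (hy v) (h_half u v).1 (h_half u v).2
    (tagShare_nonneg x u v true) (tagShare_nonneg x u v false) (tagShare_add_le_one x u v)
  simp only [trackRound_apply, h_eq, ← Finset.mul_expect]
  refine (mul_le_mul_of_nonneg_left (expect_mul_exp_pairSum_le m h_parity hu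
    (w := fun i => tagShare x u v i * ψ u + tagShare x u v (!i) * ψ v)
    (fun i => add_nonneg (mul_nonneg (tagShare_nonneg x u v i) (hψ u))
      (mul_nonneg (tagShare_nonneg x u v _) (hψ v)))
    (R := (y u + y v) / 2 * Real.exp (-((y u + y v) / 2)))
    (h_pair.trans_eq (by rw [← hv, one_div_mul_eq_div]))) (Real.exp_pos _).le).trans_eq ?_
  rw [← mul_pairSum, pairSum_sq_sub, tagPotential, m.matrix_mulVec_apply, ← hv,
    show (m.matrix *ᵥ y) ⬝ᵥ centered x - (y u + y v) / 2 - (m.matrix *ᵥ y) ⬝ᵥ (m.matrix *ᵥ y) =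
      ((m.matrix *ᵥ y) ⬝ᵥ centered x - y ⬝ᵥ y) + -((y u + y v) / 2) +
        1 / 2 * (2 * (y ⬝ᵥ y - (m.matrix *ᵥ y) ⬝ᵥ (m.matrix *ᵥ y))) by ring,
    Real.exp_add, Real.exp_add]
  ring

lemma trackRound_tagPotential_le_of_fixed (m : Matching n) {y : Fin n → ℝ} (hy : 0 ≤ y) {u : Fin n}
    (hu : m.f u = u) (x : Load n) :
    trackRound m (tagPotential y) u x ≤ tagPotential (m.matrix *ᵥ y) u x := by
  have hMy : (m.matrix *ᵥ y) u = y u := by rw [m.matrix_mulVec_apply, hu]; ring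
  have h_eq : ∀ x, tagPotential y u x =
      y u * Real.exp (-y u - 3 / 4 * (y ⬝ᵥ y)) * loadMoment y x := fun x => by
    rw [loadMoment, mul_assoc, ← Real.exp_add, tagPotential]
    ring_nf
  calc trackRound m (tagPotential y) u x
      ≤ roundOperator m (tagPotential y u) x :=
        Finset.expect_le_expect fun φ _ => tagAverage_of_fixed_le m hu (tagPotential_nonneg hy u _)
    _ = y u * Real.exp (-y u - 3 / 4 * (y ⬝ᵥ y)) * roundOperator m (loadMoment y) x := by
        simp only [roundOperator_apply, h_eq, Finset.mul_expect]
    _ ≤ y u * Real.exp (-y u - 3 / 4 * (y ⬝ᵥ y)) * loadMoment (m.matrix *ᵥ y) x :=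
        mul_le_mul_of_nonneg_left (roundOperator_loadMoment_le m y x)
          (mul_nonneg (hy u) (Real.exp_pos _).le)
    _ ≤ tagPotential (m.matrix *ᵥ y) u x := by
        rw [loadMoment, mul_assoc, ← Real.exp_add, tagPotential, hMy]
        have := matrix_mulVec_dotProduct_self_le m y
        exact mul_le_mul_of_nonneg_left (Real.exp_le_exp.2 (by linarith)) (hy u)

lemma trackRound_tagPotential_le (m : Matching n) {y : Fin n → ℝ} (hy : 0 ≤ y) :
    trackRound m (tagPotential y) ≤ tagPotential (m.matrix *ᵥ y) := by
  intro u x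
  rcases lt_trichotomy u (m.f u) with h | h | h
  · exact trackRound_tagPotential_le_of_lt m hy h x
  · exact trackRound_tagPotential_le_of_fixed m hy h.symm x
  · have h' := trackRound_tagPotential_le_of_lt m hy (u := m.f u) (by rwa [m.invol]) x
    rwa [trackRound_partner, tagPotential, m.matrix_mulVec_apply_f, ← tagPotential] at h'

lemma track_tagPotential_le (l : Schedule n) {y : Fin n → ℝ} (hy : 0 ≤ y) :
    track l (tagPotential y) ≤ tagPotential (transition l *ᵥ y) := by
  induction l using FreeMonoid.inductionOn' with
  | one => simp
  | of_mul m l ih =>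
    rw [track_of_mul, transition_of_mul_mulVec]
    exact (monotone_trackRound m ih).trans
      (trackRound_tagPotential_le m (transition_mulVec_nonneg l hy))

/-! ### Survival of the tagged token -/

/-- The heat kernel of `b` at `w`: the `w`-th column of the `k`-th power of its transition
matrix. -/
noncomputable def heat (b : Schedule n) (k : ℕ) (w : Fin n) : Fin n → ℝ :=
  transition (b ^ k) *ᵥ Pi.single w 1

/-- The exponential moment with rate `s` above the level `c` of the load averaged by the heat
kernel, where the center of the kernel is itself distributed by the heat kernel from `u`. -/
noncomputable def heatMoment (b : Schedule n) (s c : ℝ) (k : ℕ) (u : Fin n) (x : Load n) : ℝ :=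
  ∑ w, heat b k w u * Real.exp (s * (heat b k w ⬝ᵥ centered x - c))

lemma length_pow {α : Type*} (l : FreeMonoid α) (k : ℕ) : (l ^ k).length = k * l.length := by
  induction k with
  | zero => rw [pow_zero, FreeMonoid.length_one, zero_mul]
  | succ k ih => rw [pow_succ, FreeMonoid.length_mul, ih, add_one_mul]

lemma pow_ne_one {α : Type*} {l : FreeMonoid α} (hl : l ≠ 1) {k : ℕ} (hk : k ≠ 0) : l ^ k ≠ 1 := by
  rw [ne_eq, ← FreeMonoid.length_eq_zero, length_pow, mul_eq_zero, FreeMonoid.length_eq_zero]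
  tauto

lemma heat_nonneg (b : Schedule n) (k : ℕ) (w : Fin n) : 0 ≤ heat b k w :=
  transition_mulVec_nonneg _ (Pi.single_nonneg.2 zero_le_one)

lemma heat_zero (b : Schedule n) (w : Fin n) : heat b 0 w = Pi.single w 1 := by
  rw [heat, pow_zero, map_one, Matrix.one_mulVec]

lemma transition_pow_mulVec_heat (b : Schedule n) (j k : ℕ) (w : Fin n) :
    transition (b ^ j) *ᵥ heat b k w = heat b (j + k) w := by
  rw [heat, heat, Matrix.mulVec_mulVec, ← map_mul, ← pow_add]

lemma sum_heat_apply (b : Schedule n) (k : ℕ) (u : Fin n) : ∑ w, heat b k w u = 1 := by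
  simp only [heat, Matrix.mulVec_single_one, Matrix.col_apply]
  exact sum_row_of_mem_doublyStochastic (transition_mem_doublyStochastic _) u

lemma heatMoment_nonneg (b : Schedule n) (s c : ℝ) (k : ℕ) (u : Fin n) (x : Load n) :
    0 ≤ heatMoment b s c k u x :=
  Finset.sum_nonneg fun w _ => mul_nonneg (heat_nonneg b k w u) (Real.exp_pos _).le

lemma exp_mul_le_exp_mul_add {s β : ℝ} (hs : 0 ≤ s) (hsβ : s ≤ β) (c z : ℝ) :
    Real.exp (s * z) ≤ Real.exp (s * c) * (1 + Real.exp (β * (z - c))) := by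
  rw [show s * z = s * c + s * (z - c) by ring, Real.exp_add]
  gcongr
  have h_pos := Real.exp_pos (β * (z - c))
  rcases le_total z c with hz | hz
  · have : Real.exp (s * (z - c)) ≤ 1 :=
      Real.exp_le_one_iff.2 (mul_nonpos_of_nonneg_of_nonpos hs (by linarith))
    linarith
  · have : Real.exp (s * (z - c)) ≤ Real.exp (β * (z - c)) :=
      Real.exp_le_exp.2 (mul_le_mul_of_nonneg_right hsβ (by linarith))
    linarith

lemma track_sum_tagPotential_heat_le (b : Schedule n) {s β : ℝ} (hs : 0 ≤ s) (hsβ : s ≤ β) (c : ℝ)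
    (j k : ℕ) (u : Fin n) (x : Load n) :
    track (b ^ k) (∑ w, tagPotential (s • heat b j w)) u x ≤
      s * Real.exp (s * c) * (1 + heatMoment b β c (k + j) u x) := by
  have h_term : ∀ w, track (b ^ k) (tagPotential (s • heat b j w)) u x ≤
      s * Real.exp (s * c) * (heat b (k + j) w u +
        heat b (k + j) w u * Real.exp (β * (heat b (k + j) w ⬝ᵥ centered x - c))) := fun w => by
    have h_nonneg : ∀ i, 0 ≤ s • heat b i w := fun i => smul_nonneg hs (heat_nonneg b i w)
    refine (track_tagPotential_le (b ^ k) (h_nonneg j) u x).trans ?_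
    rw [Matrix.mulVec_smul, transition_pow_mulVec_heat]
    refine (tagPotential_le_mul_exp (h_nonneg _) u x).trans ?_
    rw [smul_dotProduct, Pi.smul_apply, smul_eq_mul, smul_eq_mul]
    refine (mul_le_mul_of_nonneg_left (exp_mul_le_exp_mul_add hs hsβ c _)
      (mul_nonneg hs (heat_nonneg b (k + j) w u))).trans_eq ?_
    ring
  rw [map_sum, Finset.sum_apply, Finset.sum_apply]
  refine (Finset.sum_le_sum fun w _ => h_term w).trans_eq ?_
  rw [← Finset.mul_sum, Finset.sum_add_distrib, sum_heat_apply, heatMoment]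

lemma track_pow_one_le {b : Schedule n} {k : ℕ} (hb : b ^ k ≠ 1) {s : ℝ} (hs : 1 ≤ s) (u : Fin n)
    (x : Load n) : track (b ^ k) 1 u x ≤ Real.exp (-1) * (1 + heatMoment b s 2 k u x) := by
  have h_start : ∀ u x, 0 < excess x u → (1 : Fin n → Load n → ℝ) u x ≤
      (Real.exp (-3) • ∑ w, tagPotential ((1 : ℝ) • heat b 0 w)) u x := fun u x hx => by
    have h_self : tagPotential ((1 : ℝ) • heat b 0 u) u x = Real.exp (centered x u - 2) := by
      simp only [heat_zero, one_smul, tagPotential, single_one_dotProduct, Pi.single_eq_same]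
      ring_nf
    have h_single : tagPotential ((1 : ℝ) • heat b 0 u) u x ≤
        ∑ w, tagPotential ((1 : ℝ) • heat b 0 w) u x :=
      Finset.single_le_sum (f := fun w => tagPotential ((1 : ℝ) • heat b 0 w) u x)
        (fun w _ => tagPotential_nonneg (smul_nonneg zero_le_one (heat_nonneg b 0 w)) u x)
        (Finset.mem_univ u)
    simp only [Pi.one_apply, Pi.smul_apply, Finset.sum_apply, smul_eq_mul]
    calc (1 : ℝ) ≤ Real.exp (-3) * Real.exp (centered x u - 2) := by
          rw [← Real.exp_add]
          exact Real.one_le_exp (by linarith [excess_pos.1 hx])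
      _ ≤ _ := by
          rw [← h_self]
          gcongr
  refine (track_le_of_excess_pos hb h_start u x).trans ?_
  have h := track_sum_tagPotential_heat_le b zero_le_one hs 2 0 k u x
  rw [map_smul, Pi.smul_apply, Pi.smul_apply, smul_eq_mul]
  refine (mul_le_mul_of_nonneg_left h (Real.exp_pos _).le).trans_eq ?_
  rw [one_mul, one_mul, ← mul_assoc, ← Real.exp_add, add_zero]
  norm_num

lemma heatMoment_le_sum_tagPotential (b : Schedule n) {s : ℝ} (hs : 0 < s) {j : ℕ}
    (h_spread : ∀ w, s ^ 2 * (heat b j w ⬝ᵥ heat b j w) ≤ 1) (u : Fin n) (x : Load n) :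
    heatMoment b s 2 j u x ≤
      ∑ w, Real.exp (2 - 2 * s) / s * tagPotential (s • heat b j w) u x := by
  refine Finset.sum_le_sum fun w _ => ?_
  have h_coord : heat b j w u * heat b j w u ≤ heat b j w ⬝ᵥ heat b j w :=
    Finset.single_le_sum (f := fun u => heat b j w u * heat b j w u)
      (fun _ _ => mul_self_nonneg _) (Finset.mem_univ u)
  have h_small : s * heat b j w u ≤ 1 := by
    refine (sq_le_one_iff₀ (mul_nonneg hs.le (heat_nonneg b j w u))).1 ?_
    nlinarith [h_spread w, mul_le_mul_of_nonneg_left h_coord (sq_nonneg s)]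
  have h_exp : s * (heat b j w ⬝ᵥ centered x - 2) ≤ 2 - 2 * s + (s * (heat b j w ⬝ᵥ centered x) -
      s * heat b j w u - s * (s * (heat b j w ⬝ᵥ heat b j w))) := by
    linarith [h_spread w]
  calc _ ≤ heat b j w u * (Real.exp (2 - 2 * s) * Real.exp (s * (heat b j w ⬝ᵥ centered x) -
          s * heat b j w u - s * (s * (heat b j w ⬝ᵥ heat b j w)))) := by
        rw [← Real.exp_add]
        exact mul_le_mul_of_nonneg_left (Real.exp_le_exp.2 h_exp) (heat_nonneg b j w u)
    _ = _ := by
        simp only [tagPotential, smul_dotProduct, dotProduct_smul, Pi.smul_apply, smul_eq_mul]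
        field_simp

lemma track_pow_heatMoment_le (b : Schedule n) {s β : ℝ} (hs : 0 < s) (hsβ : s ≤ β) {j : ℕ}
    (h_spread : ∀ w, s ^ 2 * (heat b j w ⬝ᵥ heat b j w) ≤ 1) (k : ℕ) (u : Fin n) (x : Load n) :
    track (b ^ k) (heatMoment b s 2 j) u x ≤
      Real.exp (2 - s) * (1 + heatMoment b β 1 (k + j) u x) := by
  have h_le : heatMoment b s 2 j ≤
      (Real.exp (2 - 2 * s) / s) • ∑ w, tagPotential (s • heat b j w) := fun u x => by
    simpa only [Pi.smul_apply, Finset.sum_apply, smul_eq_mul, Finset.mul_sum] using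
      heatMoment_le_sum_tagPotential b hs h_spread u x
  refine (monotone_track (b ^ k) h_le u x).trans ?_
  rw [map_smul, Pi.smul_apply, Pi.smul_apply, smul_eq_mul]
  refine (mul_le_mul_of_nonneg_left (track_sum_tagPotential_heat_le b hs.le hsβ 1 j k u x)
    (by positivity)).trans_eq ?_
  rw [show 2 - s = 2 - 2 * s + s * 1 by ring, Real.exp_add]
  field_simp

/-- A block: the word `b` is repeated `Δ` times, which makes it contract, and then `J` times for as
long as it takes its heat kernel to spread out. -/
def block (b : Schedule n) (J Δ Δ₁ : ℕ) : Schedule n := b ^ (Δ + J * Δ₁)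

/-- The mixing assumptions under which a block destroys excess tokens: the heat kernels spread out
within `Δ₁` repetitions of `b`, and `Δ` repetitions contract balanced vectors by the factor `β`. -/
structure IsMixing (b : Schedule n) (J Δ Δ₁ : ℕ) (β : ℝ) : Prop where
  ne_one : b ≠ 1
  three_le : 3 ≤ J
  one_le_gap : 1 ≤ Δ₁
  spread : ∀ k ≥ Δ₁, ∀ w, (J : ℝ) ^ 2 * (heat b k w ⬝ᵥ heat b k w) ≤ 1
  contract : ∀ k ≥ Δ, ∀ y : Fin n → ℝ, ∑ u, y u = 0 →
    (transition (b ^ k) *ᵥ y) ⬝ᵥ (transition (b ^ k) *ᵥ y) * β ^ 2 ≤ y ⬝ᵥ y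
  le_rate : J + (block b J Δ Δ₁).length * ((J : ℝ) - 3) ≤ β

/-- The quantity that must exceed `1` for the tagged token to be likely to survive a block. -/
noncomputable def obstruction (b : Schedule n) (J Δ Δ₁ : ℕ) (β : ℝ) (u : Fin n) (x : Load n) : ℝ :=
  ∑ j ∈ Finset.range J, heatMoment b β 1 (Δ + (j + 1) * Δ₁) u x

lemma obstruction_nonneg (b : Schedule n) (J Δ Δ₁ : ℕ) (β : ℝ) (u : Fin n) (x : Load n) :
    0 ≤ obstruction b J Δ Δ₁ β u x :=
  Finset.sum_nonneg fun _ _ => heatMoment_nonneg b β 1 _ u x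

namespace IsMixing

variable {b : Schedule n} {J Δ Δ₁ : ℕ} {β : ℝ}

lemma natCast_le_rate (H : IsMixing b J Δ Δ₁ β) : (J : ℝ) ≤ β := by
  have hJ : (3 : ℝ) ≤ J := by exact_mod_cast H.three_le
  have : 0 ≤ (block b J Δ Δ₁).length * ((J : ℝ) - 3) := mul_nonneg (by positivity) (by linarith)
  linarith [H.le_rate]

lemma track_pow_add_le (H : IsMixing b J Δ Δ₁ β) {k : ℕ} {u : Fin n} {x : Load n}
    (h_moment : heatMoment b β 1 (k + Δ₁) u x ≤ 1) :
    track (b ^ (k + Δ₁)) 1 u x ≤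
      Real.exp (-1) * (track (b ^ k) 1 u x + 2 * Real.exp (2 - J)) := by
  have hJ : (3 : ℝ) ≤ J := by exact_mod_cast H.three_le
  have h_ne : b ^ Δ₁ ≠ 1 := pow_ne_one H.ne_one (Nat.ne_of_gt H.one_le_gap)
  have h_last : track (b ^ Δ₁) 1 ≤ Real.exp (-1) • (1 + heatMoment b J 2 Δ₁) :=
    fun u x => track_pow_one_le h_ne (by linarith) u x
  have h_first := track_pow_heatMoment_le b (by linarith) H.natCast_le_rate
    (H.spread Δ₁ le_rfl) k u x
  have h_split := monotone_track (b ^ k) h_last u x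
  rw [pow_add, map_mul, Module.End.mul_apply]
  rw [map_smul, map_add, Pi.smul_apply, Pi.smul_apply, Pi.add_apply, Pi.add_apply,
    smul_eq_mul] at h_split
  refine h_split.trans ?_
  gcongr
  nlinarith [Real.exp_pos (2 - J)]

lemma heatMoment_le_one {u : Fin n} {x : Load n} (hS : obstruction b J Δ Δ₁ β u x ≤ 1) {j : ℕ}
    (hj : j < J) : heatMoment b β 1 (Δ + (j + 1) * Δ₁) u x ≤ 1 :=
  (Finset.single_le_sum (f := fun j => heatMoment b β 1 (Δ + (j + 1) * Δ₁) u x)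
    (fun _ _ => heatMoment_nonneg b β 1 _ u x) (Finset.mem_range.2 hj)).trans hS

lemma track_pow_le_exp_neg_add (H : IsMixing b J Δ Δ₁ β) {u : Fin n} {x : Load n}
    (hS : obstruction b J Δ Δ₁ β u x ≤ 1) {j : ℕ} (hj : j ≤ J) :
    track (b ^ (Δ + j * Δ₁)) 1 u x ≤ Real.exp (-j) + 4 * Real.exp (1 - J) := by
  induction j with
  | zero =>
    have h_one : track (b ^ (Δ + 0 * Δ₁)) 1 u x ≤ 1 := track_one_le _ u x
    have := Real.exp_pos (1 - (J : ℝ))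
    rw [Nat.cast_zero, neg_zero, Real.exp_zero]
    linarith
  | succ j ih =>
    have h_index : Δ + (j + 1) * Δ₁ = Δ + j * Δ₁ + Δ₁ := by ring
    have h_moment := heatMoment_le_one hS hj
    rw [h_index] at h_moment ⊢
    have h_two : Real.exp (2 - (J : ℝ)) = Real.exp 1 * Real.exp (1 - J) := by
      rw [← Real.exp_add]
      ring_nf
    have h_succ : Real.exp (-((j + 1 : ℕ) : ℝ)) = Real.exp (-1) * Real.exp (-j) := by
      rw [← Real.exp_add]
      push_cast
      ring_nf
    have h_inv : Real.exp (-1) * Real.exp 1 = 1 := by rw [← Real.exp_add]; norm_num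
    have h_half : Real.exp (-1) ≤ 1 / 2 := by
      nlinarith [Real.add_one_le_exp 1, Real.exp_pos (-1)]
    calc _ ≤ Real.exp (-1) * (track (b ^ (Δ + j * Δ₁)) 1 u x + 2 * Real.exp (2 - J)) :=
          H.track_pow_add_le h_moment
      _ ≤ Real.exp (-1) * (Real.exp (-j) + 4 * Real.exp (1 - J) + 2 * Real.exp (2 - J)) := by
          gcongr
          exact ih (Nat.le_of_succ_le hj)
      _ = Real.exp (-1) * Real.exp (-j) + (4 * Real.exp (-1) + 2) * Real.exp (1 - J) := by
          rw [h_two]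
          linear_combination 2 * Real.exp (1 - J) * h_inv
      _ ≤ _ := by
          rw [h_succ]
          gcongr
          linarith

lemma track_block_le (H : IsMixing b J Δ Δ₁ β) {u : Fin n} {x : Load n}
    (hS : obstruction b J Δ Δ₁ β u x ≤ 1) :
    track (block b J Δ Δ₁) 1 u x ≤ Real.exp (3 - J) := by
  refine (H.track_pow_le_exp_neg_add hS le_rfl).trans ?_
  have h_three : Real.exp (3 - (J : ℝ)) = Real.exp 1 ^ 3 * Real.exp (-J) := by
    rw [← Real.exp_nat_mul, ← Real.exp_add]
    ring_nf
  have h_one : Real.exp (1 - (J : ℝ)) = Real.exp 1 * Real.exp (-J) := by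
    rw [← Real.exp_add, sub_eq_add_neg]
  have h_e : 2.7 ≤ Real.exp 1 := by linarith [Real.exp_one_gt_d9]
  rw [h_three, h_one, ← mul_assoc, ← one_add_mul]
  gcongr
  nlinarith [mul_self_nonneg (Real.exp 1 - 2.7)]

end IsMixing

/-! ### Weights that pay for the obstruction -/

lemma vecMul_pos_of_mem_doublyStochastic {M : Matrix (Fin n) (Fin n) ℝ}
    (hM : M ∈ doublyStochastic ℝ (Fin n)) {Z : Fin n → ℝ} (hZ : ∀ u, 0 < Z u) (u : Fin n) :
    0 < (Z ᵥ* M) u := by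
  have h_nonneg : ∀ v, 0 ≤ M v u := fun v => nonneg_of_mem_doublyStochastic hM
  obtain ⟨v, -, hv⟩ : ∃ v ∈ Finset.univ, 0 < M v u := by
    refine Finset.exists_lt_of_sum_lt (f := fun _ => (0 : ℝ)) ?_
    rw [Finset.sum_const_zero, sum_col_of_mem_doublyStochastic hM]
    exact one_pos
  refine Finset.sum_pos' (fun v _ => mul_nonneg (hZ v).le (h_nonneg v))
    ⟨v, Finset.mem_univ v, mul_pos (hZ v) hv⟩

lemma trackRound_mul_of_invariant (m : Matching n) {c : Fin n → ℝ} (hc : ∀ u, c (m.f u) = c u)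
    (F : Fin n → Load n → ℝ) (u : Fin n) (x : Load n) :
    trackRound m (fun u x => c u * F u x) u x = c u * trackRound m F u x := by
  simp only [trackRound_apply, Finset.mul_expect, tagAverage, hc]
  refine Finset.expect_congr rfl fun φ _ => ?_
  ring

lemma matrix_mulVec_rpow_neg_le (m : Matching n) {Z : Fin n → ℝ} (hZ : ∀ u, 0 < Z u) {a : ℝ}
    (ha : 0 ≤ a) (u : Fin n) : (m.matrix *ᵥ Z) u ^ (-a) ≤ 2 ^ a * Z u ^ (-a) := by
  have h_half : Z u / 2 ≤ (m.matrix *ᵥ Z) u := by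
    rw [m.matrix_mulVec_apply]
    linarith [hZ (m.f u)]
  refine (Real.rpow_le_rpow_of_nonpos (half_pos (hZ u)) h_half (neg_nonpos.2 ha)).trans_eq ?_
  rw [Real.div_rpow (hZ u).le zero_le_two, Real.rpow_neg zero_le_two, div_inv_eq_mul, mul_comm]

lemma track_vecMul_rpow_neg_le (l : Schedule n) {a : ℝ} (ha : 0 ≤ a) {Z : Fin n → ℝ}
    (hZ : ∀ u, 0 < Z u) (u : Fin n) (x : Load n) :
    track l (fun u _ => (Z ᵥ* transition l) u ^ (-a)) u x ≤
      2 ^ (a * l.length) * Z u ^ (-a) * track l 1 u x := by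
  induction l using FreeMonoid.inductionOn' generalizing Z u x with
  | one => simp
  | of_mul m l ih =>
    have h_pos : ∀ u, 0 < (m.matrix *ᵥ Z) u := fun u => by
      rw [m.matrix_mulVec_apply]
      linarith [hZ u, hZ (m.f u)]
    have h_vecMul : Z ᵥ* transition (.of m * l) = (m.matrix *ᵥ Z) ᵥ* transition l := by
      rw [map_mul, ← Matrix.vecMul_vecMul, ← m.vecMul_matrix, transition, FreeMonoid.lift_eval_of]
    rw [track_of_mul, h_vecMul, track_of_mul]
    refine (monotone_trackRound m (fun u x => ih h_pos u x) u x).trans ?_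
    rw [trackRound_mul_of_invariant m fun u => by rw [m.matrix_mulVec_apply_f]]
    have h_nonneg : 0 ≤ trackRound m (track l 1) u x := by
      rw [← track_of_mul]
      exact track_nonneg _ zero_le_one u x
    refine mul_le_mul_of_nonneg_right ?_ h_nonneg
    refine (mul_le_mul_of_nonneg_left (matrix_mulVec_rpow_neg_le m hZ ha u)
      (by positivity)).trans_eq ?_
    rw [← mul_assoc, ← Real.rpow_add two_pos, FreeMonoid.length_mul, FreeMonoid.length_of]
    push_cast
    ring_nf

/-- A load vector together with a positive weight for every node. The weights are deterministic
functions of the past loads that grow where the obstruction has been large. -/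
abbrev WeightedLoad (n : ℕ) := Load n × {Z : Fin n → ℝ // ∀ u, 0 < Z u}

/-- The logarithm of the price of the obstruction: large enough for a node of obstruction at least
`1` to gain the weight that compensates for the survival of its tokens. -/
noncomputable def price (b : Schedule n) (J Δ Δ₁ : ℕ) : ℝ :=
  (block b J Δ Δ₁).length * ((J : ℝ) - 3)

/-- The weights after a block: each node pays for its obstruction, then the weights are averaged
along the block. -/
noncomputable def reweight (b : Schedule n) (J Δ Δ₁ : ℕ) (β : ℝ) (s : WeightedLoad n) :
    {Z : Fin n → ℝ // ∀ u, 0 < Z u} :=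
  ⟨(fun u => s.2.1 u * (1 + Real.exp (price b J Δ Δ₁) * obstruction b J Δ Δ₁ β u s.1)) ᵥ*
      transition (block b J Δ Δ₁),
    vecMul_pos_of_mem_doublyStochastic (transition_mem_doublyStochastic _) fun u =>
      mul_pos (s.2.2 u) (add_pos_of_pos_of_nonneg one_pos
        (mul_nonneg (Real.exp_pos _).le (obstruction_nonneg b J Δ Δ₁ β u s.1)))⟩

/-- The Markov operator of a block on weighted load vectors. -/
noncomputable def blockOperator (b : Schedule n) (J Δ Δ₁ : ℕ) (β : ℝ) :
    Module.End ℝ (WeightedLoad n → ℝ) where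
  toFun g s := evolve (block b J Δ Δ₁) (fun x => g (x, reweight b J Δ Δ₁ β s)) s.1
  map_add' _ _ := funext fun s => congrFun (map_add (evolve _) _ _) s.1
  map_smul' _ _ := funext fun s => congrFun (map_smul (evolve _) _ _) s.1

/-- The expectation of a function of the weighted load after running the schedule `l` from `x` while
all weights stay `1`. -/
noncomputable def unitWeightExpectation (l : Schedule n) (x : Load n) :
    (WeightedLoad n → ℝ) →ₗ[ℝ] ℝ :=
  LinearMap.proj x ∘ₗ evolve l ∘ₗ LinearMap.funLeft ℝ ℝ fun x => (x, ⟨1, fun _ => one_pos⟩)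

section

variable (b : Schedule n) (J Δ Δ₁ : ℕ) (β : ℝ)

lemma monotone_blockOperator : Monotone (blockOperator b J Δ Δ₁ β) :=
  fun _ _ h s => monotone_evolve _ (fun _ => h _) s.1

lemma monotone_blockOperator_pow (k : ℕ) : Monotone (blockOperator b J Δ Δ₁ β ^ k) := by
  rw [Module.End.coe_pow]
  exact (monotone_blockOperator b J Δ Δ₁ β).iterate k

lemma unitWeightExpectation_apply (l : Schedule n) (x : Load n) (g : WeightedLoad n → ℝ) :
    unitWeightExpectation l x g = evolve l (fun x => g (x, ⟨1, fun _ => one_pos⟩)) x := rfl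

lemma monotone_unitWeightExpectation (l : Schedule n) (x : Load n) :
    Monotone (unitWeightExpectation l x) :=
  fun _ _ h => monotone_evolve l (fun _ => h _) x

lemma blockOperator_pow_comp_fst (k : ℕ) (f : Load n → ℝ) :
    (blockOperator b J Δ Δ₁ β ^ k) (f ∘ Prod.fst) =
      evolve (block b J Δ Δ₁ ^ k) f ∘ Prod.fst := by
  induction k with
  | zero => simp
  | succ k ih =>
    rw [pow_succ', pow_succ', Module.End.mul_apply, ih, map_mul]
    rfl

lemma unitWeightExpectation_blockOperator_pow_comp_fst (l : Schedule n) (x : Load n) (k : ℕ)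
    (f : Load n → ℝ) :
    unitWeightExpectation l x ((blockOperator b J Δ Δ₁ β ^ k) (f ∘ Prod.fst)) =
      evolve (l * block b J Δ Δ₁ ^ k) f x := by
  rw [blockOperator_pow_comp_fst, map_mul]
  rfl

end

/-- The total excess, discounted by the power `-a` of the weights. -/
noncomputable def discountedExcess (a : ℝ) (s : WeightedLoad n) : ℝ :=
  ∑ u, excess s.1 u * s.2.1 u ^ (-a)

lemma pow_apply_le_smul_of_le {α : Type*} {T : Module.End ℝ (α → ℝ)} (hT : Monotone T)
    {f : α → ℝ} {c : ℝ} (hc : 0 ≤ c) (hf : T f ≤ c • f) (k : ℕ) : (T ^ k) f ≤ c ^ k • f := by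
  induction k with
  | zero => simp
  | succ k ih =>
    calc (T ^ (k + 1)) f = T ((T ^ k) f) := by rw [pow_succ', Module.End.mul_apply]
      _ ≤ c ^ k • T f := by
        rw [← map_smul]
        exact hT ih
      _ ≤ c ^ k • c • f := smul_le_smul_of_nonneg_left hf (pow_nonneg hc k)
      _ = c ^ (k + 1) • f := by rw [smul_smul, pow_succ]

namespace IsMixing

variable {b : Schedule n} {J Δ Δ₁ : ℕ} {β : ℝ}

lemma length_block_pos (H : IsMixing b J Δ Δ₁ β) : 0 < (block b J Δ Δ₁).length := by
  have h_gap := H.one_le_gap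
  have h_three := H.three_le
  refine Nat.pos_of_ne_zero fun h => pow_ne_one H.ne_one ?_ (FreeMonoid.length_eq_zero.1 h)
  positivity

lemma one_add_obstruction_rpow_mul_track_le (H : IsMixing b J Δ Δ₁ β) (u : Fin n) (x : Load n) :
    (1 + Real.exp (price b J Δ Δ₁) * obstruction b J Δ Δ₁ β u x) ^
        (-((block b J Δ Δ₁).length : ℝ)⁻¹) * track (block b J Δ Δ₁) 1 u x ≤ Real.exp (3 - J) := by
  have h_obs := obstruction_nonneg b J Δ Δ₁ β u x
  have h_track : 0 ≤ track (block b J Δ Δ₁) 1 u x := track_nonneg _ zero_le_one u x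
  have h_len : (0 : ℝ) < (block b J Δ Δ₁).length := by exact_mod_cast H.length_block_pos
  have h_exponent : -((block b J Δ Δ₁).length : ℝ)⁻¹ ≤ 0 := neg_nonpos.2 (inv_pos.2 h_len).le
  rcases le_total (obstruction b J Δ Δ₁ β u x) 1 with hS | hS
  · refine (mul_le_of_le_one_left h_track
      (Real.rpow_le_one_of_one_le_of_nonpos ?_ h_exponent)).trans (H.track_block_le hS)
    exact le_add_of_nonneg_right (by positivity)
  · have h_price : Real.exp (price b J Δ Δ₁) ≤
        1 + Real.exp (price b J Δ Δ₁) * obstruction b J Δ Δ₁ β u x := by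
      nlinarith [Real.exp_pos (price b J Δ Δ₁)]
    refine (mul_le_of_le_one_right (by positivity) (track_one_le _ u x)).trans
      ((Real.rpow_le_rpow_of_nonpos (Real.exp_pos _) h_price h_exponent).trans_eq ?_)
    rw [← Real.exp_mul, price]
    congr 1
    field_simp
    ring

lemma blockOperator_discountedExcess_le (H : IsMixing b J Δ Δ₁ β) :
    blockOperator b J Δ Δ₁ β (discountedExcess ((block b J Δ Δ₁).length : ℝ)⁻¹) ≤
      (2 * Real.exp (3 - J)) • discountedExcess ((block b J Δ Δ₁).length : ℝ)⁻¹ := by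
  rintro ⟨x, Z, hZ⟩
  set a := ((block b J Δ Δ₁).length : ℝ)⁻¹ with ha
  set W := fun u => Z u * (1 + Real.exp (price b J Δ Δ₁) * obstruction b J Δ Δ₁ β u x)
  have h_factor : ∀ u, 0 < 1 + Real.exp (price b J Δ Δ₁) * obstruction b J Δ Δ₁ β u x := fun u =>
    add_pos_of_pos_of_nonneg one_pos
      (mul_nonneg (Real.exp_pos _).le (obstruction_nonneg b J Δ Δ₁ β u x))
  have hW : ∀ u, 0 < W u := fun u => mul_pos (hZ u) (h_factor u)
  have h_two : (2 : ℝ) ^ (a * (block b J Δ Δ₁).length) = 2 := by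
    rw [ha, inv_mul_cancel₀ (by exact_mod_cast H.length_block_pos.ne'), Real.rpow_one]
  have h_track : ∀ u, track (block b J Δ Δ₁)
      (fun u _ => (W ᵥ* transition (block b J Δ Δ₁)) u ^ (-a)) u x ≤
        2 * Real.exp (3 - J) * Z u ^ (-a) := fun u => by
    refine (track_vecMul_rpow_neg_le _ (by positivity) hW u x).trans ?_
    rw [h_two, Real.mul_rpow (hZ u).le (h_factor u).le]
    calc _ = 2 * Z u ^ (-a) * ((1 + Real.exp (price b J Δ Δ₁) * obstruction b J Δ Δ₁ β u x) ^ (-a) *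
          track (block b J Δ Δ₁) 1 u x) := by ring
      _ ≤ 2 * Z u ^ (-a) * Real.exp (3 - J) :=
        mul_le_mul_of_nonneg_left (H.one_add_obstruction_rpow_mul_track_le u x)
          (mul_nonneg zero_le_two (Real.rpow_nonneg (hZ u).le _))
      _ = _ := by ring
  refine (evolve_sum_excess_le _ (fun u _ => Real.rpow_nonneg
    (vecMul_pos_of_mem_doublyStochastic (transition_mem_doublyStochastic _) hW u).le _) x).trans ?_
  simp only [Pi.smul_apply, discountedExcess, smul_eq_mul, Finset.mul_sum]
  refine Finset.sum_le_sum fun u _ => ?_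
  rw [mul_left_comm]
  exact mul_le_mul_of_nonneg_left (h_track u) (excess_nonneg x u)

lemma unitWeightExpectation_discountedExcess_le (H : IsMixing b J Δ Δ₁ β) (l : Schedule n)
    (x : Load n) (k : ℕ) :
    unitWeightExpectation l x ((blockOperator b J Δ Δ₁ β ^ k)
        (discountedExcess ((block b J Δ Δ₁).length : ℝ)⁻¹)) ≤
      (2 * Real.exp (3 - J)) ^ k * ∑ u, excess x u := by
  have h_pow := pow_apply_le_smul_of_le (monotone_blockOperator b J Δ Δ₁ β)
    (by positivity) H.blockOperator_discountedExcess_le k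
  refine (monotone_unitWeightExpectation l x h_pow).trans ?_
  rw [map_smul, smul_eq_mul]
  refine mul_le_mul_of_nonneg_left ?_ (by positivity)
  simp only [unitWeightExpectation_apply, discountedExcess, Pi.one_apply, Real.one_rpow]
  refine (evolve_sum_excess_le l (F := 1) zero_le_one x).trans ?_
  exact Finset.sum_le_sum fun u _ => mul_le_of_le_one_right (excess_nonneg x u) (track_one_le l u x)

end IsMixing

/-! ### The weights stay small -/

/-- The balanced vectors of norm at most `2`: the directions in which exponential moments of the
load are controlled. -/
def tilts (n : ℕ) : Set (Fin n → ℝ) := {y | ∑ u, y u = 0 ∧ y ⬝ᵥ y ≤ 4}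

/-- The weight of `u` times the exponential moment of the load in direction `y`. -/
noncomputable def weightedMoment (u : Fin n) (y : Fin n → ℝ) (s : WeightedLoad n) : ℝ :=
  s.2.1 u * Real.exp (y ⬝ᵥ centered s.1)

lemma dotProduct_self_nonneg (y : Fin n → ℝ) : 0 ≤ y ⬝ᵥ y :=
  Finset.sum_nonneg fun _ _ => mul_self_nonneg _

lemma sum_centered (x : Load n) : ∑ u, centered x u = 0 := by
  rcases n.eq_zero_or_pos with rfl | hn
  · exact Finset.sum_empty
  · have : (n : ℝ) ≠ 0 := by positivity
    simp only [centered, Finset.sum_sub_distrib, Finset.sum_const, Finset.card_univ,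
      Fintype.card_fin, nsmul_eq_mul]
    field_simp
    ring

lemma sum_transition_mulVec (l : Schedule n) (y : Fin n → ℝ) :
    ∑ u, (transition l *ᵥ y) u = ∑ u, y u := by
  rw [← one_dotProduct, ← one_dotProduct, Matrix.dotProduct_mulVec,
    one_vecMul_of_mem_doublyStochastic (transition_mem_doublyStochastic l)]

lemma transition_mulVec_one (l : Schedule n) : transition l *ᵥ 1 = 1 :=
  mulVec_one_of_mem_doublyStochastic (transition_mem_doublyStochastic l)

lemma evolve_exp_dotProduct_le (l : Schedule n) {y : Fin n → ℝ} (hy : y ∈ tilts n) (x : Load n) :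
    evolve l (fun x => Real.exp (y ⬝ᵥ centered x)) x ≤
      Real.exp 1 * Real.exp ((transition l *ᵥ y) ⬝ᵥ centered x) := by
  have h_moment : (fun x => Real.exp (y ⬝ᵥ centered x)) = Real.exp (y ⬝ᵥ y / 4) • loadMoment y := by
    ext x
    rw [Pi.smul_apply, loadMoment, smul_eq_mul, ← Real.exp_add]
    ring_nf
  rw [h_moment, map_smul, Pi.smul_apply, smul_eq_mul]
  refine mul_le_mul (Real.exp_le_exp.2 (by linarith [hy.2])) ((evolve_loadMoment_le l y x).trans ?_)
    ?_ (Real.exp_pos 1).le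
  · refine Real.exp_le_exp.2 (sub_le_self _ ?_)
    linarith [dotProduct_self_nonneg (transition l *ᵥ y)]
  · have h_nonneg : (0 : Load n → ℝ) ≤ loadMoment y := fun _ => (Real.exp_pos _).le
    simpa only [map_zero, Pi.zero_apply] using monotone_evolve l h_nonneg x

lemma vecMul_transition_pow_apply (b : Schedule n) (k : ℕ) (Z : Fin n → ℝ) (u : Fin n) :
    (Z ᵥ* transition (b ^ k)) u = ∑ v, heat b k u v * Z v := by
  simp only [heat, Matrix.mulVec_single_one, Matrix.col_apply, Matrix.vecMul, dotProduct,
    mul_comm]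

lemma sum_heat (b : Schedule n) (k : ℕ) (w : Fin n) : ∑ u, heat b k w u = 1 := by
  rw [heat, sum_transition_mulVec, Fintype.sum_pi_single']

lemma sum_heat_sub_inv (b : Schedule n) (k : ℕ) (w : Fin n) :
    ∑ u, (heat b k w - (n : ℝ)⁻¹ • 1) u = 0 := by
  have hn : (n : ℝ) ≠ 0 := by exact_mod_cast w.pos.ne'
  simp [Finset.sum_sub_distrib, sum_heat, hn]

lemma heat_sub_inv_dotProduct_centered (b : Schedule n) (k : ℕ) (w : Fin n) (x : Load n) :
    (heat b k w - (n : ℝ)⁻¹ • 1) ⬝ᵥ centered x = heat b k w ⬝ᵥ centered x := by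
  rw [sub_dotProduct, smul_dotProduct, one_dotProduct, sum_centered, smul_zero, sub_zero]

/-- The direction in which the heat kernel at `w` tilts the image of `y` under a block, at distance
`β` and projected to the balanced vectors. -/
noncomputable def tilt (b : Schedule n) (J Δ Δ₁ : ℕ) (β : ℝ) (y : Fin n → ℝ) (j : ℕ) (w : Fin n) :
    Fin n → ℝ :=
  transition (block b J Δ Δ₁) *ᵥ y + β • (heat b (Δ + (j + 1) * Δ₁) w - (n : ℝ)⁻¹ • 1)

lemma tilt_dotProduct_centered (b : Schedule n) (J Δ Δ₁ : ℕ) (β : ℝ) (y : Fin n → ℝ) (j : ℕ)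
    (w : Fin n) (x : Load n) : tilt b J Δ Δ₁ β y j w ⬝ᵥ centered x =
      (transition (block b J Δ Δ₁) *ᵥ y) ⬝ᵥ centered x +
        β * (heat b (Δ + (j + 1) * Δ₁) w ⬝ᵥ centered x) := by
  rw [tilt, add_dotProduct, smul_dotProduct, heat_sub_inv_dotProduct_centered, smul_eq_mul]

lemma exp_price_mul_obstruction_mul_exp (b : Schedule n) (J Δ Δ₁ : ℕ) (β : ℝ) (y : Fin n → ℝ)
    (v : Fin n) (x : Load n) :
    Real.exp (price b J Δ Δ₁) * obstruction b J Δ Δ₁ β v x *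
        Real.exp ((transition (block b J Δ Δ₁) *ᵥ y) ⬝ᵥ centered x) =
      Real.exp (price b J Δ Δ₁ - β) * ∑ j ∈ Finset.range J, ∑ w, heat b (Δ + (j + 1) * Δ₁) w v *
        Real.exp (tilt b J Δ Δ₁ β y j w ⬝ᵥ centered x) := by
  simp only [obstruction, heatMoment, Finset.mul_sum, Finset.sum_mul, tilt_dotProduct_centered]
  refine Finset.sum_congr rfl fun j _ => Finset.sum_congr rfl fun w _ => ?_
  rw [Real.exp_add, Real.exp_sub, mul_sub, Real.exp_sub, mul_one]
  field_simp

lemma blockOperator_weightedMoment_le (b : Schedule n) (J Δ Δ₁ : ℕ) (β : ℝ) (u : Fin n)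
    {y : Fin n → ℝ} (hy : y ∈ tilts n) : blockOperator b J Δ Δ₁ β (weightedMoment u y) ≤
      Real.exp 1 • ∑ v, heat b (Δ + J * Δ₁) u v •
        (weightedMoment v (transition (block b J Δ Δ₁) *ᵥ y) + Real.exp (price b J Δ Δ₁ - β) •
          ∑ j ∈ Finset.range J, ∑ w, heat b (Δ + (j + 1) * Δ₁) w v •
            weightedMoment v (tilt b J Δ Δ₁ β y j w)) := by
  rintro ⟨x, Z, hZ⟩
  have h_evolve : blockOperator b J Δ Δ₁ β (weightedMoment u y) (x, ⟨Z, hZ⟩) =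
      (reweight b J Δ Δ₁ β (x, ⟨Z, hZ⟩)).1 u *
        evolve (block b J Δ Δ₁) (fun x => Real.exp (y ⬝ᵥ centered x)) x :=
    congrFun (map_smul (evolve (block b J Δ Δ₁)) _ fun x => Real.exp (y ⬝ᵥ centered x)) x
  have h_weight : (reweight b J Δ Δ₁ β (x, ⟨Z, hZ⟩)).1 u = ∑ v, heat b (Δ + J * Δ₁) u v *
      (Z v * (1 + Real.exp (price b J Δ Δ₁) * obstruction b J Δ Δ₁ β v x)) :=
    vecMul_transition_pow_apply b _ _ u
  rw [h_evolve]
  refine (mul_le_mul_of_nonneg_left (evolve_exp_dotProduct_le _ hy x)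
    ((reweight b J Δ Δ₁ β (x, ⟨Z, hZ⟩)).2 u).le).trans_eq ?_
  rw [h_weight, mul_left_comm, Finset.sum_mul]
  simp only [Pi.smul_apply, Finset.sum_apply, Pi.add_apply, smul_eq_mul, weightedMoment]
  congr 1
  refine Finset.sum_congr rfl fun v _ => ?_
  rw [mul_assoc]
  congr 1
  calc _ = Z v * Real.exp ((transition (block b J Δ Δ₁) *ᵥ y) ⬝ᵥ centered x) + Z v *
        (Real.exp (price b J Δ Δ₁) * obstruction b J Δ Δ₁ β v x *
          Real.exp ((transition (block b J Δ Δ₁) *ᵥ y) ⬝ᵥ centered x)) := by ring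
    _ = _ := by
      rw [exp_price_mul_obstruction_mul_exp, mul_left_comm]
      simp only [Finset.mul_sum, mul_left_comm (Z v)]

namespace IsMixing

variable {b : Schedule n} {J Δ Δ₁ : ℕ} {β : ℝ}

lemma two_le_rate (H : IsMixing b J Δ Δ₁ β) : 2 ≤ β := by
  have hJ : (3 : ℝ) ≤ J := by exact_mod_cast H.three_le
  linarith [H.natCast_le_rate]

lemma transition_block_mulVec_mem_tilts (H : IsMixing b J Δ Δ₁ β) {y : Fin n → ℝ}
    (hy : y ∈ tilts n) : ∑ u, (transition (block b J Δ Δ₁) *ᵥ y) u = 0 ∧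
      (transition (block b J Δ Δ₁) *ᵥ y) ⬝ᵥ (transition (block b J Δ Δ₁) *ᵥ y) ≤ 1 := by
  refine ⟨(sum_transition_mulVec _ y).trans hy.1, ?_⟩
  have h_contract : _ * β ^ 2 ≤ _ := H.contract (Δ + J * Δ₁) (Nat.le_add_right _ _) y hy.1
  rw [← block] at h_contract
  have h_four : 4 ≤ β ^ 2 := by nlinarith [H.two_le_rate]
  have h_nonneg := dotProduct_self_nonneg (transition (block b J Δ Δ₁) *ᵥ y)
  nlinarith [hy.2]

lemma heat_sub_inv_dotProduct_self_le (H : IsMixing b J Δ Δ₁ β) {k : ℕ} (hk : Δ ≤ k) (w : Fin n) :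
    (heat b k w - (n : ℝ)⁻¹ • 1) ⬝ᵥ (heat b k w - (n : ℝ)⁻¹ • 1) * β ^ 2 ≤ 1 := by
  have hn : (0 : ℝ) < n := by exact_mod_cast w.pos
  have h_image : ∀ k, heat b k w - (n : ℝ)⁻¹ • 1 =
      transition (b ^ k) *ᵥ (Pi.single w 1 - (n : ℝ)⁻¹ • 1) := fun k => by
    rw [Matrix.mulVec_sub, Matrix.mulVec_smul, transition_mulVec_one, heat]
  have h_zero : ∑ u, (Pi.single w 1 - (n : ℝ)⁻¹ • 1 : Fin n → ℝ) u = 0 := by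
    rw [← heat_zero b, sum_heat_sub_inv]
  rw [h_image]
  refine (H.contract k hk _ h_zero).trans ?_
  have h_inv : (n : ℝ)⁻¹ * n = 1 := inv_mul_cancel₀ hn.ne'
  simp only [sub_dotProduct, dotProduct_sub, smul_dotProduct, dotProduct_smul, one_dotProduct_one,
    single_one_dotProduct, dotProduct_single_one, Pi.sub_apply, Pi.smul_apply, Pi.single_eq_same,
    Pi.one_apply, smul_eq_mul, Fintype.card_fin]
  nlinarith [inv_pos.2 hn]

lemma tilt_mem_tilts (H : IsMixing b J Δ Δ₁ β) {y : Fin n → ℝ} (hy : y ∈ tilts n) (j : ℕ)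
    (w : Fin n) : tilt b J Δ Δ₁ β y j w ∈ tilts n := by
  obtain ⟨h_sum, h_norm⟩ := H.transition_block_mulVec_mem_tilts hy
  have h_heat := H.heat_sub_inv_dotProduct_self_le (Nat.le_add_right Δ ((j + 1) * Δ₁)) w
  have h_heat_sum := sum_heat_sub_inv b (Δ + (j + 1) * Δ₁) w
  rw [tilt]
  set B := transition (block b J Δ Δ₁) *ᵥ y
  set q := heat b (Δ + (j + 1) * Δ₁) w - (n : ℝ)⁻¹ • 1
  refine ⟨?_, ?_⟩
  · simp only [Pi.add_apply, Pi.smul_apply, Finset.sum_add_distrib, ← Finset.smul_sum, h_sum,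
      h_heat_sum, smul_zero, add_zero]
  · have h_parallelogram := dotProduct_self_nonneg (B - β • q)
    simp only [sub_dotProduct, dotProduct_sub, add_dotProduct, dotProduct_add, smul_dotProduct,
      dotProduct_smul, smul_eq_mul] at h_parallelogram ⊢
    linarith

lemma natCast_mul_exp_price_sub_le_one (H : IsMixing b J Δ Δ₁ β) :
    J * Real.exp (price b J Δ Δ₁ - β) ≤ 1 := by
  have h_rate : Real.exp (price b J Δ Δ₁ - β) ≤ Real.exp (-J) :=
    Real.exp_le_exp.2 (by rw [price]; linarith [H.le_rate])
  have h_inv : Real.exp J * Real.exp (-J) = 1 := by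
    rw [← Real.exp_add, add_neg_cancel, Real.exp_zero]
  have hJ : (J : ℝ) ≤ Real.exp J := by linarith [Real.add_one_le_exp (J : ℝ)]
  calc J * Real.exp (price b J Δ Δ₁ - β) ≤ Real.exp J * Real.exp (-J) := by gcongr
    _ = 1 := h_inv

lemma apply_add_smul_sum_weightedMoment_tilt_le (H : IsMixing b J Δ Δ₁ β)
    {L : (WeightedLoad n → ℝ) →ₗ[ℝ] ℝ} {R : ℝ} (hR : ∀ u, ∀ y ∈ tilts n, L (weightedMoment u y) ≤ R)
    (hR_nonneg : 0 ≤ R) {y : Fin n → ℝ} (hy : y ∈ tilts n) (v : Fin n) :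
    L (weightedMoment v (transition (block b J Δ Δ₁) *ᵥ y) +
      Real.exp (price b J Δ Δ₁ - β) • ∑ j ∈ Finset.range J, ∑ w, heat b (Δ + (j + 1) * Δ₁) w v •
        weightedMoment v (tilt b J Δ Δ₁ β y j w)) ≤ 2 * R := by
  obtain ⟨h_zero, h_norm⟩ := H.transition_block_mulVec_mem_tilts hy
  have h_untilted := hR v _ ⟨h_zero, h_norm.trans (by norm_num)⟩
  have h_tilts : ∀ j, L (∑ w, heat b (Δ + (j + 1) * Δ₁) w v •
      weightedMoment v (tilt b J Δ Δ₁ β y j w)) ≤ R := fun j => by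
    simp only [map_sum, map_smul, smul_eq_mul]
    calc _ ≤ ∑ w, heat b (Δ + (j + 1) * Δ₁) w v * R := Finset.sum_le_sum fun w _ =>
          mul_le_mul_of_nonneg_left (hR v _ (H.tilt_mem_tilts hy j w)) (heat_nonneg b _ w v)
      _ = R := by rw [← Finset.sum_mul, sum_heat_apply, one_mul]
  have h_sum := Finset.sum_le_card_nsmul (Finset.range J) _ R fun j _ => h_tilts j
  rw [Finset.card_range, nsmul_eq_mul] at h_sum
  rw [map_add, map_smul, map_sum, smul_eq_mul]
  nlinarith [mul_le_mul_of_nonneg_left h_sum (Real.exp_pos (price b J Δ Δ₁ - β)).le,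
    mul_le_mul_of_nonneg_right H.natCast_mul_exp_price_sub_le_one hR_nonneg]

lemma apply_blockOperator_weightedMoment_le (H : IsMixing b J Δ Δ₁ β)
    {L : (WeightedLoad n → ℝ) →ₗ[ℝ] ℝ} (hL : Monotone L) {R : ℝ}
    (hR : ∀ u, ∀ y ∈ tilts n, L (weightedMoment u y) ≤ R) (u : Fin n) {y : Fin n → ℝ}
    (hy : y ∈ tilts n) : L (blockOperator b J Δ Δ₁ β (weightedMoment u y)) ≤ Real.exp 2 * R := by
  have hR_nonneg : 0 ≤ R := by
    refine le_trans ?_ (hR u y hy)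
    rw [← map_zero L]
    exact hL fun s => mul_nonneg (s.2.2 u).le (Real.exp_pos _).le
  have h_exp : Real.exp 2 = Real.exp 1 * Real.exp 1 := by rw [← Real.exp_add]; norm_num
  refine (hL (blockOperator_weightedMoment_le b J Δ Δ₁ β u hy)).trans ?_
  rw [map_smul, map_sum, smul_eq_mul, h_exp, mul_assoc]
  refine mul_le_mul_of_nonneg_left ?_ (Real.exp_pos 1).le
  calc _ ≤ ∑ v, heat b (Δ + J * Δ₁) u v * (2 * R) := Finset.sum_le_sum fun v _ => by
        rw [map_smul, smul_eq_mul]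
        exact mul_le_mul_of_nonneg_left
          (H.apply_add_smul_sum_weightedMoment_tilt_le hR hR_nonneg hy v) (heat_nonneg b _ u v)
    _ = 2 * R := by rw [← Finset.sum_mul, sum_heat, one_mul]
    _ ≤ Real.exp 1 * R := mul_le_mul_of_nonneg_right Real.exp_one_gt_two.le hR_nonneg

lemma unitWeightExpectation_weightedMoment_le (H : IsMixing b J Δ Δ₁ β) {l : Schedule n}
    {x : Load n} (hx : ∀ y ∈ tilts n, (transition l *ᵥ y) ⬝ᵥ centered x ≤ 1) (k : ℕ) (u : Fin n)
    {y : Fin n → ℝ} (hy : y ∈ tilts n) :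
    unitWeightExpectation l x ((blockOperator b J Δ Δ₁ β ^ k) (weightedMoment u y)) ≤
      Real.exp (2 + 2 * k) := by
  induction k generalizing u y with
  | zero =>
    simp only [pow_zero, Module.End.one_apply, unitWeightExpectation_apply, weightedMoment,
      Pi.one_apply, one_mul]
    refine (evolve_exp_dotProduct_le l hy x).trans ?_
    rw [← Real.exp_add]
    exact Real.exp_le_exp.2 (by norm_num; linarith [hx y hy])
  | succ k ih =>
    have h_mono : Monotone (unitWeightExpectation l x ∘ₗ blockOperator b J Δ Δ₁ β ^ k) :=
      (monotone_unitWeightExpectation l x).comp (monotone_blockOperator_pow b J Δ Δ₁ β k)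
    rw [pow_succ, Module.End.mul_apply]
    refine (H.apply_blockOperator_weightedMoment_le h_mono (fun u y hy => ih u hy) u hy).trans_eq ?_
    rw [← Real.exp_add]
    push_cast
    ring_nf

end IsMixing

/-! ### Overloaded nodes are unlikely -/

/-- The indicator function of the load vectors in which some node exceeds the average by at least
`6`. -/
noncomputable def overload : Load n → ℝ := {x | ∃ u, 6 ≤ centered x u}.indicator 1

lemma overload_of_exists {x : Load n} (hx : ∃ u, 6 ≤ centered x u) : overload x = 1 :=
  Set.indicator_of_mem hx 1

lemma overload_of_not_exists {x : Load n} (hx : ¬ ∃ u, 6 ≤ centered x u) : overload x = 0 :=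
  Set.indicator_of_notMem hx 1

lemma overload_nonneg (x : Load n) : 0 ≤ overload x :=
  Set.indicator_nonneg (fun _ _ => zero_le_one) x

lemma discountedExcess_nonneg (a : ℝ) (s : WeightedLoad n) : 0 ≤ discountedExcess a s :=
  Finset.sum_nonneg fun u _ =>
    mul_nonneg (excess_nonneg s.1 u) (Real.rpow_pos_of_pos (s.2.2 u) _).le

-- At an overloaded node either the weight exceeds `z` or the discounted excess is at least
-- `z ^ (-a)`.
lemma overload_comp_fst_le {z a : ℝ} (hz : 0 < z) (ha : 0 ≤ a) :
    overload ∘ Prod.fst ≤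
      z⁻¹ • ∑ u, weightedMoment u (0 : Fin n → ℝ) + z ^ a • discountedExcess a := by
  rintro ⟨x, Z, hZ⟩
  have h_sum : (∑ u, weightedMoment u (0 : Fin n → ℝ)) ⟨x, Z, hZ⟩ = ∑ u, Z u := by
    simp only [Finset.sum_apply, weightedMoment, zero_dotProduct, Real.exp_zero, mul_one]
  have h_weight : 0 ≤ ∑ u, Z u := Finset.sum_nonneg fun u _ => (hZ u).le
  have h_excess := discountedExcess_nonneg a ⟨x, Z, hZ⟩
  simp only [Function.comp_apply, Pi.add_apply, Pi.smul_apply, smul_eq_mul, h_sum]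
  by_cases h : ∃ u, 6 ≤ centered x u
  · rw [overload_of_exists h]
    obtain ⟨u, hu⟩ := h
    rcases le_or_gt z (Z u) with h_large | h_small
    · have : 1 ≤ z⁻¹ * ∑ u, Z u := by
        rw [inv_mul_eq_div, one_le_div hz]
        exact h_large.trans (Finset.single_le_sum (fun u _ => (hZ u).le) (Finset.mem_univ u))
      have : 0 ≤ z ^ a * discountedExcess a ⟨x, Z, hZ⟩ := by positivity
      linarith
    · have h_one : 1 ≤ excess x u := le_max_of_le_left (by linarith)
      have h_le : z ^ (-a) ≤ discountedExcess a ⟨x, Z, hZ⟩ :=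
        calc z ^ (-a) ≤ Z u ^ (-a) :=
              Real.rpow_le_rpow_of_nonpos (hZ u) h_small.le (neg_nonpos.2 ha)
          _ ≤ excess x u * Z u ^ (-a) :=
              le_mul_of_one_le_left (Real.rpow_pos_of_pos (hZ u) _).le h_one
          _ ≤ discountedExcess a ⟨x, Z, hZ⟩ :=
              Finset.single_le_sum (f := fun u => excess x u * Z u ^ (-a))
                (fun u _ => mul_nonneg (excess_nonneg x u) (Real.rpow_pos_of_pos (hZ u) _).le)
                (Finset.mem_univ u)
      have : 1 ≤ z ^ a * discountedExcess a ⟨x, Z, hZ⟩ :=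
        calc 1 = z ^ a * z ^ (-a) := by rw [← Real.rpow_add hz, add_neg_cancel, Real.rpow_zero]
          _ ≤ _ := by gcongr
      have : 0 ≤ z⁻¹ * ∑ u, Z u := by positivity
      linarith
  · rw [overload_of_not_exists h]
    positivity

lemma IsMixing.evolve_overload_le {b : Schedule n} {J Δ Δ₁ : ℕ} {β : ℝ} (H : IsMixing b J Δ Δ₁ β)
    {l : Schedule n} {x : Load n} (hx : ∀ y ∈ tilts n, (transition l *ᵥ y) ⬝ᵥ centered x ≤ 1)
    {K : ℝ} (hK : 0 ≤ K) (hxK : ∀ u, centered x u ≤ K) (k : ℕ) :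
    evolve (l * block b J Δ Δ₁ ^ k) overload x ≤
      n * Real.exp (2 + 2 * k - (block b J Δ Δ₁).length * k) +
        Real.exp k * (2 * Real.exp (3 - J)) ^ k * (n * K) := by
  set p := ((block b J Δ Δ₁).length : ℝ)
  have hp_pos : 0 < p := Nat.cast_pos.2 H.length_block_pos
  have h_exp : Real.exp (p * k) ^ p⁻¹ = Real.exp k := by
    rw [← Real.exp_mul, mul_comm p, mul_inv_cancel_right₀ hp_pos.ne']
  let E := unitWeightExpectation l x ∘ₗ blockOperator b J Δ Δ₁ β ^ k
  have hE : Monotone E :=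
    (monotone_unitWeightExpectation l x).comp (monotone_blockOperator_pow b J Δ Δ₁ β k)
  have h_moment : ∀ u, E (weightedMoment u 0) ≤ Real.exp (2 + 2 * k) := fun u =>
    H.unitWeightExpectation_weightedMoment_le hx k u (by simp [tilts])
  have h_excess : ∑ u, excess x u ≤ n * K := by
    refine (Finset.sum_le_card_nsmul _ _ K fun u _ => max_le ?_ hK).trans_eq (by simp)
    linarith [hxK u]
  have h_discounted : E (discountedExcess p⁻¹) ≤ (2 * Real.exp (3 - J)) ^ k * (n * K) :=
    (H.unitWeightExpectation_discountedExcess_le l x k).trans (by gcongr)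
  calc evolve (l * block b J Δ Δ₁ ^ k) overload x = E (overload ∘ Prod.fst) :=
        (unitWeightExpectation_blockOperator_pow_comp_fst b J Δ Δ₁ β l x k overload).symm
    _ ≤ (Real.exp (p * k))⁻¹ * ∑ u, E (weightedMoment u 0) +
          Real.exp k * E (discountedExcess p⁻¹) := by
        refine (hE (overload_comp_fst_le (Real.exp_pos (p * k)) (inv_pos.2 hp_pos).le)).trans_eq ?_
        simp only [map_add, map_smul, map_sum, smul_eq_mul, h_exp]
    _ ≤ (Real.exp (p * k))⁻¹ * (n * Real.exp (2 + 2 * k)) +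
          Real.exp k * ((2 * Real.exp (3 - J)) ^ k * (n * K)) := by
        gcongr
        exact (Finset.sum_le_card_nsmul _ _ _ fun u _ => h_moment u).trans_eq (by simp)
    _ = _ := by
        rw [← Real.exp_neg, mul_left_comm, ← Real.exp_add, mul_assoc]
        ring_nf

/-! ### Overload controls the discrepancy -/

lemma overload_step_le (m : Matching n) (φ : Orientation n) (x : Load n) :
    overload (step m φ x) ≤ overload x := by
  by_cases h : ∃ u, 6 ≤ centered (step m φ x) u
  · obtain ⟨u, hu⟩ := h
    have hx : ∃ v, 6 ≤ centered x v :=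
      (le_max_iff.1 (hu.trans (centered_step_le_max m φ x u))).elim (⟨u, ·⟩) (⟨m.f u, ·⟩)
    rw [overload_of_exists ⟨u, hu⟩, overload_of_exists hx]
  · rw [overload_of_not_exists h]
    exact overload_nonneg x

lemma evolve_overload_le (l : Schedule n) : evolve l overload ≤ (overload : Load n → ℝ) := by
  induction l using FreeMonoid.inductionOn' with
  | one => rw [map_one, Module.End.one_apply]
  | of_mul m l ih =>
    rw [evolve_of_mul]
    refine (monotone_roundOperator m ih).trans fun x => ?_
    rw [roundOperator_apply]
    exact Finset.expect_le Finset.univ_nonempty fun φ _ => overload_step_le m φ x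

lemma evolve_mul_overload_le (l l' : Schedule n) :
    evolve (l * l') overload ≤ evolve l (overload : Load n → ℝ) := by
  rw [map_mul, Module.End.mul_apply]
  exact monotone_evolve l (evolve_overload_le l')

lemma roundOperator_comp_neg (m : Matching n) (f : Load n → ℝ) :
    roundOperator m (f ∘ Neg.neg) = roundOperator m f ∘ Neg.neg := by
  ext x
  refine Fintype.expect_equiv
    (Equiv.piCongrRight fun _ => Equiv.piCongrRight fun _ => Equiv.boolNot) _ _ fun φ => ?_
  rw [step_neg]
  simp [Pi.map]

lemma evolve_comp_neg (l : Schedule n) (f : Load n → ℝ) :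
    evolve l (f ∘ Neg.neg) = evolve l f ∘ Neg.neg := by
  induction l using FreeMonoid.inductionOn' with
  | one => simp only [map_one, Module.End.one_apply]
  | of_mul m l ih => rw [evolve_of_mul, evolve_of_mul, ih, roundOperator_comp_neg]

lemma sub_le_discZ (x : Load n) (u v : Fin n) : (x u : ℝ) - x v ≤ discZ x :=
  calc (x u : ℝ) - x v ≤ |(x u : ℝ) - x v| := le_abs_self _
    _ ≤ ⨆ v, |(x u : ℝ) - x v| :=
        le_ciSup (f := fun v => |(x u : ℝ) - x v|) (Set.finite_range _).bddAbove v
    _ ≤ discZ x := le_ciSup (f := fun u => ⨆ v, |(x u : ℝ) - x v|) (Set.finite_range _).bddAbove u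

lemma centered_sub_centered (x : Load n) (u v : Fin n) :
    centered x u - centered x v = x u - x v := by
  rw [centered, centered, sub_sub_sub_cancel_right]

lemma centered_le_discZ (x : Load n) (u : Fin n) : centered x u ≤ discZ x := by
  have hn : (0 : ℝ) < n := Nat.cast_pos.2 u.pos
  have h := Finset.sum_le_card_nsmul Finset.univ _ _ fun v _ => sub_le_discZ x u v
  simp only [← centered_sub_centered, Finset.sum_sub_distrib, sum_centered, Finset.sum_const,
    Finset.card_univ, Fintype.card_fin, nsmul_eq_mul, sub_zero] at h
  exact le_of_mul_le_mul_left h hn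

lemma discZ_neg (x : Load n) : discZ (-x) = discZ x := by
  simp only [discZ, disc, Pi.neg_apply, Int.cast_neg, neg_sub_neg, abs_sub_comm]

lemma one_le_overload_add_overload_neg {x : Load n} (hx : ¬ discZ x ≤ 12) :
    1 ≤ overload x + overload (-x) := by
  by_contra! h
  have h_le : ∀ y : Load n, overload y < 1 → ∀ u, centered y u ≤ 6 := fun y hy u => by
    by_contra! hu
    exact hy.ne (overload_of_exists ⟨u, hu.le⟩)
  have h_upper := h_le x (by linarith [overload_nonneg (-x)])
  have h_lower := h_le (-x) (by linarith [overload_nonneg x])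
  simp only [centered_neg, Pi.neg_apply] at h_lower
  refine hx (Real.iSup_le (fun u => Real.iSup_le (fun v => ?_) (by norm_num)) (by norm_num))
  rw [← centered_sub_centered, abs_le]
  constructor <;> linarith [h_upper u, h_upper v, h_lower u, h_lower v]

/-! ### From the process to its Markov operators -/

/-- The schedule of the `r` rounds following round `t`. -/
def scheduleFrom (M : ℕ → Matching n) (t r : ℕ) : Schedule n :=
  .ofList ((List.range r).map fun i => M (t + i + 1))

lemma scheduleFrom_add (M : ℕ → Matching n) (t r s : ℕ) :
    scheduleFrom M t (r + s) = scheduleFrom M t r * scheduleFrom M (t + r) s := by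
  simp only [scheduleFrom, List.range_add, List.map_append, List.map_map, Function.comp_def,
    FreeMonoid.ofList_append, add_assoc]

lemma loadsFrom_congr_s18 (M : ℕ → Matching n) (t : ℕ) {Φ Φ' : ℕ → Orientation n} (x : Load n) {r : ℕ}
    (h : ∀ s ∈ Set.Icc 1 r, Φ s = Φ' s) : loadsFrom M t Φ x r = loadsFrom M t Φ' x r := by
  induction r with
  | zero => rfl
  | succ r ih =>
    rw [loadsFrom, loadsFrom, ih fun s hs => h s ⟨hs.1, hs.2.trans r.le_succ⟩,
      h (r + 1) ⟨r.succ_pos, le_rfl⟩]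

lemma lift_snoc_succ {A : Type*} (a₀ : A) {T : ℕ} (ω : Fin T → A) (a : A) :
    lift a₀ (Fin.snoc ω a : Fin (T + 1) → A) (T + 1) = a := by
  simp [lift, Fin.snoc]

lemma lift_snoc_of_le {A : Type*} (a₀ : A) {T : ℕ} (ω : Fin T → A) (a : A) {s : ℕ}
    (hs : s ∈ Set.Icc 1 T) : lift a₀ (Fin.snoc ω a : Fin (T + 1) → A) s = lift a₀ ω s := by
  obtain ⟨h_one, h_le⟩ := hs
  simp [lift, Fin.snoc, show s - 1 < T by lia, show s - 1 < T + 1 by lia]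

lemma expect_snoc {A : Type*} [Fintype A] {T : ℕ} (F : (Fin (T + 1) → A) → ℝ) :
    𝔼 ω, F ω = 𝔼 ω : Fin T → A, 𝔼 a : A, F (Fin.snoc ω a) := by
  rw [← Finset.expect_product', Finset.univ_product_univ]
  exact (Fintype.expect_equiv ((Equiv.prodComm _ _).trans (Fin.snocEquiv fun _ => A)) _ _
    fun _ => rfl).symm

lemma expect_loadsFrom (M : ℕ → Matching n) (t : ℕ) (x : Load n) (T : ℕ) (f : Load n → ℝ) :
    𝔼 ω : Fin T → Orientation n, f (loadsFrom M t (lift (orientDefault n) ω) x T) =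
      evolve (scheduleFrom M t T) f x := by
  induction T generalizing f with
  | zero =>
    simp only [loadsFrom, scheduleFrom, List.range_zero, List.map_nil, FreeMonoid.ofList_nil,
      map_one, Module.End.one_apply]
    exact Fintype.expect_const _
  | succ T ih =>
    have h_step : ∀ (ω : Fin T → Orientation n) (φ : Orientation n),
        loadsFrom M t (lift (orientDefault n) (Fin.snoc ω φ : Fin (T + 1) → Orientation n)) x
            (T + 1) =
          step (M (t + T + 1)) φ (loadsFrom M t (lift (orientDefault n) ω) x T) := fun ω φ => by
      rw [loadsFrom, lift_snoc_succ, loadsFrom_congr_s18 M t x fun s hs => lift_snoc_of_le _ ω φ hs]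
    have h_schedule : scheduleFrom M t (T + 1) = scheduleFrom M t T * .of (M (t + T + 1)) :=
      scheduleFrom_add M t T 1
    rw [expect_snoc, h_schedule, map_mul, Module.End.mul_apply, ← ih]
    simp only [h_step, evolve, FreeMonoid.lift_eval_of, roundOperator_apply]

/-- The schedule of one period of the balancing circuit. -/
def roundSchedule {d : ℕ} (Ms : Fin d → Matching n) : Schedule n := .ofList (List.ofFn Ms)

lemma scheduleFrom_circuit_period {d : ℕ} (hd : 0 < d) (Ms : Fin d → Matching n) :
    scheduleFrom (circuit hd Ms) 0 d = roundSchedule Ms := by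
  refine congrArg FreeMonoid.ofList (List.ext_getElem (by simp) fun i hi _ => ?_)
  have : i < d := by simpa using hi
  simp [circuit, Nat.mod_eq_of_lt this]

lemma scheduleFrom_circuit_add_period {d : ℕ} (hd : 0 < d) (Ms : Fin d → Matching n) (t r : ℕ) :
    scheduleFrom (circuit hd Ms) (t + d) r = scheduleFrom (circuit hd Ms) t r := by
  simp only [scheduleFrom, circuit, Nat.add_sub_cancel, Nat.add_right_comm t d, Nat.add_mod_right]

lemma scheduleFrom_circuit_mul {d : ℕ} (hd : 0 < d) (Ms : Fin d → Matching n) (k : ℕ) :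
    scheduleFrom (circuit hd Ms) 0 (k * d) = roundSchedule Ms ^ k := by
  induction k with
  | zero => rw [zero_mul, pow_zero]; rfl
  | succ k ih =>
    rw [add_one_mul, add_comm, scheduleFrom_add, scheduleFrom_circuit_add_period,
      scheduleFrom_circuit_period, ih, pow_succ']

lemma one_sub_expect_le_pr {Ω : Type*} [Fintype Ω] [Nonempty Ω] {A : Ω → Prop} {g : Ω → ℝ}
    (hg : 0 ≤ g) (h : ∀ ω, ¬ A ω → 1 ≤ g ω) : 1 - 𝔼 ω, g ω ≤ pr A := by
  classical
  have h_pr : pr A = 𝔼 ω, if A ω then (1 : ℝ) else 0 := by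
    rw [Fintype.expect_eq_sum_div_card, Finset.sum_boole, pr]
  rw [h_pr, sub_le_iff_le_add, ← Finset.expect_add_distrib, ← Fintype.expect_const (ι := Ω) (1 : ℝ)]
  refine Finset.expect_le_expect fun ω _ => ?_
  have := hg ω
  split_ifs with hA
  · simpa using this
  · simpa using h ω hA

-- The expected overload does not increase after the first `k` periods.
lemma one_sub_evolve_overload_le_pr {d : ℕ} (hd : 0 < d) (Ms : Fin d → Matching n) (x : Load n)
    {k T : ℕ} (hT : k * d ≤ T) :
    1 - (evolve (roundSchedule Ms ^ k) overload x + evolve (roundSchedule Ms ^ k) overload (-x)) ≤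
      pr fun ω : Fin T → Orientation n =>
        discZ (loads (circuit hd Ms) (lift (orientDefault n) ω) x T) ≤ 12 := by
  refine le_trans ?_ (one_sub_expect_le_pr (g := fun ω =>
    (overload + overload ∘ Neg.neg : Load n → ℝ)
      (loads (circuit hd Ms) (lift (orientDefault n) ω) x T))
    (fun ω => add_nonneg (overload_nonneg _) (overload_nonneg _))
    fun ω => one_le_overload_add_overload_neg)
  obtain ⟨r, rfl⟩ := Nat.exists_eq_add_of_le hT
  simp only [loads]
  rw [expect_loadsFrom, map_add, evolve_comp_neg, scheduleFrom_add, scheduleFrom_circuit_mul]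
  exact sub_le_sub_left (add_le_add (evolve_mul_overload_le _ _ x)
    (evolve_mul_overload_le _ _ (-x))) _

/-! ### The spectral gap -/

lemma transition_roundSchedule {d : ℕ} (Ms : Fin d → Matching n) :
    transition (roundSchedule Ms) = roundMatrix Ms := by
  rw [transition, FreeMonoid.lift_apply, roundSchedule, FreeMonoid.toList_ofList, List.map_ofFn]
  rfl

lemma length_roundSchedule {d : ℕ} (Ms : Fin d → Matching n) : (roundSchedule Ms).length = d :=
  List.length_ofFn

lemma lamMax_nonneg (M : Matrix (Fin n) (Fin n) ℝ) : 0 ≤ lamMax M :=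
  Real.iSup_nonneg fun _ => Real.sqrt_nonneg _

lemma lamMax_pow_le_exp (M : Matrix (Fin n) (Fin n) ℝ) (k : ℕ) :
    lamMax M ^ k ≤ Real.exp (-((1 - lamMax M) * k)) := by
  have h : lamMax M ≤ Real.exp (-(1 - lamMax M)) := by
    linarith [Real.add_one_le_exp (-(1 - lamMax M))]
  refine (pow_le_pow_left₀ (lamMax_nonneg M) h k).trans_eq ?_
  rw [← Real.exp_nat_mul]
  ring_nf

lemma mulVec_dotProduct_self_eq_sum_sq (M : Matrix (Fin n) (Fin n) ℝ) (y : Fin n → ℝ) :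
    (M *ᵥ y) ⬝ᵥ (M *ᵥ y) = ∑ u, (M *ᵥ y) u ^ 2 :=
  Finset.sum_congr rfl fun _ _ => (sq _).symm

lemma sqrt_mulVec_dotProduct_self_le_lamMax (M : Matrix (Fin n) (Fin n) ℝ) {y : Fin n → ℝ}
    (hy : ∑ u, y u = 0) (hy_one : y ⬝ᵥ y = 1) : √((M *ᵥ y) ⬝ᵥ (M *ᵥ y)) ≤ lamMax M := by
  have h_bdd : BddAbove (Set.range fun x : {x : Fin n → ℝ // ∑ u, x u = 0 ∧ ∑ u, x u ^ 2 = 1} =>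
      √(∑ u, (M *ᵥ x.1) u ^ 2)) := by
    refine ⟨√(∑ u, ∑ v, M u v ^ 2), ?_⟩
    rintro _ ⟨⟨x, -, hx⟩, rfl⟩
    refine Real.sqrt_le_sqrt (Finset.sum_le_sum fun u _ => ?_)
    refine (Finset.sum_mul_sq_le_sq_mul_sq Finset.univ (M u) x).trans_eq ?_
    rw [hx, mul_one]
  have hy_sq : ∑ u, y u ^ 2 = 1 := by simpa only [dotProduct, ← sq] using hy_one
  rw [mulVec_dotProduct_self_eq_sum_sq]
  exact le_ciSup h_bdd ⟨y, hy, hy_sq⟩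

lemma mulVec_dotProduct_self_le_lamMax_sq (M : Matrix (Fin n) (Fin n) ℝ) {y : Fin n → ℝ}
    (hy : ∑ u, y u = 0) : (M *ᵥ y) ⬝ᵥ (M *ᵥ y) ≤ lamMax M ^ 2 * (y ⬝ᵥ y) := by
  rcases (dotProduct_self_nonneg y).eq_or_lt' with h_zero | h_pos
  · simp [dotProduct_self_eq_zero.1 h_zero]
  · set c := (√(y ⬝ᵥ y))⁻¹ with hc
    have hc_sq : c ^ 2 * (y ⬝ᵥ y) = 1 := by
      rw [hc, inv_pow, Real.sq_sqrt h_pos.le, inv_mul_cancel₀ h_pos.ne']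
    have h_scale : ∀ z : Fin n → ℝ, (c • z) ⬝ᵥ (c • z) = c ^ 2 * (z ⬝ᵥ z) := fun z => by
      rw [smul_dotProduct, dotProduct_smul, smul_smul, smul_eq_mul, sq]
    have h_unit := sqrt_mulVec_dotProduct_self_le_lamMax M (y := c • y)
      (by simp only [Pi.smul_apply, ← Finset.smul_sum, hy, smul_zero]) (by rw [h_scale, hc_sq])
    rw [Real.sqrt_le_left (lamMax_nonneg M), Matrix.mulVec_smul, h_scale] at h_unit
    calc (M *ᵥ y) ⬝ᵥ (M *ᵥ y) = c ^ 2 * ((M *ᵥ y) ⬝ᵥ (M *ᵥ y)) * (y ⬝ᵥ y) := by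
          rw [mul_right_comm, hc_sq, one_mul]
      _ ≤ _ := by gcongr

lemma transition_pow_mulVec_dotProduct_self_le (l : Schedule n) {y : Fin n → ℝ}
    (hy : ∑ u, y u = 0) (k : ℕ) : (transition (l ^ k) *ᵥ y) ⬝ᵥ (transition (l ^ k) *ᵥ y) ≤
      (lamMax (transition l) ^ k) ^ 2 * (y ⬝ᵥ y) := by
  induction k with
  | zero => simp
  | succ k ih =>
    rw [pow_succ' l, map_mul, ← Matrix.mulVec_mulVec]
    refine (mulVec_dotProduct_self_le_lamMax_sq _ (by rw [sum_transition_mulVec, hy])).trans ?_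
    refine (mul_le_mul_of_nonneg_left ih (sq_nonneg _)).trans_eq ?_
    ring

/-- A schedule is connecting if the union of its matchings is a connected graph. -/
def IsConnecting (l : Schedule n) : Prop :=
  ∀ S : Finset (Fin n), S.Nonempty → S ≠ Finset.univ → ∃ m ∈ l, ∃ u ∈ S, m.f u ∉ S

/-- The squared norm that a vector loses when it is averaged along a schedule. -/
noncomputable def dissipation (l : Schedule n) (y : Fin n → ℝ) : ℝ :=
  y ⬝ᵥ y - (transition l *ᵥ y) ⬝ᵥ (transition l *ᵥ y)

lemma dissipation_nonneg (l : Schedule n) (y : Fin n → ℝ) : 0 ≤ dissipation l y :=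
  sub_nonneg.2 (transition_mulVec_dotProduct_self_le l y)

lemma dissipation_of_mul (m : Matching n) (l : Schedule n) (y : Fin n → ℝ) :
    dissipation (.of m * l) y = dissipation l y + dissipation (.of m) (transition l *ᵥ y) := by
  simp only [dissipation, map_mul, Matrix.mulVec_mulVec]
  ring

lemma transition_mulVec_eq_self_of_forall {l : Schedule n} {y : Fin n → ℝ}
    (h : ∀ m ∈ l, m.matrix *ᵥ y = y) : transition l *ᵥ y = y := by
  induction l using FreeMonoid.inductionOn' with
  | one => rw [map_one, Matrix.one_mulVec]
  | of_mul m l ih =>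
    rw [transition_of_mul_mulVec, ih fun m' hm' => h m' (FreeMonoid.mem_mul.2 (.inr hm')),
      h m (FreeMonoid.mem_mul.2 (.inl FreeMonoid.mem_of_self))]

-- Otherwise the centered indicator function of a component is a fixed vector.
lemma isConnecting_of_lamMax_lt_one {l : Schedule n} (hl : lamMax (transition l) < 1) :
    IsConnecting l := by
  rintro S ⟨a, ha⟩ hS
  obtain ⟨b, hb⟩ : ∃ b, b ∉ S := by simpa [Finset.eq_univ_iff_forall] using hS
  by_contra! h_closed
  have hn : (n : ℝ) ≠ 0 := by exact_mod_cast a.pos.ne'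
  let y : Fin n → ℝ := fun u => (if u ∈ S then 1 else 0) - (S.card : ℝ) / n
  have hy : ∑ u, y u = 0 := by simp [y, Finset.sum_sub_distrib, mul_div_cancel₀ _ hn]
  have h_fixed : transition l *ᵥ y = y := transition_mulVec_eq_self_of_forall fun m hm => by
    ext u
    have h_iff : m.f u ∈ S ↔ u ∈ S :=
      ⟨fun h => m.invol u ▸ h_closed m hm _ h, h_closed m hm u⟩
    simp only [m.matrix_mulVec_apply, y, h_iff, add_self_div_two]
  have h_le := mulVec_dotProduct_self_le_lamMax_sq (transition l) hy
  rw [h_fixed] at h_le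
  have h_zero : y = 0 := by
    have h_sq : lamMax (transition l) ^ 2 < 1 := pow_lt_one₀ (lamMax_nonneg _) hl two_ne_zero
    refine dotProduct_self_eq_zero.1 ((dotProduct_self_nonneg y).antisymm' ?_)
    nlinarith
  have hya : y a = 0 := congrFun h_zero a
  have hyb : y b = 0 := congrFun h_zero b
  simp only [y, ha, hb, if_true, if_false] at hya hyb
  linarith

lemma abs_sub_partner_le_of_dissipation_of_le (m : Matching n) {y : Fin n → ℝ} {e : ℝ} (he : 0 ≤ e)
    (h : dissipation (.of m) y ≤ e ^ 2 / 2) (u : Fin n) : |y u - y (m.f u)| ≤ e := by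
  refine abs_le_of_sq_le_sq ?_ he
  rcases eq_or_ne (m.f u) u with hu | hu
  · rw [hu, sub_self, zero_pow two_ne_zero]
    positivity
  · rw [dissipation, transition, FreeMonoid.lift_eval_of, dotProduct_self_sub_mulVec_eq_sum] at h
    have h_pair := Finset.sum_le_sum_of_subset_of_nonneg (Finset.subset_univ {u, m.f u})
      fun v _ _ => show 0 ≤ (y v - y (m.f v)) ^ 2 / 4 by positivity
    rw [Finset.sum_pair hu.symm, m.invol] at h_pair
    nlinarith

lemma abs_transition_mulVec_sub_le {l : Schedule n} {y : Fin n → ℝ} {e : ℝ} (he : 0 ≤ e)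
    (h : dissipation l y ≤ e ^ 2 / 2) (u : Fin n) :
    |(transition l *ᵥ y) u - y u| ≤ l.length * e / 2 := by
  induction l using FreeMonoid.inductionOn' generalizing u with
  | one => simp
  | of_mul m l ih =>
    rw [dissipation_of_mul] at h
    have h_word := ih (by linarith [dissipation_nonneg (.of m) (transition l *ᵥ y)]) u
    have h_pair := abs_sub_partner_le_of_dissipation_of_le m he
      (by linarith [dissipation_nonneg l y] : dissipation (.of m) (transition l *ᵥ y) ≤ _) u
    rw [transition_of_mul_mulVec, m.matrix_mulVec_apply, FreeMonoid.length_mul,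
      FreeMonoid.length_of]
    push_cast
    rw [abs_le] at *
    constructor <;> linarith

lemma abs_sub_partner_le_of_dissipation_le {l : Schedule n} {y : Fin n → ℝ} {e : ℝ} (he : 0 ≤ e)
    (h : dissipation l y ≤ e ^ 2 / 2) {m : Matching n} (hm : m ∈ l) (u : Fin n) :
    |y u - y (m.f u)| ≤ (l.length + 1) * e := by
  induction l using FreeMonoid.inductionOn' with
  | one => exact absurd hm FreeMonoid.notMem_one
  | of_mul m' l ih =>
    rw [dissipation_of_mul] at h
    have h_word : dissipation l y ≤ e ^ 2 / 2 := by
      linarith [dissipation_nonneg (.of m') (transition l *ᵥ y)]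
    rw [FreeMonoid.length_mul, FreeMonoid.length_of]
    push_cast
    rcases FreeMonoid.mem_mul.1 hm with hm' | hm'
    · obtain rfl := FreeMonoid.mem_of.1 hm'
      have h_pair := abs_sub_partner_le_of_dissipation_of_le m he
        (by linarith [dissipation_nonneg l y] : dissipation (.of m) (transition l *ᵥ y) ≤ _) u
      have h_u := abs_transition_mulVec_sub_le he h_word u
      have h_partner := abs_transition_mulVec_sub_le he h_word (m.f u)
      rw [abs_le] at *
      constructor <;> linarith
    · linarith [ih h_word hm']

namespace IsConnecting

variable {l : Schedule n}

-- A matched pair leaves each proper superlevel set, so that lowering the level by `η` adds a node.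
lemma lt_card_superlevel (hl : IsConnecting l) {y : Fin n → ℝ} {η : ℝ} (hη : 0 ≤ η)
    (h : ∀ m ∈ l, ∀ u, |y u - y (m.f u)| ≤ η) (u v : Fin n) {k : ℕ} (hv : y v < y u - k * η) :
    k < (Finset.univ.filter fun w => y u - k * η ≤ y w).card := by
  induction k with
  | zero => exact Finset.card_pos.2 ⟨u, by simp⟩
  | succ k ih =>
    push_cast at hv ⊢
    have hv' : y v < y u - k * η := by linarith
    refine Nat.lt_of_le_of_lt (ih hv') (Finset.card_lt_card ?_)
    obtain ⟨m, hm, w, hw, h_out⟩ := hl (Finset.univ.filter fun w => y u - k * η ≤ y w)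
      ⟨u, by simpa using mul_nonneg k.cast_nonneg hη⟩
      fun h_univ => hv'.not_ge (Finset.mem_filter.1 (h_univ.ge (Finset.mem_univ v))).2
    refine (Finset.ssubset_iff_of_subset fun w hw => ?_).2 ⟨m.f w, ?_, h_out⟩ <;>
      simp only [Finset.mem_filter, Finset.mem_univ, true_and] at hw ⊢
    · linarith
    · linarith [(abs_le.1 (h m hm w)).2]

lemma sub_le_natCast_mul (hl : IsConnecting l) {y : Fin n → ℝ} {η : ℝ} (hη : 0 ≤ η)
    (h : ∀ m ∈ l, ∀ u, |y u - y (m.f u)| ≤ η) (u v : Fin n) : y u - y v ≤ n * η := by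
  by_contra! h_lt
  have h_card := hl.lt_card_superlevel hη h u v (k := n) (by linarith)
  exact h_card.not_ge (Finset.card_le_univ _ |>.trans_eq (Fintype.card_fin n))

lemma dotProduct_self_le_mul_dissipation (hl : IsConnecting l) {y : Fin n → ℝ}
    (hy : ∑ u, y u = 0) :
    y ⬝ᵥ y ≤ 2 * ((l.length : ℝ) + 1) ^ 2 * (n : ℝ) ^ 3 * dissipation l y := by
  set e := √(2 * dissipation l y)
  have he : e ^ 2 = 2 * dissipation l y :=
    Real.sq_sqrt (mul_nonneg zero_le_two (dissipation_nonneg l y))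
  set η := ((l.length : ℝ) + 1) * e with hη
  have h_osc : ∀ u v, y u - y v ≤ n * η :=
    hl.sub_le_natCast_mul (by positivity) fun m hm u =>
      abs_sub_partner_le_of_dissipation_le (Real.sqrt_nonneg _) (by linarith : _ ≤ e ^ 2 / 2) hm u
  have h_abs : ∀ u, |y u| ≤ n * η := fun u => by
    have hn : (0 : ℝ) < n := Nat.cast_pos.2 u.pos
    have h_above := Finset.sum_le_card_nsmul Finset.univ _ _ fun v _ => h_osc u v
    have h_below := Finset.sum_le_card_nsmul Finset.univ _ _ fun v _ => h_osc v u
    simp only [Finset.sum_sub_distrib, hy, Finset.sum_const, Finset.card_univ, Fintype.card_fin,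
      nsmul_eq_mul] at h_above h_below
    exact abs_le.2 ⟨by nlinarith, by nlinarith⟩
  calc y ⬝ᵥ y ≤ ∑ _u : Fin n, (n * η) ^ 2 := Finset.sum_le_sum fun u _ => by
        rw [← sq]
        exact sq_le_sq' (abs_le.1 (h_abs u)).1 (abs_le.1 (h_abs u)).2
    _ = (n : ℝ) ^ 3 * ((l.length + 1) ^ 2 * e ^ 2) := by
        rw [Finset.sum_const, Finset.card_univ, Fintype.card_fin, nsmul_eq_mul, hη]
        ring
    _ = _ := by
        rw [he]
        ring

lemma inv_le_one_sub_lamMax (hl : IsConnecting l) (hn : 0 < n) :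
    (4 * ((l.length : ℝ) + 1) ^ 2 * (n : ℝ) ^ 3)⁻¹ ≤ 1 - lamMax (transition l) := by
  set c := 2 * ((l.length : ℝ) + 1) ^ 2 * (n : ℝ) ^ 3 with hc
  have hn_one : (1 : ℝ) ≤ n := Nat.one_le_cast.2 hn
  have hc_one : 1 ≤ c := by
    have h_len : 1 ≤ ((l.length : ℝ) + 1) ^ 2 := one_le_pow₀ (by simp)
    nlinarith [one_le_pow₀ hn_one (n := 3)]
  have h_inv : c⁻¹ ≤ 1 := inv_le_one_of_one_le₀ hc_one
  have h_half : (4 * ((l.length : ℝ) + 1) ^ 2 * (n : ℝ) ^ 3)⁻¹ = c⁻¹ / 2 := by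
    rw [hc]
    field_simp
    norm_num
  rw [h_half, le_sub_comm]
  refine Real.iSup_le ?_ (by linarith)
  rintro ⟨y, hy, hy_one⟩
  have h_diss := hl.dotProduct_self_le_mul_dissipation hy
  rw [← mulVec_dotProduct_self_eq_sum_sq, Real.sqrt_le_left (by linarith)]
  have hy_dot : y ⬝ᵥ y = 1 := by simpa only [dotProduct, ← sq] using hy_one
  rw [hy_dot, ← hc, ← inv_le_iff_one_le_mul₀' (by positivity), dissipation, hy_dot] at h_diss
  calc (transition l *ᵥ y) ⬝ᵥ (transition l *ᵥ y) ≤ 1 - c⁻¹ := by linarith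
    _ ≤ (1 - c⁻¹ / 2) ^ 2 := by
      rw [sub_sq]
      linarith [sq_nonneg (c⁻¹ / 2)]

end IsConnecting

/-! ### Spreading of the heat kernel -/

lemma natCast_card_mul_le_one {y : Fin n → ℝ} (hy : 0 ≤ y) (hy_one : ∑ u, y u = 1)
    {S : Finset (Fin n)} {c : ℝ} (hS : ∀ u ∈ S, c ≤ y u) : (S.card : ℝ) * c ≤ 1 :=
  calc (S.card : ℝ) * c ≤ ∑ u ∈ S, y u := by
        simpa only [nsmul_eq_mul] using Finset.card_nsmul_le_sum S y c hS
    _ ≤ ∑ u, y u := Finset.sum_le_sum_of_subset_of_nonneg S.subset_univ fun u _ _ => hy u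
    _ = 1 := hy_one

lemma exists_dotProduct_self_le_apply (hn : 0 < n) {y : Fin n → ℝ} (hy : 0 ≤ y)
    (hy_one : ∑ u, y u = 1) : ∃ u, y ⬝ᵥ y ≤ y u := by
  have : Nonempty (Fin n) := ⟨⟨0, hn⟩⟩
  obtain ⟨u, hu⟩ := Finite.exists_max y
  refine ⟨u, ?_⟩
  calc y ⬝ᵥ y ≤ ∑ v, y u * y v :=
        Finset.sum_le_sum fun v _ => mul_le_mul_of_nonneg_right (hu v) (hy v)
    _ = y u := by rw [← Finset.mul_sum, hy_one, mul_one]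

namespace IsConnecting

variable {l : Schedule n}

-- At a value `> 1 / J²` of `y`, more than `2 J²` nodes would have a value of at least `2 / (3 J²)`.
lemma sq_mul_dotProduct_self_le_one (hl : IsConnecting l) {J : ℕ} (hn : 3 * J ^ 2 < n)
    {y : Fin n → ℝ} (hy : 0 ≤ y) (hy_one : ∑ u, y u = 1)
    (h : ∀ m ∈ l, ∀ u, |y u - y (m.f u)| ≤ (6 * (J : ℝ) ^ 4)⁻¹) : (J : ℝ) ^ 2 * (y ⬝ᵥ y) ≤ 1 := by
  by_contra! h_peak
  have hJ : (J : ℝ) ≠ 0 := fun hJ => by norm_num [hJ] at h_peak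
  set a : ℝ := ((J : ℝ) ^ 2)⁻¹ with ha
  have : 0 < a := by positivity
  have haJ : (J : ℝ) ^ 2 * a = 1 := mul_inv_cancel₀ (pow_ne_zero 2 hJ)
  obtain ⟨u, hu⟩ := exists_dotProduct_self_le_apply (Nat.zero_lt_of_lt hn) hy hy_one
  have hu_peak : a < y u := (inv_lt_iff_one_lt_mul₀' (by positivity)).2 h_peak |>.trans_le hu
  have h_level : ((2 * J ^ 2 : ℕ) : ℝ) * (6 * (J : ℝ) ^ 4)⁻¹ = a / 3 := by
    rw [ha]
    push_cast
    field_simp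
    norm_num
  by_cases h_exists : ∃ v, y v < y u - a / 3
  · obtain ⟨v, hv⟩ := h_exists
    have h_card := hl.lt_card_superlevel (by positivity) h u v (k := 2 * J ^ 2) (h_level ▸ hv)
    rw [h_level, Nat.lt_iff_add_one_le] at h_card
    have h_card' := Nat.cast_le (α := ℝ) |>.2 h_card
    have h_mass := natCast_card_mul_le_one hy hy_one (c := 2 * a / 3)
      (S := Finset.univ.filter fun w => y u - a / 3 ≤ y w) fun w hw => by
        linarith [(Finset.mem_filter.1 hw).2]
    push_cast at h_card'
    nlinarith
  · push Not at h_exists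
    have h_mass := natCast_card_mul_le_one hy hy_one (c := 2 * a / 3) (S := Finset.univ)
      fun w _ => by linarith [h_exists w]
    rw [Finset.card_univ, Fintype.card_fin] at h_mass
    have hn' : 3 * (J : ℝ) ^ 2 < n := by exact_mod_cast hn
    nlinarith

lemma inv_le_dissipation (hl : IsConnecting l) {J : ℕ} (hn : 3 * J ^ 2 < n) {y : Fin n → ℝ}
    (hy : 0 ≤ y) (hy_one : ∑ u, y u = 1) (h_peak : 1 < (J : ℝ) ^ 2 * (y ⬝ᵥ y)) :
    (72 * ((l.length : ℝ) + 1) ^ 2 * (J : ℝ) ^ 8)⁻¹ ≤ dissipation l y := by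
  by_contra! h_lt
  have hJ : (J : ℝ) ≠ 0 := fun h => by norm_num [h] at h_peak
  set e : ℝ := (6 * (J : ℝ) ^ 4)⁻¹ / (l.length + 1) with he
  have he_sq : (72 * ((l.length : ℝ) + 1) ^ 2 * (J : ℝ) ^ 8)⁻¹ = e ^ 2 / 2 := by
    rw [he]
    field_simp
    norm_num
  refine h_peak.not_ge (hl.sq_mul_dotProduct_self_le_one hn hy hy_one fun m hm u => ?_)
  refine (abs_sub_partner_le_of_dissipation_le (by positivity) (he_sq ▸ h_lt.le) hm u).trans_eq ?_
  rw [he, mul_div_cancel₀]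
  positivity

lemma heat_dotProduct_self_le_one_sub (hl : IsConnecting l) {J : ℕ} (hn : 3 * J ^ 2 < n) (w : Fin n)
    {k : ℕ} (h_peak : 1 < (J : ℝ) ^ 2 * (heat l k w ⬝ᵥ heat l k w)) :
    heat l k w ⬝ᵥ heat l k w ≤ 1 - k * (72 * ((l.length : ℝ) + 1) ^ 2 * (J : ℝ) ^ 8)⁻¹ := by
  induction k with
  | zero => simp [heat_zero]
  | succ k ih =>
    have h_succ : heat l (k + 1) w = transition l *ᵥ heat l k w := by
      rw [add_comm, ← transition_pow_mulVec_heat, pow_one]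
    have h_diss := dissipation_nonneg l (heat l k w)
    rw [dissipation, ← h_succ] at h_diss
    have h_peak' : 1 < (J : ℝ) ^ 2 * (heat l k w ⬝ᵥ heat l k w) :=
      h_peak.trans_le (mul_le_mul_of_nonneg_left (sub_nonneg.1 h_diss) (sq_nonneg _))
    have h_loss := hl.inv_le_dissipation hn (heat_nonneg l k w) (sum_heat l k w) h_peak'
    rw [dissipation, ← h_succ] at h_loss
    push_cast
    linarith [ih h_peak']

lemma sq_mul_heat_dotProduct_self_le_one (hl : IsConnecting l) {J : ℕ} (hn : 3 * J ^ 2 < n) {k : ℕ}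
    (hk : 72 * ((l.length : ℝ) + 1) ^ 2 * (J : ℝ) ^ 8 < k) (w : Fin n) :
    (J : ℝ) ^ 2 * (heat l k w ⬝ᵥ heat l k w) ≤ 1 := by
  by_contra! h_peak
  have h_le := hl.heat_dotProduct_self_le_one_sub hn w h_peak
  have hJ : (J : ℝ) ≠ 0 := fun h => by norm_num [h] at h_peak
  have h_one : 1 < (k : ℝ) * (72 * ((l.length : ℝ) + 1) ^ 2 * (J : ℝ) ^ 8)⁻¹ := by
    rwa [← div_eq_mul_inv, one_lt_div (by positivity)]
  linarith [dotProduct_self_nonneg (heat l k w)]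

end IsConnecting

/-! ### Choice of the parameters -/

lemma transition_pow_mulVec_dotProduct_self_mul_exp_le (l : Schedule n) {y : Fin n → ℝ}
    (hy : ∑ u, y u = 0) {k : ℕ} {s : ℝ} (hs : s ≤ (1 - lamMax (transition l)) * k) :
    (transition (l ^ k) *ᵥ y) ⬝ᵥ (transition (l ^ k) *ᵥ y) * Real.exp s ^ 2 ≤ y ⬝ᵥ y := by
  set a := lamMax (transition l) ^ k
  have ha : 0 ≤ a := pow_nonneg (lamMax_nonneg _) k
  have ha_exp : a * Real.exp s ≤ 1 :=
    calc a * Real.exp s ≤ Real.exp (-s) * Real.exp s := by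
          gcongr
          exact (lamMax_pow_le_exp _ k).trans (Real.exp_le_exp.2 (neg_le_neg hs))
      _ = 1 := by rw [← Real.exp_add, neg_add_cancel, Real.exp_zero]
  calc _ ≤ a ^ 2 * (y ⬝ᵥ y) * Real.exp s ^ 2 := by
        gcongr
        exact transition_pow_mulVec_dotProduct_self_le l hy k
    _ = (a * Real.exp s) ^ 2 * (y ⬝ᵥ y) := by ring
    _ ≤ y ⬝ᵥ y := mul_le_of_le_one_left (dotProduct_self_nonneg y)
        (pow_le_one₀ (by positivity) ha_exp)

lemma centered_dotProduct_self_le {x : Load n} {K : ℝ} (hx : discZ x ≤ K) :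
    centered x ⬝ᵥ centered x ≤ n * K ^ 2 :=
  calc centered x ⬝ᵥ centered x ≤ ∑ _u : Fin n, K ^ 2 := Finset.sum_le_sum fun u _ => by
        have h_neg := (centered_le_discZ (-x) u).trans ((discZ_neg x).le.trans hx)
        rw [centered_neg, Pi.neg_apply] at h_neg
        rw [← sq]
        exact sq_le_sq' (by linarith) ((centered_le_discZ x u).trans hx)
    _ = n * K ^ 2 := by
        rw [Finset.sum_const, Finset.card_univ, Fintype.card_fin, nsmul_eq_mul]

lemma transition_pow_mulVec_dotProduct_centered_le_one (l : Schedule n) (hn : 0 < n) {x : Load n}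
    {K : ℝ} (hK : 0 < K) (hx : discZ x ≤ K) {k : ℕ}
    (hk : Real.log (2 * (K * n)) ≤ (1 - lamMax (transition l)) * k) {y : Fin n → ℝ}
    (hy : y ∈ tilts n) : (transition (l ^ k) *ᵥ y) ⬝ᵥ centered x ≤ 1 := by
  have hn_one : (1 : ℝ) ≤ n := Nat.one_le_cast.2 hn
  set z := transition (l ^ k) *ᵥ y
  have hz : z ⬝ᵥ z * (2 * (K * n)) ^ 2 ≤ 4 := by
    have h_exp := transition_pow_mulVec_dotProduct_self_mul_exp_le l hy.1 hk
    rw [Real.exp_log (by positivity)] at h_exp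
    exact h_exp.trans hy.2
  have h_cauchy : (z ⬝ᵥ centered x) ^ 2 ≤ z ⬝ᵥ z * (centered x ⬝ᵥ centered x) := by
    simpa only [dotProduct, ← sq] using Finset.sum_mul_sq_le_sq_mul_sq Finset.univ z (centered x)
  refine le_of_abs_le ((sq_le_one_iff_abs_le_one _).1 ?_)
  calc (z ⬝ᵥ centered x) ^ 2 ≤ z ⬝ᵥ z * (n * K ^ 2) := h_cauchy.trans
        (mul_le_mul_of_nonneg_left (centered_dotProduct_self_le hx) (dotProduct_self_nonneg z))
    _ ≤ z ⬝ᵥ z * (n * K ^ 2) * n :=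
        le_mul_of_one_le_right (mul_nonneg (dotProduct_self_nonneg z) (by positivity)) hn_one
    _ ≤ 1 := by linarith

lemma natCast_add_le_exp_two_mul {d J : ℕ} (hJ : 1 ≤ J)
    (h : 72 * ((d : ℝ) + 1) ^ 2 * (J : ℝ) ^ 8 < 2 ^ J) :
    (J : ℝ) + (2 * J * 2 ^ J + J * 2 ^ J) * d * (J - 3) ≤ Real.exp (2 * J) := by
  have hJ_one : (1 : ℝ) ≤ J := Nat.one_le_cast.2 hJ
  have h_quad : 3 * d * (J : ℝ) ^ 2 + 1 ≤ 2 ^ J :=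
    calc 3 * d * (J : ℝ) ^ 2 + 1 ≤ 3 * d * (J : ℝ) ^ 8 + (J : ℝ) ^ 8 := by
          gcongr
          · norm_num
          · exact one_le_pow₀ hJ_one
      _ = (3 * d + 1) * (J : ℝ) ^ 8 := by ring
      _ ≤ 72 * ((d : ℝ) + 1) ^ 2 * (J : ℝ) ^ 8 := by
          gcongr
          nlinarith [d.cast_nonneg (α := ℝ)]
      _ ≤ 2 ^ J := h.le
  have h_pow : (J : ℝ) ≤ 2 ^ J := by exact_mod_cast Nat.lt_two_pow_self.le
  calc (J : ℝ) + (2 * J * 2 ^ J + J * 2 ^ J) * d * (J - 3)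
        ≤ 2 ^ J + (2 * J * 2 ^ J + J * 2 ^ J) * d * J := by gcongr; linarith
    _ = (3 * d * (J : ℝ) ^ 2 + 1) * 2 ^ J := by ring
    _ ≤ 2 ^ J * 2 ^ J := by gcongr
    _ ≤ Real.exp 1 ^ J * Real.exp 1 ^ J := by gcongr <;> exact Real.exp_one_gt_two.le
    _ = Real.exp (2 * J) := by
        rw [← Real.exp_nat_mul, ← Real.exp_add]
        ring_nf

lemma isMixing_of_lamMax_lt_one {b : Schedule n} (hb : b ≠ 1) (hl : lamMax (transition b) < 1)
    {J : ℕ} (hJ : 3 ≤ J) (h_pow : 72 * ((b.length : ℝ) + 1) ^ 2 * (J : ℝ) ^ 8 < 2 ^ J)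
    (hn : 3 * J ^ 2 < n) (h_gap : 1 ≤ 2 ^ J * (1 - lamMax (transition b))) :
    IsMixing b J (2 * J * 2 ^ J) (2 ^ J) (Real.exp (2 * J)) where
  ne_one := hb
  three_le := hJ
  one_le_gap := Nat.one_le_two_pow
  spread k hk w := (isConnecting_of_lamMax_lt_one hl).sq_mul_heat_dotProduct_self_le_one hn
    (h_pow.trans_le (by exact_mod_cast hk)) w
  contract k hk y hy := transition_pow_mulVec_dotProduct_self_mul_exp_le b hy <|
    calc 2 * (J : ℝ) ≤ 2 * J * (2 ^ J * (1 - lamMax (transition b))) :=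
          le_mul_of_one_le_right (by positivity) h_gap
      _ = (1 - lamMax (transition b)) * (2 * J * 2 ^ J : ℕ) := by
          push_cast
          ring
      _ ≤ (1 - lamMax (transition b)) * k := by
          gcongr
  le_rate := by
    rw [block, length_pow]
    exact_mod_cast natCast_add_le_exp_two_mul (by lia) h_pow

lemma overload_bound_le {J N : ℕ} (hJ : 10 ≤ J) {L p K m : ℝ} (hL : 0 < L) (hN : 8 * L ≤ J * N)
    (hp : 6 * (J : ℝ) ≤ p) (hm : m ≤ Real.exp L) (hmK : m * K = Real.exp L) :
    m * Real.exp (2 + 2 * N - p * N) + Real.exp N * (2 * Real.exp (3 - J)) ^ N * (m * K) ≤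
      2 * Real.exp (-(3 * L)) := by
  have hJ' : (10 : ℝ) ≤ J := by exact_mod_cast hJ
  have hN_one : (1 : ℝ) ≤ N := by
    refine Nat.one_le_cast.2 (Nat.pos_of_ne_zero fun h => ?_)
    rw [h, Nat.cast_zero, mul_zero] at hN
    linarith
  have h_first : m * Real.exp (2 + 2 * N - p * N) ≤ Real.exp (-(3 * L)) :=
    calc m * Real.exp (2 + 2 * N - p * N) ≤ Real.exp L * Real.exp (2 + 2 * N - p * N) := by gcongr
      _ = Real.exp (L + (2 + 2 * N - p * N)) := (Real.exp_add _ _).symm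
      _ ≤ Real.exp (-(3 * L)) := Real.exp_le_exp.2 (by nlinarith)
  have h_base : 2 * Real.exp (3 - J) ≤ Real.exp (4 - J) :=
    calc 2 * Real.exp (3 - J) ≤ Real.exp 1 * Real.exp (3 - J) := by
          gcongr
          exact Real.exp_one_gt_two.le
      _ = Real.exp (4 - J) := by
          rw [← Real.exp_add]
          ring_nf
  have h_second : Real.exp N * (2 * Real.exp (3 - J)) ^ N * (m * K) ≤ Real.exp (-(3 * L)) :=
    calc Real.exp N * (2 * Real.exp (3 - J)) ^ N * (m * K)
        ≤ Real.exp N * Real.exp (4 - J) ^ N * Real.exp L := by rw [hmK]; gcongr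
      _ = Real.exp (N + N * (4 - J) + L) := by
          rw [← Real.exp_nat_mul, ← Real.exp_add, ← Real.exp_add]
      _ ≤ Real.exp (-(3 * L)) := Real.exp_le_exp.2 (by nlinarith)
  linarith

lemma evolve_pow_overload_le {b : Schedule n} (hb : b ≠ 1) (hl : lamMax (transition b) < 1)
    {J : ℕ} (hJ : 10 ≤ J) (h_pow : 72 * ((b.length : ℝ) + 1) ^ 2 * (J : ℝ) ^ 8 < 2 ^ J)
    (hn : 3 * J ^ 2 < n) (h_gap : 1 ≤ 2 ^ J * (1 - lamMax (transition b))) {K : ℝ} (hK : 2 ≤ K)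
    {x : Load n} (hx : discZ x ≤ K) {k N : ℕ}
    (hk : Real.log (2 * (K * n)) ≤ (1 - lamMax (transition b)) * k)
    (hN : 8 * Real.log (K * n) ≤ J * N) :
    evolve (b ^ (k + N * (3 * J * 2 ^ J))) overload x ≤
      2 * Real.exp (-(3 * Real.log (K * n))) := by
  have hn_pos : 0 < n := Nat.zero_lt_of_lt hn
  have hn_one : (1 : ℝ) ≤ n := Nat.one_le_cast.2 hn_pos
  have H := isMixing_of_lamMax_lt_one hb hl (by lia) h_pow hn h_gap
  have h_word : b ^ (k + N * (3 * J * 2 ^ J)) = b ^ k * block b J (2 * J * 2 ^ J) (2 ^ J) ^ N := by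
    rw [block, ← pow_mul, ← pow_add]
    ring_nf
  have h_length : 6 * J ≤ (block b J (2 * J * 2 ^ J) (2 ^ J)).length := by
    rw [block, length_pow]
    calc 6 * J = (2 * J * 2 + J * 2) * 1 := by ring
      _ ≤ (2 * J * 2 ^ J + J * 2 ^ J) * b.length := by
          gcongr
          any_goals exact Nat.le_self_pow (by lia) 2
          exact Nat.pos_of_ne_zero (mt FreeMonoid.length_eq_zero.1 hb)
  rw [h_word]
  refine (H.evolve_overload_le (fun y hy =>
    transition_pow_mulVec_dotProduct_centered_le_one b hn_pos (by linarith) hx hk hy)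
    (by linarith) (fun u => (centered_le_discZ x u).trans hx) N).trans ?_
  refine overload_bound_le hJ (Real.log_pos (by nlinarith)) hN (by exact_mod_cast h_length) ?_ ?_
  · rw [Real.exp_log (by positivity)]
    nlinarith
  · rw [Real.exp_log (by positivity), mul_comm]

lemma eventually_mul_pow_lt_two_pow (d : ℕ) :
    ∀ᶠ J : ℕ in Filter.atTop, 72 * ((d : ℝ) + 1) ^ 2 * (J : ℝ) ^ 8 < 2 ^ J := by
  have hc : 0 < 1 / (72 * ((d : ℝ) + 1) ^ 2) := by positivity
  filter_upwards [(tendsto_pow_const_div_const_pow_of_one_lt 8 one_lt_two).eventually_lt_const hc]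
    with J hJ
  rw [div_lt_div_iff₀ (by positivity) (by positivity)] at hJ
  linarith

lemma eventually_mul_log_sq_lt : ∀ᶠ n : ℕ in Filter.atTop, 108 * Real.log n ^ 2 < n := by
  have h_bound := (Real.isLittleO_pow_log_id_atTop (n := 2)).bound (by norm_num : (0 : ℝ) < 1 / 216)
  filter_upwards [tendsto_natCast_atTop_atTop.eventually h_bound, Filter.eventually_gt_atTop 0]
    with n h hn
  have hn' : (0 : ℝ) < n := Nat.cast_pos.2 hn
  rw [id, Real.norm_of_nonneg (sq_nonneg _), Real.norm_of_nonneg hn'.le] at h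
  linarith

lemma exists_two_pow_mul_mem_Icc (J₀ : ℕ) {g : ℝ} (hg : 0 < g) (hg_one : g ≤ 1) :
    ∃ J ≥ J₀, 2 ^ J * g ∈ Set.Icc 1 (2 ^ (J₀ + 1)) := by
  obtain ⟨k, hk_le, hk_lt⟩ := exists_nat_pow_near ((one_le_div hg).2 hg_one) one_lt_two
  refine ⟨J₀ + k + 1, by lia, ?_, ?_⟩
  · calc 1 ≤ 2 ^ (k + 1) * g := ((div_lt_iff₀ hg).1 hk_lt).le
      _ ≤ 2 ^ (J₀ + k + 1) * g := by
        gcongr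
        · exact one_le_two
        · lia
  · calc (2 : ℝ) ^ (J₀ + k + 1) * g = 2 ^ (J₀ + 1) * (2 ^ k * g) := by ring
      _ ≤ 2 ^ (J₀ + 1) :=
        mul_le_of_le_one_right (by positivity) ((le_div_iff₀ hg).1 hk_le)

lemma natCast_le_six_mul_log {b : Schedule n} (hl : lamMax (transition b) < 1) {J J₀ : ℕ}
    (h_gap : 2 ^ J * (1 - lamMax (transition b)) ≤ 2 ^ (J₀ + 1))
    (hn : 2 ^ (J₀ + 1) * (4 * ((b.length : ℝ) + 1) ^ 2) ≤ n) : (J : ℝ) ≤ 6 * Real.log n := by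
  have hn_pos : (0 : ℝ) < n := lt_of_lt_of_le (by positivity) hn
  set c := 4 * ((b.length : ℝ) + 1) ^ 2 * (n : ℝ) ^ 3
  have h_inv : c⁻¹ ≤ 1 - lamMax (transition b) :=
    (isConnecting_of_lamMax_lt_one hl).inv_le_one_sub_lamMax (Nat.cast_pos.1 hn_pos)
  have h_pow : (2 : ℝ) ^ J ≤ n ^ 4 :=
    calc (2 : ℝ) ^ J ≤ 2 ^ (J₀ + 1) * c := by
          rw [← div_le_iff₀ (by positivity), div_eq_mul_inv]
          exact (mul_le_mul_of_nonneg_left h_inv (by positivity)).trans h_gap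
      _ = 2 ^ (J₀ + 1) * (4 * ((b.length : ℝ) + 1) ^ 2) * n ^ 3 := by ring
      _ ≤ n * n ^ 3 := by gcongr
      _ = n ^ 4 := by ring
  have h_log := Real.log_le_log (by positivity) h_pow
  rw [Real.log_pow, Real.log_pow] at h_log
  push_cast at h_log
  nlinarith [Real.log_two_gt_d9]

lemma eventually_exists_scale (d J₀ : ℕ) : ∀ᶠ n : ℕ in Filter.atTop, ∀ b : Schedule n,
    b.length = d → lamMax (transition b) < 1 → ∃ J ≥ J₀, (J : ℝ) ≤ 6 * Real.log n ∧ 3 * J ^ 2 < n ∧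
      2 ^ J * (1 - lamMax (transition b)) ∈ Set.Icc 1 (2 ^ (J₀ + 1)) := by
  filter_upwards [eventually_mul_log_sq_lt, tendsto_natCast_atTop_atTop.eventually_ge_atTop
    ((2 : ℝ) ^ (J₀ + 1) * (4 * ((d : ℝ) + 1) ^ 2))] with n h_log hn b hb hl
  obtain ⟨J, hJ, h_gap⟩ := exists_two_pow_mul_mem_Icc J₀ (sub_pos.2 hl)
    (sub_le_self 1 (lamMax_nonneg _))
  have hJn := natCast_le_six_mul_log hl h_gap.2 (by rwa [hb])
  refine ⟨J, hJ, hJn, ?_, h_gap⟩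
  have : 3 * (J : ℝ) ^ 2 < n := by nlinarith
  exact_mod_cast this

lemma ceil_add_ceil_mul_le {J : ℕ} {L : ℝ} (hJ : 0 < J) (hL : 1 ≤ L) (hJL : (J : ℝ) ≤ 6 * L) :
    (⌈(2 : ℝ) ^ J * (2 * L)⌉₊ + ⌈8 * L / J⌉₊ * (3 * J * 2 ^ J) : ℝ) ≤ 45 * L * 2 ^ J := by
  have h_one : 1 ≤ L * 2 ^ J := one_le_mul_of_one_le_of_one_le hL (one_le_pow₀ one_le_two)
  calc (⌈(2 : ℝ) ^ J * (2 * L)⌉₊ + ⌈8 * L / J⌉₊ * (3 * J * 2 ^ J) : ℝ)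
      ≤ (2 ^ J * (2 * L) + 1) + (8 * L / J + 1) * (3 * J * 2 ^ J) := by
        gcongr <;> exact (Nat.ceil_lt_add_one (by positivity)).le
    _ = 26 * L * 2 ^ J + 1 + 3 * J * 2 ^ J := by
        field_simp
        ring
    _ ≤ 26 * L * 2 ^ J + L * 2 ^ J + 3 * (6 * L) * 2 ^ J := by gcongr
    _ = 45 * L * 2 ^ J := by ring

lemma four_mul_exp_neg_three_mul_le {L s : ℝ} (hL : 1 ≤ L) (hs : s ≤ L) :
    4 * Real.exp (-(3 * L)) ≤ Real.exp (-s) :=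
  calc 4 * Real.exp (-(3 * L)) ≤ Real.exp 1 * Real.exp 1 * Real.exp (-(3 * L)) := by
        gcongr
        nlinarith [Real.exp_one_gt_two.le]
    _ = Real.exp (2 - 3 * L) := by
        rw [← Real.exp_add, ← Real.exp_add]
        ring_nf
    _ ≤ Real.exp (-s) := Real.exp_le_exp.2 (by linarith)

lemma roundSchedule_ne_one {d : ℕ} (hd : 0 < d) (Ms : Fin d → Matching n) :
    roundSchedule Ms ≠ 1 := fun h => by
  have h_length := length_roundSchedule Ms
  rw [h, FreeMonoid.length_one] at h_length
  exact hd.ne h_length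

lemma one_sub_exp_neg_log_le_pr {d : ℕ} (hd : 0 < d) (Ms : Fin d → Matching n)
    (hl : lamMax (roundMatrix Ms) < 1) {J : ℕ} (hJ : 10 ≤ J)
    (h_pow : 72 * ((d : ℝ) + 1) ^ 2 * (J : ℝ) ^ 8 < 2 ^ J) (hn : 3 * J ^ 2 < n)
    (hJn : (J : ℝ) ≤ 6 * Real.log n) (h_gap : 1 ≤ 2 ^ J * (1 - lamMax (roundMatrix Ms)))
    {K : ℝ} (hK : 2 ≤ K) {x : Load n} (hx : discZ x ≤ K) {T : ℕ}
    (hT : 45 * Real.log (K * n) * 2 ^ J * d ≤ T) :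
    1 - Real.exp (-Real.log n) ≤ pr fun ω : Fin T → Orientation n =>
      discZ (loads (circuit hd Ms) (lift (orientDefault n) ω) x T) ≤ 12 := by
  have hn_three : (3 : ℝ) ≤ n := by
    have : 3 ≤ n := by nlinarith
    exact_mod_cast this
  set L := Real.log (K * n) with hL
  have hL_log : Real.log n ≤ L := Real.log_le_log (by linarith) (by nlinarith)
  have hL_one : 1 ≤ L := by
    have hJ' : (10 : ℝ) ≤ J := by exact_mod_cast hJ
    linarith
  have hk : Real.log (2 * (K * n)) ≤ (1 - lamMax (roundMatrix Ms)) * ⌈(2 : ℝ) ^ J * (2 * L)⌉₊ :=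
    calc Real.log (2 * (K * n)) = Real.log 2 + L := Real.log_mul two_ne_zero (by positivity)
      _ ≤ 2 * L := by linarith [Real.log_two_lt_d9]
      _ ≤ (1 - lamMax (roundMatrix Ms)) * (2 ^ J * (2 * L)) := by nlinarith
      _ ≤ _ := mul_le_mul_of_nonneg_left (Nat.le_ceil _) (sub_nonneg.2 hl.le)
  have hN : 8 * L ≤ J * ⌈8 * L / J⌉₊ := by
    rw [← div_le_iff₀' (by positivity)]
    exact Nat.le_ceil _
  have h_rounds : (⌈(2 : ℝ) ^ J * (2 * L)⌉₊ + ⌈8 * L / J⌉₊ * (3 * J * 2 ^ J)) * d ≤ T := by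
    have h_count := ceil_add_ceil_mul_le (J := J) (by lia) hL_one (by linarith)
    exact_mod_cast (mul_le_mul_of_nonneg_right h_count d.cast_nonneg).trans hT
  rw [← transition_roundSchedule] at hl h_gap hk
  rw [← length_roundSchedule Ms] at h_pow
  have h_tail : ∀ z : Load n, discZ z ≤ K → _ := fun z hz =>
    evolve_pow_overload_le (roundSchedule_ne_one hd Ms) hl hJ h_pow hn h_gap hK hz hk hN
  have h_pos := h_tail x hx
  have h_neg := h_tail (-x) ((discZ_neg x).trans_le hx)
  refine le_trans ?_ (one_sub_evolve_overload_le_pr hd Ms x h_rounds)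
  linarith [four_mul_exp_neg_three_mul_le hL_one hL_log]

end

theorem stmt18_general (d : ℕ) (hd : 0 < d) :
    ∃ C : ℝ, 0 < C ∧ ∃ N₀ : ℕ, ∀ n : ℕ, N₀ ≤ n → ∀ Ms : Fin d → Matching n,
    lamMax (roundMatrix Ms) < 1 →
    ∀ K : ℝ, 2 ≤ K → ∀ x : Fin n → ℤ, discZ x ≤ K →
    ∀ T : ℕ, ⌈C * Real.log (K * n) / (1 - lamMax (roundMatrix Ms))⌉₊ ≤ T →
    1 - Real.exp (-Real.log n) ≤
      pr (fun ω : Fin T → Fin n → Fin n → Bool =>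
        discZ (loads (circuit hd Ms) (lift (orientDefault n) ω) x T) ≤ 12) := by
  obtain ⟨J₀, hJ₀⟩ := Filter.eventually_atTop.1
    ((eventually_mul_pow_lt_two_pow d).and (Filter.eventually_ge_atTop 10))
  obtain ⟨N₀, hN₀⟩ := Filter.eventually_atTop.1 (eventually_exists_scale d J₀)
  refine ⟨45 * d * 2 ^ (J₀ + 1), by positivity, N₀, fun n hn Ms hl K hK x hx T hT => ?_⟩
  obtain ⟨J, hJ, hJn, hnJ, h_gap⟩ := hN₀ n hn (roundSchedule Ms) (length_roundSchedule Ms)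
    (by rwa [transition_roundSchedule])
  rw [transition_roundSchedule] at h_gap
  obtain ⟨h_pow, h_ten⟩ := hJ₀ J hJ
  refine one_sub_exp_neg_log_le_pr hd Ms hl h_ten h_pow hnJ hJn h_gap.1 hK hx ?_
  have h_log : 0 ≤ Real.log (K * n) :=
    Real.log_nonneg (by nlinarith [(Nat.one_le_cast (α := ℝ)).2 (Nat.zero_lt_of_lt hnJ)])
  refine ((le_div_iff₀ (sub_pos.2 hl)).2 ?_).trans (Nat.ceil_le.1 hT)
  calc 45 * Real.log (K * n) * 2 ^ J * d * (1 - lamMax (roundMatrix Ms))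
      = 45 * d * (2 ^ J * (1 - lamMax (roundMatrix Ms))) * Real.log (K * n) := by ring
    _ ≤ 45 * d * 2 ^ (J₀ + 1) * Real.log (K * n) := by
        gcongr
        exact h_gap.2

/-- Main theorem for the balancing circuit model with a constant
number `d` of matchings on a regular graph:  there are constants `c, C, γ > 0`
(depending only on `d`) such that for all sufficiently large `n`, with probability
at least `1 - e^{-(log n)^γ}` the discrepancy is at most `c` after
`⌈C log(Kn)/(1 - λ(M))⌉` rounds of the discrete process with independent uniformly
random orientations, started from any vector of discrepancy at most `K ≥ 2`. -/
theorem stmt18 (d : ℕ) (hd : 0 < d) :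
    ∃ c C γ : ℝ, 0 < c ∧ 0 < C ∧ 0 < γ ∧
    ∃ N₀ : ℕ, ∀ n : ℕ, N₀ ≤ n →
    ∀ G : SimpleGraph (Fin n), (∃ r : ℕ, ∀ v, (G.neighborSet v).ncard = r) →
    ∀ Ms : Fin d → Matching n,
    (∀ i u, (Ms i).f u ≠ u → G.Adj u ((Ms i).f u)) →
    lamMax (roundMatrix Ms) < 1 →
    ∀ K : ℝ, 2 ≤ K → ∀ x : Fin n → ℤ, discZ x ≤ K →
    ∀ T : ℕ, T = ⌈C * Real.log (K * n) / (1 - lamMax (roundMatrix Ms))⌉₊ →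
    1 - Real.exp (-(Real.log n) ^ γ) ≤
      pr (fun ω : Fin T → Fin n → Fin n → Bool =>
        discZ (loads (circuit hd Ms) (lift (orientDefault n) ω) x T) ≤ c) := by
  obtain ⟨C, hC, N₀, h⟩ := stmt18_general d hd
  exact ⟨12, C, 1, by norm_num, hC, one_pos, N₀, fun n hn _ _ Ms _ hl K hK x hx T hT => by
    simpa only [Real.rpow_one] using h n hn Ms hl K hK x hx T hT.ge⟩

end LB
end
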